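/- arXiv:1602.04599 — 2 statements merged into one kernel-verified Lean document; each statement's English description precedes it below -/
import Mathlib

section
/- Let Q be a finite group such that every nontrivial normal subgroup of Q has nontrivial intersection with the commutator subgroup [Q,Q], and suppose there is no injective group homomorphism from Q into the orthogonal group O(4). Then for every natural number n ≥ 7, there is no injective group homomorphism from the direct product Q × A_n into the orthogonal group O(n+3), where A_n is the alternating group on n letters. -/
/-!
Every nontrivial complex representation of `A_n`, `n ≥ 7`, has dimension at least `n - 1`
(`alternating_bound`), and this gives the theorem as follows. Suppose `Q × A_n` acts faithfully by
isometries on `ℝ^(n+3)`, let `F` be the space of vectors fixed by `A_n` and `W` its orthogonal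
complement. Both are invariant, and `W ≠ 0` has no nonzero `A_n`-fixed vector, so `dim W ≥ n - 1`
and `dim F ≤ 4`. An eigenspace in `ℂ ⊗ W` of `q ∈ Q`, and the image of `q - μ`, are
`A_n`-invariant; if both were nonzero, `dim W` would be at least `2 (n - 1) > n + 3`. Hence `Q` acts
on `ℂ ⊗ W` by scalars and `[Q, Q]` acts trivially on `W` (`no_fixed_part`). The kernel of `Q` on `F`
therefore meets `[Q, Q]` trivially, so it is trivial, and `Q` embeds into `O(F)`, hence into `O(4)`.

The bound `alternating_bound` is proved by induction on `n`. Consider pairs of disjoint three-cycles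
`c`, `d`.

* If `(d - 1) (c - 1)` acts as zero for all such pairs (`std_bound`), a weight vector of a Klein
  four-group in a copy of `A_4` provides vectors `u i j` permuted by `A_n` with `u i j + u j k = u i k`
  and `u ≠ 0`. The sums `e i = ∑ j, u i j` are permuted by `A_n`, are not all equal, and hence span a
  space of dimension at least `n - 1`.
* Otherwise `(c, d)` has a joint eigenvalue nontrivial in both entries, and a copy of `A_4` containing
  `d` and commuting with `c` yields one nontrivial in exactly one entry. An element of `A_7` normalising
  `⟨c, d⟩` then produces all eight nontrivial pairs of cube roots of unity (`eight_le`), so the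
  dimension is at least `8` and one may assume `n ≥ 10`. The two nontrivial eigenspaces of `c` are nontrivial representations of
  the group `A_(n-3)` on the points fixed by `c`, so the dimension is at least `2 (n - 4) ≥ n - 1`.
-/

namespace AlternatingRep

open Equiv
open Equiv.Perm

/-! ### Eigenvectors and the group `A_4` -/

theorem exists_eigenvector_mem {V : Type} [AddCommGroup V] [Module ℂ V] [FiniteDimensional ℂ V]
    (p : Submodule ℂ V) (hp : p ≠ ⊥) (f : Module.End ℂ V) (hf : ∀ x ∈ p, f x ∈ p) :
    ∃ μ : ℂ, ∃ x ∈ p, x ≠ 0 ∧ f x = μ • x := by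
  have : Nontrivial p := Submodule.nontrivial_iff_ne_bot.mpr hp
  obtain ⟨μ, hμ⟩ := Module.End.exists_eigenvalue (f.restrict hf)
  obtain ⟨x, hx⟩ := hμ.exists_hasEigenvector
  refine ⟨μ, x, x.2, by simpa using hx.2, ?_⟩
  simpa using congrArg Subtype.val hx.apply_eq_smul

/-- For `A`, `C` the images of a double transposition and a three-cycle generating `A_4`, the
involutions `A`, `C A C⁻¹`, `C⁻¹ A C` multiply pairwise to the third one. A vector on which the
first two act by `1` and `-1` is therefore negated by the third. -/
theorem tetra_apply {V : Type} [AddCommGroup V] [Module ℂ V] {A C : Module.End ℂ V}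
    (hC : C * C * C = 1) (hAB : A * (C * A * C * C) = C * C * A * C) {w : V}
    (hA : A w = w) (hB : A (C (C w)) = - C (C w)) :
    A (C w) = - C w := by
  have h1 : ∀ x, C (C (C x)) = x := fun x => by simpa using LinearMap.congr_fun hC x
  have h2 : ∀ x, A (C (A (C (C x)))) = C (C (A (C x))) :=
    fun x => by simpa using LinearMap.congr_fun hAB x
  have h3 := congrArg C (h2 w)
  rw [hB] at h3
  simp only [map_neg, h1, hA] at h3
  exact h3.symm

/-- A representation of `A_4` which is nontrivial on the Klein four-group contains a vector on which
the three involutions act by `1`, `-1`, `-1`. -/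
theorem tetra_exists {V : Type} [AddCommGroup V] [Module ℂ V] {A C : Module.End ℂ V}
    (hC : C * C * C = 1) (hA2 : A * A = 1) (hAB : A * (C * A * C * C) = C * C * A * C)
    (hBA : (C * A * C * C) * A = C * C * A * C) (hA : A ≠ 1) :
    ∃ w : V, w ≠ 0 ∧ A w = w ∧ A (C (C w)) = - C (C w) := by
  have h1 : ∀ x, C (C (C x)) = x := fun x => by simpa using LinearMap.congr_fun hC x
  have h2 : ∀ x, A (C (A (C (C x)))) = C (C (A (C x))) :=
    fun x => by simpa using LinearMap.congr_fun hAB x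
  have h4 : ∀ x, C (A (C (C (A x)))) = C (C (A (C x))) :=
    fun x => by simpa using LinearMap.congr_fun hBA x
  have h3 : ∀ x, A (A x) = x := fun x => by simpa using LinearMap.congr_fun hA2 x
  have hinj : ∀ x, C x = 0 → x = 0 := fun x hx => by rw [← h1 x, hx]; simp
  obtain ⟨y, hy⟩ : ∃ y, A y ≠ y := by
    by_contra! h; exact hA (LinearMap.ext h)
  set x := y - A y with hx
  have hx0 : x ≠ 0 := sub_ne_zero.mpr hy.symm
  have hAx : A x = - x := by simp [hx, h3]
  set B : V → V := fun z => C (A (C (C z))) with hB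
  by_cases hb : x + B x = 0
  · -- here `x` is a `(-1)`-eigenvector of both involutions
    have hBx : C (A (C (C x))) = - x := by rw [eq_neg_iff_add_eq_zero, add_comm]; exact hb
    have hD : C (C (A (C x))) = x := by rw [← h2, hBx, map_neg, hAx, neg_neg]
    refine ⟨C x, fun h => hx0 (hinj _ h), ?_, ?_⟩
    · rw [← h1 (A (C x)), hD]
    · rw [h1, hAx]
  · set z := x + B x with hz
    have hAz : A z = - z := by
      have : A (B x) = - B x := by
        simp only [hB]; rw [h2, ← h4, hAx]; simp
      rw [hz, map_add, hAx, this]; abel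
    have hBz : C (A (C (C z))) = z := by
      rw [hz]; simp only [hB, map_add, h1, h3]; abel
    refine ⟨C (C z), fun h => hb (hinj _ (hinj _ h)), ?_, ?_⟩
    · have := congrArg (fun v => C (C v)) hBz
      simpa [h1] using this
    · rw [h1]
      have : C (C (A (C z))) = - z := by rw [← h2, hBz, hAz]
      have := congrArg C this
      simpa [h1] using this

/-- The vectors `w`, `C w`, `C² w` belong to different characters of the Klein four-group, so a
combination with coefficient `1` at `w` does not vanish. -/
theorem tetra_ne_zero {V : Type} [AddCommGroup V] [Module ℂ V] {A C : Module.End ℂ V}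
    {w : V} (hw : w ≠ 0) (hA : A w = w) (h1 : A (C w) = - C w)
    (h2 : A (C (C w)) = - C (C w)) (a b : ℂ) : w + a • C w + b • C (C w) ≠ 0 := by
  intro h
  have h' := congrArg A h
  simp only [map_add, map_smul, hA, h1, h2, map_zero] at h'
  have : (2 : ℂ) • w = 0 := by
    have h3 : w + w = (w + a • C w + b • C (C w)) + (w + a • - C w + b • - C (C w)) := by
      simp only [smul_neg]; abel
    rw [two_smul, h3, h, h', add_zero]
  exact hw (by simpa using this)

/-! ### Joint eigenvalues of two disjoint three-cycles in `A_7` -/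

/-- The alternating group on seven letters. -/
abbrev A7 := alternatingGroup (Fin 7)

/-- The three-cycle `(0 1 2)`. -/
def c₁ : A7 := ⟨swap 0 1 * swap 1 2, mem_alternatingGroup.mpr (by decide)⟩

/-- The three-cycle `(3 4 5)`. -/
def c₂ : A7 := ⟨swap 3 4 * swap 4 5, mem_alternatingGroup.mpr (by decide)⟩

/-- The double transposition `(0 1)(2 3)`, generating with `c₁` a copy of `A_4`. -/
def t₁ : A7 := ⟨swap 0 1 * swap 2 3, mem_alternatingGroup.mpr (by decide)⟩

/-- The double transposition `(3 4)(5 6)`, generating with `c₂` a copy of `A_4` commuting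
with `c₁`. -/
def t₂ : A7 := ⟨swap 3 4 * swap 5 6, mem_alternatingGroup.mpr (by decide)⟩

/-- An element conjugating `c₁` to `c₂` and `c₂` to `c₁⁻¹`. -/
def s₀ : A7 := ⟨swap 0 3 * swap 1 4 * swap 4 2 * swap 2 5, mem_alternatingGroup.mpr (by decide)⟩

/-- The pair `(μ, ν)` is a weight of `σ`: there is a joint eigenvector of `c₁` and `c₂` with
eigenvalues `μ` and `ν`. -/
def HasWt {V : Type} [AddCommGroup V] [Module ℂ V] (σ : A7 →* Module.End ℂ V) (μ ν : ℂ) : Prop :=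
  ∃ x : V, x ≠ 0 ∧ σ c₁ x = μ • x ∧ σ c₂ x = ν • x

section
variable {V : Type} [AddCommGroup V] [Module ℂ V] (σ : A7 →* Module.End ℂ V)

theorem rel_apply {g h k l : A7} (e : g * h = k * l) (x : V) : σ g (σ h x) = σ k (σ l x) := by
  rw [← Module.End.mul_apply, ← map_mul, e, map_mul, Module.End.mul_apply]

/-- The element `s₀` rotates the weights. -/
theorem HasWt.rot {μ ν : ℂ} (hν : ν ≠ 0) (h : HasWt σ μ ν) : HasWt σ ν⁻¹ μ := by
  obtain ⟨x, hx, h1, h2⟩ := h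
  refine ⟨σ s₀ x, fun h0 => hx ?_, ?_, ?_⟩
  · have := congrArg (σ s₀⁻¹) h0
    rwa [← Module.End.mul_apply, ← map_mul, inv_mul_cancel, map_one, map_zero] at this
  · have h3 : σ c₁ (σ s₀ (σ c₂ x)) = σ s₀ x := by
      rw [← Module.End.mul_apply, ← Module.End.mul_apply, ← map_mul, ← map_mul,
        show c₁ * s₀ * c₂ = s₀ from by decide]
    rw [h2, map_smul, map_smul] at h3
    rw [← h3, smul_smul, inv_mul_cancel₀ hν, one_smul, h3]
  · rw [← rel_apply σ (show s₀ * c₁ = c₂ * s₀ from by decide), h1, map_smul]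

variable {ω : ℂ} (hω : ω ^ 2 + ω + 1 = 0)
include hω

theorem om3 : ω ^ 3 = 1 := by linear_combination (ω - 1) * hω

theorem om_ne : ω ≠ 0 := by rintro rfl; norm_num at hω

theorem om_inv (a : ZMod 3) : (ω ^ a.val)⁻¹ = ω ^ (-a).val := by
  have h := om3 hω
  have h0 := om_ne hω
  apply inv_eq_of_mul_eq_one_right
  rw [← pow_add]
  fin_cases a
  · exact pow_zero _
  · exact h
  · exact h

theorem om_exists {μ : ℂ} (h : μ ^ 3 = 1) : ∃ a : ZMod 3, μ = ω ^ a.val := by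
  have h3 : (μ - 1) * ((μ - ω) * (μ - ω ^ 2)) = 0 := by
    linear_combination h + (μ - 1) * (ω - 1 - μ) * hω
  rcases mul_eq_zero.mp h3 with h | h
  · exact ⟨0, by simpa [sub_eq_zero] using h⟩
  rcases mul_eq_zero.mp h with h | h
  · exact ⟨1, by simpa [sub_eq_zero, ZMod.val_one] using h⟩
  · exact ⟨2, by rw [sub_eq_zero] at h; exact h⟩

theorem HasWt.rot' {a b : ZMod 3} (h : HasWt σ (ω ^ a.val) (ω ^ b.val)) :
    HasWt σ (ω ^ (-b).val) (ω ^ a.val) := by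
  rw [← om_inv hω]; exact h.rot σ (pow_ne_zero _ (om_ne hω))

omit hω in
theorem eig_cube {c : A7} (hc : c * c * c = 1) {μ : ℂ} {x : V} (hx : x ≠ 0) (h : σ c x = μ • x) :
    μ ^ 3 = 1 := by
  have h1 : σ c (σ c (σ c x)) = x := by
    rw [← Module.End.mul_apply, ← Module.End.mul_apply, ← map_mul, ← map_mul, hc, map_one]; rfl
  simp only [h, map_smul, smul_smul] at h1
  have h2 : (μ ^ 3 - 1) • x = 0 := by
    rw [sub_smul, one_smul, sub_eq_zero, show μ ^ 3 = μ * μ * μ by ring, h1]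
  exact sub_eq_zero.mp ((smul_eq_zero.mp h2).resolve_right hx)

/-- If `t₂` acts nontrivially, some weight is nontrivial on `c₁` and trivial on `c₂`: the vector `x`
of `tetra_exists` for the group `A_4` generated by `c₂` and `t₂` can be chosen as an eigenvector
of `c₁`, and then `x`, `c₂ x`, `c₂² x` produce all eigenvalues of `c₂`. -/
theorem exists_axis [FiniteDimensional ℂ V] (ht : σ t₂ ≠ 1) :
    ∃ a : ZMod 3, a ≠ 0 ∧ HasWt σ (ω ^ a.val) 1 := by
  set C := σ c₂ with hC
  set A := σ t₂ with hA
  have hC3 : C * C * C = 1 := by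
    simp only [hC, ← map_mul, show c₂ * c₂ * c₂ = 1 from by decide, map_one]
  have hA2 : A * A = 1 := by
    simp only [hA, ← map_mul, show t₂ * t₂ = 1 from by decide, map_one]
  have hAB : A * (C * A * C * C) = C * C * A * C := by
    simp only [hA, hC, ← map_mul, show t₂ * (c₂ * t₂ * c₂ * c₂) = c₂ * c₂ * t₂ * c₂ from by decide]
  have hBA : (C * A * C * C) * A = C * C * A * C := by
    simp only [hA, hC, ← map_mul, show (c₂ * t₂ * c₂ * c₂) * t₂ = c₂ * c₂ * t₂ * c₂ from by decide]
  let p : Submodule ℂ V :=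
    LinearMap.ker (A - 1) ⊓ LinearMap.ker (A * C * C + C * C)
  have hp : ∀ x, x ∈ p ↔ A x = x ∧ A (C (C x)) = - C (C x) := by
    intro x
    simp [p, sub_eq_zero, add_eq_zero_iff_eq_neg]
  have hpb : p ≠ ⊥ := by
    obtain ⟨w, hw, h1, h2⟩ := tetra_exists hC3 hA2 hAB hBA ht
    exact fun h => hw ((Submodule.mem_bot ℂ).mp (h ▸ (hp w).mpr ⟨h1, h2⟩))
  have hcC : ∀ x, σ c₁ (C x) = C (σ c₁ x) := rel_apply σ (by decide)
  have hcA : ∀ x, σ c₁ (A x) = A (σ c₁ x) := rel_apply σ (by decide)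
  obtain ⟨μ, x, hxp, hx, hμ⟩ := exists_eigenvector_mem p hpb (σ c₁) (by
    intro x hx
    rw [hp] at hx ⊢
    rw [← hcA, hx.1, ← hcC, ← hcC, ← hcA, hx.2, map_neg]
    exact ⟨rfl, rfl⟩)
  rw [hp] at hxp
  have hm : A (C x) = - C x := tetra_apply hC3 hAB hxp.1 hxp.2
  have hC3' : C (C (C x)) = x := by simpa using LinearMap.congr_fun hC3 x
  have key : ∀ b : ℂ, b ^ 3 = 1 → HasWt σ μ (b ^ 2) := by
    intro b hb
    refine ⟨x + b • C x + b ^ 2 • C (C x), tetra_ne_zero hx hxp.1 hm hxp.2 _ _, ?_, ?_⟩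
    · simp only [map_add, map_smul, hcC, hμ, smul_add, smul_smul, mul_comm]
    · rw [← hC]
      simp only [map_add, map_smul, hC3', smul_add, smul_smul]
      rw [show b ^ 2 * b = 1 by rw [← hb]; ring, show b ^ 2 * b ^ 2 = b by
        linear_combination b * hb, one_smul]
      abel
  obtain ⟨a, rfl⟩ := om_exists hω (eig_cube σ (by decide) hx hμ)
  by_cases ha : a = 0
  · subst ha
    have h2 : HasWt σ (ω ^ (0 : ZMod 3).val) (ω ^ (2 : ZMod 3).val) := key ω (om3 hω)
    exact ⟨-2, by decide, by simpa using h2.rot' σ hω⟩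
  · exact ⟨a, ha, by simpa using key 1 (by norm_num)⟩

/-- A weight nontrivial on both `c₁` and `c₂`, found in the range of `(c₂ - 1) (c₁ - 1)`. -/
theorem exists_off [FiniteDimensional ℂ V] (h : (σ c₂ - 1) * (σ c₁ - 1) ≠ 0) :
    ∃ a b : ZMod 3, a ≠ 0 ∧ b ≠ 0 ∧ HasWt σ (ω ^ a.val) (ω ^ b.val) := by
  have hc : ∀ x, σ c₁ (σ c₂ x) = σ c₂ (σ c₁ x) := rel_apply σ (by decide)
  have hC3 : ∀ x, σ c₁ (σ c₁ (σ c₁ x)) = x := fun x => by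
    rw [← Module.End.mul_apply, ← Module.End.mul_apply, ← map_mul, ← map_mul,
      show c₁ * c₁ * c₁ = 1 from by decide, map_one]; rfl
  have hC3' : ∀ x, σ c₂ (σ c₂ (σ c₂ x)) = x := fun x => by
    rw [← Module.End.mul_apply, ← Module.End.mul_apply, ← map_mul, ← map_mul,
      show c₂ * c₂ * c₂ = 1 from by decide, map_one]; rfl
  let p : Submodule ℂ V := LinearMap.range ((σ c₂ - 1) * (σ c₁ - 1))
  have hpb : p ≠ ⊥ := by simpa [p, LinearMap.range_eq_bot] using h
  have hp1 : ∀ x ∈ p, σ c₁ x ∈ p := by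
    rintro _ ⟨y, rfl⟩
    exact ⟨σ c₁ y, by simp [hc]⟩
  have hp2 : ∀ x ∈ p, σ c₂ x ∈ p := by
    rintro _ ⟨y, rfl⟩
    exact ⟨σ c₂ y, by simp [hc]⟩
  have hq1 : ∀ x ∈ p, σ c₁ (σ c₁ x) + σ c₁ x + x = 0 := by
    rintro _ ⟨y, rfl⟩
    simp only [Module.End.mul_apply, LinearMap.sub_apply, Module.End.one_apply, map_sub, hc, hC3]
    abel
  have hq2 : ∀ x ∈ p, σ c₂ (σ c₂ x) + σ c₂ x + x = 0 := by
    rintro _ ⟨y, rfl⟩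
    simp only [Module.End.mul_apply, LinearMap.sub_apply, Module.End.one_apply, map_sub, hC3']
    abel
  obtain ⟨μ, x, hx, hx0, hμ⟩ := exists_eigenvector_mem p hpb _ hp1
  obtain ⟨ν, y, hy, hy0, hν⟩ := exists_eigenvector_mem (p ⊓ LinearMap.ker (σ c₁ - μ • 1))
    (fun h => hx0 ((Submodule.mem_bot ℂ).mp (h ▸ ⟨hx, by simp [hμ]⟩))) (σ c₂) (by
      rintro z ⟨hz, hz'⟩
      refine ⟨hp2 z hz, ?_⟩
      have hz' : σ c₁ z = μ • z := by simpa [sub_eq_zero] using hz'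
      simp [hc, hz'])
  have hμ' : σ c₁ y = μ • y := by simpa [sub_eq_zero] using hy.2
  have q1 := hq1 y hy.1
  have q2 := hq2 y hy.1
  obtain ⟨a, rfl⟩ := om_exists hω (eig_cube σ (by decide) hy0 hμ')
  obtain ⟨b, rfl⟩ := om_exists hω (eig_cube σ (by decide) hy0 hν)
  have three : y + y + y ≠ 0 := by
    have : y + y + y = (3 : ℂ) • y := by module
    rw [this]; simpa using hy0
  refine ⟨a, b, ?_, ?_, y, hy0, hμ', hν⟩
  · rintro rfl
    simp only [ZMod.val_zero, pow_zero, one_smul] at hμ'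
    rw [hμ', hμ'] at q1
    exact three q1
  · rintro rfl
    simp only [ZMod.val_zero, pow_zero, one_smul] at hν
    rw [hν, hν] at q2
    exact three q2

/-- The rotation by `s₀` is transitive on the weights nontrivial on both `c₁` and `c₂`. -/
theorem off_all [FiniteDimensional ℂ V] (h : (σ c₂ - 1) * (σ c₁ - 1) ≠ 0) (a b : ZMod 3)
    (ha : a ≠ 0) (hb : b ≠ 0) : HasWt σ (ω ^ a.val) (ω ^ b.val) := by
  obtain ⟨a', b', ha', hb', h0⟩ := exists_off σ hω h
  have h1 := h0.rot' σ hω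
  have h2 := h1.rot' σ hω
  have h3 := h2.rot' σ hω
  have : (a = a' ∧ b = b') ∨ (a = -b' ∧ b = a') ∨ (a = -a' ∧ b = -b') ∨ (a = - -b' ∧ b = -a') := by
    clear h0 h1 h2 h3 h
    revert a b a' b'; decide
  rcases this with ⟨rfl, rfl⟩ | ⟨rfl, rfl⟩ | ⟨rfl, rfl⟩ | ⟨rfl, rfl⟩ <;> assumption

/-- The rotation by `s₀` is transitive on the weights trivial on exactly one of `c₁`, `c₂`. -/
theorem axis_all [FiniteDimensional ℂ V] (h : σ t₂ ≠ 1) (a b : ZMod 3)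
    (hab : (a ≠ 0 ∧ b = 0) ∨ (a = 0 ∧ b ≠ 0)) : HasWt σ (ω ^ a.val) (ω ^ b.val) := by
  obtain ⟨a', ha', h0⟩ := exists_axis σ hω h
  rw [← pow_zero ω, ← ZMod.val_zero (n := 3)] at h0
  have h1 := h0.rot' σ hω
  have h2 := h1.rot' σ hω
  have h3 := h2.rot' σ hω
  have : (a = a' ∧ b = 0) ∨ (a = -0 ∧ b = a') ∨ (a = -a' ∧ b = -0) ∨ (a = - -0 ∧ b = -a') := by
    clear h0 h1 h2 h3 h
    revert a b a'; decide
  rcases this with ⟨rfl, rfl⟩ | ⟨rfl, rfl⟩ | ⟨rfl, rfl⟩ | ⟨rfl, rfl⟩ <;> assumption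

/-- Distinct weights give distinct eigenvalues of `c₁ + 5 c₂`, because the differences of two
distinct cube roots of unity all have the same absolute value. -/
theorem om_inj : Function.Injective fun p : ZMod 3 × ZMod 3 => ω ^ p.1.val + 5 * ω ^ p.2.val := by
  have h3 : ∀ a : ZMod 3, (ω ^ a.val) ^ 3 = 1 := fun a => by
    rw [← pow_mul, mul_comm, pow_mul, om3 hω, one_pow]
  have hinj : ∀ a b : ZMod 3, ω ^ a.val = ω ^ b.val → a = b := by
    have h1 : ω ≠ 1 := by rintro rfl; norm_num at hω
    have hp : IsPrimitiveRoot ω 3 := by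
      refine IsPrimitiveRoot.iff_orderOf.mpr (orderOf_eq_prime (om3 hω) h1)
    intro a b h
    exact ZMod.val_injective 3 (hp.pow_inj (ZMod.val_lt a) (ZMod.val_lt b) h)
  have hd : ∀ x y : ℂ, x ^ 3 = 1 → y ^ 3 = 1 → x ≠ y → (x - y) ^ 6 = -27 := by
    intro x y hx hy hxy
    have h1 : x ^ 2 + x * y + y ^ 2 = 0 := by
      apply mul_left_cancel₀ (sub_ne_zero.mpr hxy); linear_combination hx - hy
    have h2 : (x - y) ^ 2 = -3 * (x * y) := by linear_combination h1
    calc (x - y) ^ 6 = ((x - y) ^ 2) ^ 3 := by ring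
      _ = -27 * (x ^ 3 * y ^ 3) := by rw [h2]; ring
      _ = -27 := by rw [hx, hy]; norm_num
  rintro ⟨a, b⟩ ⟨a', b'⟩ h
  simp only at h
  have hb : b = b' := by
    by_contra hb
    have e1 := hd _ _ (h3 b') (h3 b) (fun e => hb (hinj _ _ e).symm)
    have e : ω ^ a.val - ω ^ a'.val = 5 * (ω ^ b'.val - ω ^ b.val) := by linear_combination h
    by_cases ha : ω ^ a.val = ω ^ a'.val
    · rw [ha, sub_self] at e
      have : ω ^ b'.val - ω ^ b.val = 0 := by linear_combination - e / 5
      rw [this] at e1; norm_num at e1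
    · have e2 := hd _ _ (h3 a) (h3 a') ha
      rw [e, mul_pow, e1] at e2; norm_num at e2
  subst hb
  have ha : a = a' := hinj _ _ (by linear_combination h)
  rw [ha]

theorem eight_le [FiniteDimensional ℂ V] (ht : σ t₂ ≠ 1) (h : (σ c₂ - 1) * (σ c₁ - 1) ≠ 0) :
    8 ≤ Module.finrank ℂ V := by
  have hall : ∀ p : {p : ZMod 3 × ZMod 3 // p ≠ 0},
      HasWt σ (ω ^ p.1.1.val) (ω ^ p.1.2.val) := by
    rintro ⟨⟨a, b⟩, hp⟩
    by_cases ha : a = 0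
    · exact axis_all σ hω ht a b (Or.inr ⟨ha, fun hb => hp (by simp [ha, hb])⟩)
    · by_cases hb : b = 0
      · exact axis_all σ hω ht a b (Or.inl ⟨ha, hb⟩)
      · exact off_all σ hω h a b ha hb
  choose x hx h1 h2 using hall
  have hli := Module.End.eigenvectors_linearIndependent' (σ c₁ + (5 : ℂ) • σ c₂)
    (fun p : {p : ZMod 3 × ZMod 3 // p ≠ 0} => ω ^ p.1.1.val + 5 * ω ^ p.1.2.val)
    (fun p q e => Subtype.ext (om_inj hω e)) x (fun p => by
      refine ⟨?_, hx p⟩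
      rw [Module.End.mem_eigenspace_iff, LinearMap.add_apply, LinearMap.smul_apply, h1, h2,
        smul_smul, add_smul])
  have := hli.fintype_card_le_finrank
  exact le_trans (by decide) this
end

/-! ### Copies of `A_7` in the alternating group of a larger set -/

section
variable {α : Type} [Fintype α] [DecidableEq α]

/-- The homomorphism from `A_7` to the alternating group of `α` induced by an embedding of seven
points; the other points are fixed. -/
def altMap (f : Fin 7 ↪ α) : A7 →* alternatingGroup α where
  toFun g := ⟨(g : Perm (Fin 7)).viaFintypeEmbedding f, by
    rw [mem_alternatingGroup, viaFintypeEmbedding_sign]; exact mem_alternatingGroup.mp g.2⟩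
  map_one' := Subtype.ext (extendDomain_one _)
  map_mul' g h := Subtype.ext (extendDomain_mul _ _ _).symm

theorem altMap_image (f : Fin 7 ↪ α) (g : A7) (i : Fin 7) :
    (altMap f g : Perm α) (f i) = f ((g : Perm (Fin 7)) i) :=
  viaFintypeEmbedding_apply_image _ _ _

theorem altMap_fix (f : Fin 7 ↪ α) (g : A7) {x : α}
    (h : ∀ i, (g : Perm (Fin 7)) i ≠ i → x ≠ f i) : (altMap f g : Perm α) x = x := by
  by_cases hx : x ∈ Set.range f
  · obtain ⟨i, rfl⟩ := hx
    rw [altMap_image]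
    by_contra h'
    exact h i (fun e => h' (by rw [e])) rfl
  · exact viaFintypeEmbedding_apply_notMem_range _ _ hx

theorem altMap_c₂ (f : Fin 7 ↪ α) :
    (altMap f c₂ : Perm α) = swap (f 3) (f 4) * swap (f 4) (f 5) := by
  have h : ∀ i j, f i = f j ↔ i = j := fun i j => f.injective.eq_iff
  ext x
  by_cases hx : x = f 3 ∨ x = f 4 ∨ x = f 5
  · rcases hx with rfl | rfl | rfl <;> rw [altMap_image] <;>
      simp [c₂, swap_apply_def, h]
  · push Not at hx
    rw [altMap_fix, mul_apply, swap_apply_of_ne_of_ne hx.2.1 hx.2.2,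
      swap_apply_of_ne_of_ne hx.1 hx.2.1]
    intro i hi
    have : i = 3 ∨ i = 4 ∨ i = 5 := by revert i; decide
    rcases this with rfl | rfl | rfl
    exacts [hx.1, hx.2.1, hx.2.2]

theorem exists_emb7 (hα : 7 ≤ Fintype.card α) (x : Fin 6 → α) (hx : Function.Injective x) :
    ∃ f : Fin 7 ↪ α, ∀ i : Fin 6, f i.castSucc = x i := by
  obtain ⟨z, hz⟩ : ∃ z, z ∉ Finset.univ.image x := by
    by_contra! h
    have : (Finset.univ : Finset α) ⊆ Finset.univ.image x := fun z _ => h z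
    have := (Finset.card_le_card this).trans Finset.card_image_le
    simp at this
    omega
  refine ⟨⟨Fin.snoc (α := fun _ => α) x z, ?_⟩, fun i => Fin.snoc_castSucc (α := fun _ => α) z x i⟩
  rw [Fin.snoc_injective_iff]
  exact ⟨hx, by simpa using hz⟩

/-- Three-fold transitivity of the alternating group. -/
theorem exists_alt (hα : 5 ≤ Fintype.card α) {a b c a' b' c' : α} (ab : a ≠ b) (ac : a ≠ c)
    (bc : b ≠ c) (ab' : a' ≠ b') (ac' : a' ≠ c') (bc' : b' ≠ c') :
    ∃ g : alternatingGroup α, (g : Perm α) a = a' ∧ (g : Perm α) b = b' ∧ (g : Perm α) c = c' := by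
  have h := alternatingGroup.isMultiplyPretransitive α
  have h3 : MulAction.IsMultiplyPretransitive (alternatingGroup α) α 3 :=
    MulAction.isMultiplyPretransitive_of_le (n := Nat.card α - 2)
      (by rw [Nat.card_eq_fintype_card]; omega) (Nat.sub_le _ _)
  rw [MulAction.isMultiplyPretransitive_iff] at h3
  have inj : ∀ {a b c : α}, a ≠ b → a ≠ c → b ≠ c → Function.Injective ![a, b, c] := by
    intro a b c h1 h2 h3 i j
    fin_cases i <;> fin_cases j <;> simp [h1, h2, h3, h1.symm, h2.symm, h3.symm]
  obtain ⟨g, hg⟩ := h3 ⟨_, inj ab ac bc⟩ ⟨_, inj ab' ac' bc'⟩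
  have hg' : ∀ i, (g : Perm α) (![a, b, c] i) = ![a', b', c'] i := fun i => by
    simpa using! DFunLike.congr_fun hg i
  exact ⟨g, hg' 0, hg' 1, hg' 2⟩

theorem exists_ne_of_card (s : Finset α) (h : s.card < Fintype.card α) : ∃ z, z ∉ s := by
  by_contra! h'
  rw [Finset.eq_univ_iff_forall.mpr h', Finset.card_univ] at h
  exact lt_irrefl _ h

variable {V : Type} [AddCommGroup V] [Module ℂ V] [FiniteDimensional ℂ V]
  (ρ : alternatingGroup α →* Module.End ℂ V)

omit [FiniteDimensional ℂ V] in
/-- A nontrivial representation of a simple group is faithful. -/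
theorem ne_one_of_ne_one (hα : 5 ≤ Fintype.card α) (hρ : ρ ≠ 1) {g : alternatingGroup α}
    (hg : g ≠ 1) : ρ g ≠ 1 := by
  have := alternatingGroup.isSimpleGroup (α := α) (by rwa [Nat.card_eq_fintype_card])
  rcases (MonoidHom.normal_ker ρ).eq_bot_or_eq_top with h | h
  · intro h1
    exact hg ((Subgroup.mem_bot).mp (h ▸ (MonoidHom.mem_ker.mpr h1)))
  · exact absurd (MonoidHom.ext fun g => MonoidHom.mem_ker.mp (h ▸ Subgroup.mem_top g)) hρ

/-- Vectors permuted by the alternating group like the points of `α`, and not all equal, span a space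
of dimension at least `card α - 1`: a linear relation among them has constant coefficients, since
otherwise combining its translates yields a nonzero multiple of some `e i - e q`. -/
theorem card_le_of_equivariant (hα : 5 ≤ Fintype.card α) (e : α → V)
    (he : ∀ (g : alternatingGroup α) (i : α), ρ g (e i) = e ((g : Perm α) i))
    {i₀ j₀ : α} (hne : e i₀ ≠ e j₀) : Fintype.card α ≤ Module.finrank ℂ V + 1 := by
  have hij : i₀ ≠ j₀ := fun h => hne (by rw [h])
  have hinj : ∀ i j, i ≠ j → e i ≠ e j := by
    intro i j h h'
    obtain ⟨k, hk⟩ := exists_ne_of_card {i, j} ((Finset.card_le_two).trans_lt (by omega))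
    obtain ⟨k₀, hk₀⟩ := exists_ne_of_card {i₀, j₀} ((Finset.card_le_two).trans_lt (by omega))
    simp only [Finset.mem_insert, Finset.mem_singleton, not_or] at hk hk₀
    obtain ⟨g, h1, h2, -⟩ := exists_alt hα h (Ne.symm hk.1) (Ne.symm hk.2) hij (Ne.symm hk₀.1)
      (Ne.symm hk₀.2)
    apply hne
    rw [← h1, ← h2, ← he, ← he, h']
  let T : (α → ℂ) →ₗ[ℂ] V := Fintype.linearCombination ℂ e
  have hT : ∀ b, T b = ∑ i, b i • e i := fun b => Fintype.linearCombination_apply ℂ e b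
  have hTg : ∀ (b : α → ℂ) (g : alternatingGroup α), T b = 0 → T (b ∘ (g : Perm α)) = 0 := by
    intro b g hb
    have h1 : ρ g (T (b ∘ (g : Perm α))) = T b := by
      rw [hT, hT, map_sum, ← Equiv.sum_comp (g : Perm α) (fun i => b i • e i)]
      exact Finset.sum_congr rfl fun i _ => by rw [map_smul, he]; rfl
    have h2 := congrArg (ρ g⁻¹) (h1.trans hb)
    rwa [← Module.End.mul_apply, ← map_mul, inv_mul_cancel, map_one, map_zero] at h2
  have hconst : ∀ b, T b = 0 → ∀ i j, b i = b j := by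
    intro b hb i j
    by_contra hbij
    have hij : i ≠ j := fun h => hbij (by rw [h])
    obtain ⟨k, hk⟩ := exists_ne_of_card {i, j} ((Finset.card_le_two).trans_lt (by omega))
    obtain ⟨p, hp⟩ := exists_ne_of_card {i, j, k} ((Finset.card_le_three).trans_lt (by omega))
    obtain ⟨q, hq⟩ := exists_ne_of_card {i, j, k, p} ((Finset.card_le_four).trans_lt (by omega))
    simp only [Finset.mem_insert, Finset.mem_singleton, not_or] at hk hp hq
    have m1 : swap i j * swap j k ∈ alternatingGroup α := by
      rw [mem_alternatingGroup, Perm.sign_mul, sign_swap hij, sign_swap (Ne.symm hk.2)]; rfl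
    have m2 : swap i p * swap p q ∈ alternatingGroup α := by
      rw [mem_alternatingGroup, Perm.sign_mul, sign_swap (Ne.symm hp.1), sign_swap (Ne.symm hq.2.2.2)]
      rfl
    set d : α → ℂ := b - b ∘ (swap i j * swap j k) with hd
    have hTd : T d = 0 := by
      rw [hd, map_sub, hb, hTg b ⟨_, m1⟩ hb, sub_zero]
    set d' : α → ℂ := d - d ∘ (swap i p * swap p q) with hd'
    have hTd' : T d' = 0 := by
      rw [hd', map_sub, hTd, hTg d ⟨_, m2⟩ hTd, sub_zero]
    have hd0 : ∀ x, x ≠ i → x ≠ j → x ≠ k → d x = 0 := by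
      intro x h1 h2 h3
      simp [hd, swap_apply_of_ne_of_ne h2 h3, swap_apply_of_ne_of_ne h1 h2]
    have hdi : d i = b i - b j := by
      simp [hd, swap_apply_of_ne_of_ne hij (Ne.symm hk.1)]
    have h'' : d' = d i • (Pi.single i 1 - Pi.single q 1) := by
      funext x
      have hdp := hd0 p hp.1 hp.2.1 hp.2.2
      have hdq := hd0 q hq.1 hq.2.1 hq.2.2.1
      by_cases hxi : x = i
      · subst hxi
        simp [hd', swap_apply_of_ne_of_ne (Ne.symm hp.1) (Ne.symm hq.1), hdp, Ne.symm hq.1]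
      by_cases hxq : x = q
      · subst hxq
        simp [hd', hdq, hxi]
      by_cases hxp : x = p
      · subst hxp
        simp [hd', hdp, hdq, hxi, hxq, swap_apply_of_ne_of_ne hq.1 hq.2.2.2]
      · simp [hd', hxi, hxq, swap_apply_of_ne_of_ne hxp hxq, swap_apply_of_ne_of_ne hxi hxp]
    rw [h'', map_smul, map_sub, hT, hT] at hTd'
    have hTd' : d i • (e i - e q) = 0 := by simpa [Pi.single_apply] using hTd'
    rcases smul_eq_zero.mp hTd' with h | h
    · rw [hdi] at h; exact hbij (sub_eq_zero.mp h)
    · exact hinj i q (Ne.symm hq.1) (sub_eq_zero.mp h)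
  have hker : Module.finrank ℂ (LinearMap.ker T) ≤ 1 := by
    have hle : LinearMap.ker T ≤ Submodule.span ℂ {(1 : α → ℂ)} := by
      intro b hb
      refine Submodule.mem_span_singleton.mpr ⟨b i₀, funext fun i => ?_⟩
      simpa using hconst b hb i₀ i
    exact (Submodule.finrank_mono hle).trans (by simpa using finrank_span_le_card ({1} : Set (α → ℂ)))
  have := LinearMap.finrank_range_add_finrank_ker T
  rw [Module.finrank_fintype_fun_eq_card] at this
  have h2 := Submodule.finrank_le (LinearMap.range T)
  omega

/-! ### Representations killed by `(d - 1) (c - 1)` -/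

/-- The dimension bound when `(d - 1) (c - 1)` acts as zero for disjoint three-cycles `c`, `d`, as in
the standard representation. -/
theorem std_bound (hα : 7 ≤ Fintype.card α) (hρ : ρ ≠ 1)
    (hcomm : ∀ f : Fin 7 ↪ α, (ρ (altMap f c₂) - 1) * (ρ (altMap f c₁) - 1) = 0) :
    Fintype.card α ≤ Module.finrank ℂ V + 1 := by
  obtain ⟨f⟩ : Nonempty (Fin 7 ↪ α) :=
    Function.Embedding.nonempty_of_card_le (by simpa using hα)
  have fne : ∀ {i j : Fin 7}, i ≠ j → f i ≠ f j := fun h e => h (f.injective e)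
  have hmul : ∀ (g h : alternatingGroup α) (x : V), ρ (g * h) x = ρ g (ρ h x) := fun g h x => by
    rw [map_mul, Module.End.mul_apply]
  set c := altMap f c₁ with hc
  set t := altMap f t₁ with ht
  have ht1 : ρ t ≠ 1 := by
    apply ne_one_of_ne_one ρ (by omega) hρ
    intro h
    have h1 := altMap_image f t₁ 0
    rw [← ht, h] at h1
    exact fne (show (0 : Fin 7) ≠ (t₁ : Perm (Fin 7)) 0 by decide) h1
  have hC3 : ρ c * ρ c * ρ c = 1 := by
    simp only [hc, ← map_mul, show c₁ * c₁ * c₁ = 1 from by decide, map_one]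
  have hA2 : ρ t * ρ t = 1 := by
    simp only [ht, ← map_mul, show t₁ * t₁ = 1 from by decide, map_one]
  have hAB : ρ t * (ρ c * ρ t * ρ c * ρ c) = ρ c * ρ c * ρ t * ρ c := by
    simp only [hc, ht, ← map_mul,
      show t₁ * (c₁ * t₁ * c₁ * c₁) = c₁ * c₁ * t₁ * c₁ from by decide]
  have hBA : (ρ c * ρ t * ρ c * ρ c) * ρ t = ρ c * ρ c * ρ t * ρ c := by
    simp only [hc, ht, ← map_mul,
      show (c₁ * t₁ * c₁ * c₁) * t₁ = c₁ * c₁ * t₁ * c₁ from by decide]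
  obtain ⟨w, hw, hw1, hw2⟩ := tetra_exists hC3 hA2 hAB hBA ht1
  have hw3 := tetra_apply hC3 hAB hw1 hw2
  have hC : ∀ x, ρ c (ρ c (ρ c x)) = x := fun x => by simpa using LinearMap.congr_fun hC3 x
  -- in the standard representation `v` is proportional to the difference of the basis vectors
  -- at `f 0` and `f 1`
  obtain ⟨v, hv⟩ : ∃ v, v = ρ c (ρ c w) - ρ c w := ⟨_, rfl⟩
  have hv0 : v ≠ 0 := by
    intro h
    have h1 : ρ c (ρ c v) = 0 := by rw [h]; simp
    rw [hv, map_sub, map_sub, hC, hC] at h1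
    refine tetra_ne_zero hw hw1 hw3 hw2 (-1) 0 ?_
    rw [← neg_eq_zero, ← h1]
    module
  have htv : ρ t v = - v := by rw [hv, map_sub, hw2, hw3]; abel
  have hcv : v + ρ c v + ρ c (ρ c v) = 0 := by
    rw [hv]; simp only [map_sub, hC]; abel
  -- three-cycles fixing `f 0`, `f 1`, `f 2` fix `v`, since `v` lies in the range of `ρ c - 1`
  have fix1 : ∀ d : alternatingGroup α, IsThreeCycle (d : Perm α) → (d : Perm α) (f 0) = f 0 →
      (d : Perm α) (f 1) = f 1 → (d : Perm α) (f 2) = f 2 → ρ d v = v := by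
    intro d hd h0 h1 h2
    obtain ⟨a, ha⟩ : (d : Perm α).support.Nonempty := by
      rw [← Finset.card_pos, hd.card_support]; norm_num
    have e := hd.eq_swap_mul_swap_iff_mem_support.mpr ha
    have nd := hd.nodup_iff_mem_support.mpr ha
    set b := (d : Perm α) a with hb
    set b' := (d : Perm α) b with hb'
    have fixne : ∀ x, (d : Perm α) x = x → x ≠ a ∧ x ≠ b ∧ x ≠ b' := by
      intro x hx
      have ha' : (d : Perm α) a ≠ a := mem_support.mp ha
      have i1 : x ≠ a := fun e => ha' (e ▸ hx)
      have i2 : x ≠ b := fun e => i1 ((d : Perm α).injective (by rw [hx, ← hb, e]))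
      have i3 : x ≠ b' := fun e => i2 ((d : Perm α).injective (by rw [hx, ← hb', e]))
      exact ⟨i1, i2, i3⟩
    have inj : Function.Injective ![f 0, f 1, f 2, a, b, b'] := by
      rw [← List.nodup_ofFn]
      have g0 := fixne _ h0
      have g1 := fixne _ h1
      have g2 := fixne _ h2
      simp only [List.nodup_cons, List.mem_cons, List.not_mem_nil, or_false, not_or,
        List.nodup_nil, and_true, not_false_eq_true] at nd
      simp [List.ofFn_succ, g0.1, g0.2, g1.1, g1.2, g2.1, g2.2, nd.1.1, nd.1.2, nd.2]
    obtain ⟨f', hf'⟩ := exists_emb7 hα _ inj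
    have d2 : altMap f' c₂ = d := by
      apply Subtype.ext
      rw [altMap_c₂, e]
      congr 2
      exacts [hf' 3, hf' 4, hf' 4, hf' 5]
    have d1 : altMap f' c₁ = c := by
      apply Subtype.ext
      ext x
      by_cases hx : x = f 0 ∨ x = f 1 ∨ x = f 2
      · have e0 : f' 0 = f 0 := hf' 0
        have e1 : f' 1 = f 1 := hf' 1
        have e2 : f' 2 = f 2 := hf' 2
        rcases hx with rfl | rfl | rfl
        · rw [hc, altMap_image, ← e0, altMap_image]; exact e1
        · rw [hc, altMap_image, ← e1, altMap_image]; exact e2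
        · rw [hc, altMap_image, ← e2, altMap_image]; exact e0
      · push Not at hx
        have k : ∀ i, (c₁ : Perm (Fin 7)) i ≠ i → i = 0 ∨ i = 1 ∨ i = 2 := by decide
        rw [hc, altMap_fix f, altMap_fix f']
        · intro i hi
          rcases k i hi with rfl | rfl | rfl
          exacts [by rw [show f' 0 = f 0 from hf' 0]; exact hx.1,
            by rw [show f' 1 = f 1 from hf' 1]; exact hx.2.1,
            by rw [show f' 2 = f 2 from hf' 2]; exact hx.2.2]
        · intro i hi
          rcases k i hi with rfl | rfl | rfl
          exacts [hx.1, hx.2.1, hx.2.2]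
    have h3 := LinearMap.congr_fun (hcomm f') (ρ c w)
    rw [d1, d2] at h3
    have h4 : ρ d v - v = 0 := by
      rw [hv]; simpa using h3
    exact sub_eq_zero.mp h4
  have conj3 : ∀ d k : alternatingGroup α, IsThreeCycle (d : Perm α) →
      IsThreeCycle ((k⁻¹ * d * k : alternatingGroup α) : Perm α) := by
    intro d k hd
    have := (cycleType_conj (σ := (d : Perm α)) (τ := ((k⁻¹ : alternatingGroup α) : Perm α)))
    rw [IsThreeCycle, ← hd.cycleType, ← this]
    simp
  have tv : ∀ i, (t : Perm α) (f i) = f ((t₁ : Perm (Fin 7)) i) := altMap_image f t₁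
  have tinv : t⁻¹ = t := by
    rw [ht, ← map_inv, show t₁⁻¹ = t₁ from by decide]
  -- `t` negates `v` and exchanges `f 2` with `f 3`
  have fix2 : ∀ d : alternatingGroup α, IsThreeCycle (d : Perm α) → (d : Perm α) (f 0) = f 0 →
      (d : Perm α) (f 1) = f 1 → (d : Perm α) (f 3) = f 3 → ρ d v = v := by
    intro d hd h0 h1 h3
    have t0 : (t : Perm α) (f 0) = f 1 := tv 0
    have t1 : (t : Perm α) (f 1) = f 0 := tv 1
    have t2 : (t : Perm α) (f 2) = f 3 := tv 2
    have t3 : (t : Perm α) (f 3) = f 2 := tv 3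
    have h := fix1 (t⁻¹ * d * t) (conj3 d t hd)
      (by rw [tinv]; simp [t0, t1, h1]) (by rw [tinv]; simp [t0, t1, h0])
      (by rw [tinv]; simp [t2, t3, h3])
    rw [hmul, hmul, htv, tinv, map_neg, map_neg] at h
    have h' := congrArg (ρ t) h
    rw [map_neg, htv, ← hmul, show t * t = 1 by
      rw [ht, ← map_mul, show t₁ * t₁ = 1 from by decide, map_one]] at h'
    simpa using h'
  have fix3 : ∀ d : alternatingGroup α, IsThreeCycle (d : Perm α) → (d : Perm α) (f 0) = f 0 →
      (d : Perm α) (f 1) = f 1 → ρ d v = v := by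
    intro d hd h0 h1
    by_cases hd3 : (d : Perm α) (f 3) = f 3
    · exact fix2 d hd h0 h1 hd3
    by_cases hd2 : (d : Perm α) (f 2) = f 2
    · exact fix1 d hd h0 h1 hd2
    -- conjugating by a three-cycle `k` which sends `f 3` to a fixed point `z` of `d`
    obtain ⟨z, hz⟩ := exists_ne_of_card ({f 0, f 1} ∪ (d : Perm α).support) (by
      refine (Finset.card_union_le _ _).trans_lt ?_
      have := Finset.card_le_two (a := f 0) (b := f 1)
      rw [hd.card_support]; omega)
    simp only [Finset.mem_union, Finset.mem_insert, Finset.mem_singleton, not_or,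
      mem_support, not_not] at hz
    have hz2 : z ≠ f 2 := fun e => hd2 (e ▸ hz.2)
    have hz3 : z ≠ f 3 := fun e => hd3 (e ▸ hz.2)
    obtain ⟨y, hy⟩ := exists_ne_of_card ({z} ∪ {f 0, f 1, f 2, f 3}) (by
      refine (Finset.card_union_le _ _).trans_lt ?_
      have := Finset.card_le_four (a := f 0) (b := f 1) (c := f 2) (d := f 3)
      rw [Finset.card_singleton]; omega)
    simp only [Finset.mem_union, Finset.mem_insert, Finset.mem_singleton, not_or] at hy
    obtain ⟨hyz, hy0, hy1, hy2, hy3⟩ := hy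
    have hk3 : IsThreeCycle (swap (f 3) z * swap (f 3) y) :=
      isThreeCycle_swap_mul_swap_same hz3.symm (Ne.symm hy3) (Ne.symm hyz)
    let k : alternatingGroup α := ⟨_, hk3.inv.mem_alternatingGroup⟩
    have kinv : ((k⁻¹ : alternatingGroup α) : Perm α) = swap (f 3) z * swap (f 3) y := by
      simp [k]
    have kfix : ∀ x, x ≠ f 3 → x ≠ z → x ≠ y → (k : Perm α) x = x := by
      intro x h1 h2 h3
      have : ((k⁻¹ : alternatingGroup α) : Perm α) x = x := by
        rw [kinv, mul_apply, swap_apply_of_ne_of_ne h1 h3, swap_apply_of_ne_of_ne h1 h2]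
      rw [Subgroup.coe_inv, inv_eq_iff_eq] at this
      exact this.symm
    have k0 := kfix (f 0) (fne (by decide)) (Ne.symm hz.1.1) (Ne.symm hy0)
    have k1 := kfix (f 1) (fne (by decide)) (Ne.symm hz.1.2) (Ne.symm hy1)
    have k2 := kfix (f 2) (fne (by decide)) (Ne.symm hz2) (Ne.symm hy2)
    have kz : (k : Perm α) (f 3) = z := by
      have : ((k⁻¹ : alternatingGroup α) : Perm α) z = f 3 := by
        rw [kinv, mul_apply, swap_apply_of_ne_of_ne hz3 (Ne.symm hyz), swap_apply_right]
      rw [Subgroup.coe_inv, inv_eq_iff_eq] at this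
      exact this.symm
    have kinvfix : ∀ x y, (k : Perm α) x = y →
        ((k⁻¹ * d * k : alternatingGroup α) : Perm α) x = ((k : Perm α)⁻¹) ((d : Perm α) y) := by
      rintro x _ rfl; rfl
    have hkv : ρ k v = v := fix1 k hk3.inv k0 k1 k2
    have h := fix2 (k⁻¹ * d * k) (conj3 d k hd)
      (by rw [kinvfix _ _ k0, h0, inv_eq_iff_eq, k0])
      (by rw [kinvfix _ _ k1, h1, inv_eq_iff_eq, k1])
      (by rw [kinvfix _ _ kz, hz.2, inv_eq_iff_eq, kz])
    rw [hmul, hkv, hmul] at h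
    have hfin := congrArg (ρ k) h
    rwa [← hmul, mul_inv_cancel, map_one, hkv] at hfin
  -- the even permutations fixing `f 0` and `f 1` are generated by three-cycles
  have fix4 : ∀ g : alternatingGroup α, (g : Perm α) (f 0) = f 0 →
      (g : Perm α) (f 1) = f 1 → ρ g v = v := by
    intro g h0 h1
    let s : Finset α := Finset.univ \ {f 0, f 1}
    obtain ⟨k, rfl⟩ := (alternatingGroup.mem_range_ofSubtype_iff s g).mpr (by
      intro x hx
      have hx' := mem_support.mp hx
      simp only [s, Finset.mem_sdiff, Finset.mem_univ, true_and, Finset.mem_insert,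
        Finset.mem_singleton, not_or]
      exact ⟨fun e => hx' (e ▸ h0), fun e => hx' (e ▸ h1)⟩)
    have hk : k ∈ Subgroup.closure
        {g : alternatingGroup s | Equiv.Perm.IsThreeCycle (g : Equiv.Perm s)} := by
      rw [alternatingGroup.closure_isThreeCycles_eq_top]; trivial
    clear h0 h1
    induction hk using Subgroup.closure_induction with
    | mem x hx =>
      apply fix3
      · rw [alternatingGroup.coe_ofSubtype, IsThreeCycle, cycleType_ofSubtype]
        exact hx
      · rw [alternatingGroup.coe_ofSubtype]
        exact ofSubtype_apply_of_not_mem _ (by simp [s])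
      · rw [alternatingGroup.coe_ofSubtype]
        exact ofSubtype_apply_of_not_mem _ (by simp [s])
    | one => simp
    | mul x y _ _ hx hy => rw [map_mul, hmul, hy, hx]
    | inv x _ hx =>
      have h := congrArg (ρ (alternatingGroup.ofSubtype s x)⁻¹) hx
      rw [← hmul, inv_mul_cancel, map_one] at h
      rw [map_inv]
      exact h.symm
  have h2t : ∀ i j, i ≠ j → ∃ g : alternatingGroup α,
      (g : Perm α) (f 0) = i ∧ (g : Perm α) (f 1) = j := by
    intro i j hij
    obtain ⟨k, hk⟩ := exists_ne_of_card {i, j} ((Finset.card_le_two).trans_lt (by omega))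
    simp only [Finset.mem_insert, Finset.mem_singleton, not_or] at hk
    obtain ⟨g, h1, h2, -⟩ := exists_alt (by omega) (fne (by decide)) (fne (by decide))
      (fne (by decide)) hij (Ne.symm hk.1) (Ne.symm hk.2) (a := f 0) (b := f 1) (c := f 2)
    exact ⟨g, h1, h2⟩
  -- `u i j` is the translate of `v` by any even permutation sending `f 0`, `f 1` to `i`, `j`
  choose! γ hγ1 hγ2 using h2t
  obtain ⟨u, hu⟩ : ∃ u : α → α → V, ∀ i j, u i j = if i = j then 0 else ρ (γ i j) v :=
    ⟨_, fun _ _ => rfl⟩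
  have uself : ∀ i, u i i = 0 := fun i => by rw [hu, if_pos rfl]
  have uv : ∀ (g : alternatingGroup α) (i j : α), (g : Perm α) (f 0) = i →
      (g : Perm α) (f 1) = j → u i j = ρ g v := by
    rintro g i j rfl rfl
    have hne : (g : Perm α) (f 0) ≠ (g : Perm α) (f 1) := fun e =>
      fne (by decide) ((g : Perm α).injective e)
    rw [hu, if_neg hne]
    have h := fix4 (g⁻¹ * γ ((g : Perm α) (f 0)) ((g : Perm α) (f 1)))
      (by simp [hγ1 _ _ hne]) (by simp [hγ2 _ _ hne])
    rw [hmul] at h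
    have h' := congrArg (ρ g) h
    rwa [← hmul, mul_inv_cancel, map_one] at h'
  have equi : ∀ (g : alternatingGroup α) (i j : α),
      ρ g (u i j) = u ((g : Perm α) i) ((g : Perm α) j) := by
    intro g i j
    by_cases hij : i = j
    · rw [hij, uself, uself, map_zero]
    · rw [uv (γ i j) i j (hγ1 _ _ hij) (hγ2 _ _ hij), ← hmul,
        uv (g * γ i j) _ _ (by simp [hγ1 _ _ hij]) (by simp [hγ2 _ _ hij])]
  have hanti : ∀ i j, u j i = - u i j := by
    intro i j
    by_cases hij : i = j
    · rw [hij, uself, neg_zero]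
    · have h01 : u (f 1) (f 0) = - u (f 0) (f 1) := by
        rw [uv 1 (f 0) (f 1) rfl rfl, uv t (f 1) (f 0) (tv 0) (tv 1), htv]; simp
      have := congrArg (ρ (γ i j)) h01
      rwa [map_neg, equi, equi, hγ1 _ _ hij, hγ2 _ _ hij] at this
  have hcoc : ∀ i j k, u i j + u j k = u i k := by
    intro i j k
    by_cases hij : i = j
    · rw [hij, uself, zero_add]
    by_cases hjk : j = k
    · rw [hjk, uself, add_zero]
    by_cases hik : i = k
    · rw [← hik, uself, hanti i j, add_neg_cancel]
    obtain ⟨g, h0, h1, h2⟩ := exists_alt (by omega) (fne (by decide)) (fne (by decide))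
      (fne (by decide)) hij hik hjk (a := f 0) (b := f 1) (c := f 2)
    have cc : ∀ i, (c : Perm α) (f i) = f ((c₁ : Perm (Fin 7)) i) := altMap_image f c₁
    have base : u (f 0) (f 1) + u (f 1) (f 2) + u (f 2) (f 0) = 0 := by
      rw [uv 1 (f 0) (f 1) rfl rfl, uv c (f 1) (f 2) (cc 0) (cc 1),
        uv (c * c) (f 2) (f 0) (by rw [Subgroup.coe_mul, mul_apply, cc, cc]; rfl)
          (by rw [Subgroup.coe_mul, mul_apply, cc, cc]; rfl), hmul, map_one]
      exact hcv
    have := congrArg (ρ g) base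
    rw [map_add, map_add, equi, equi, equi, h0, h1, h2, map_zero, hanti i k] at this
    rwa [← sub_eq_add_neg, sub_eq_zero] at this
  refine card_le_of_equivariant ρ (by omega) (fun i => ∑ j, u i j) ?_ (i₀ := f 0) (j₀ := f 1) ?_
  · intro g i
    rw [map_sum, ← Equiv.sum_comp (g : Perm α) (fun j => u ((g : Perm α) i) j)]
    exact Finset.sum_congr rfl fun j _ => equi g i j
  · intro h
    have h1 : ∑ j, (u (f 0) j - u (f 1) j) = 0 := by
      rw [Finset.sum_sub_distrib]; exact sub_eq_zero.mpr h
    have h2 : ∀ j, u (f 0) j - u (f 1) j = v := by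
      intro j
      rw [← hcoc (f 0) (f 1) j, add_sub_cancel_right, uv 1 (f 0) (f 1) rfl rfl, map_one]
      rfl
    simp only [h2, Finset.sum_const, Finset.card_univ] at h1
    rw [← Nat.cast_smul_eq_nsmul ℂ] at h1
    rcases smul_eq_zero.mp h1 with h3 | h3
    · have : Fintype.card α = 0 := by exact_mod_cast h3
      omega
    · exact hv0 h3
end

/-! ### The dimension bound for alternating groups -/

/-- The restriction of a representation to an invariant subspace. -/
def restrictRep {G k V : Type} [Group G] [Field k] [AddCommGroup V] [Module k V]
    (ρ : G →* Module.End k V) (p : Submodule k V) (h : ∀ g, ∀ x ∈ p, ρ g x ∈ p) :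
    G →* Module.End k p where
  toFun g := (ρ g).restrict (h g)
  map_one' := by ext x; simp
  map_mul' g g' := by ext x; simp

theorem exists_omega : ∃ ω : ℂ, ω ^ 2 + ω + 1 = 0 := by
  have h := Complex.isPrimitiveRoot_exp 3 (by norm_num)
  have h1 := h.geom_sum_eq_zero (by norm_num)
  rw [Finset.sum_range_succ, Finset.sum_range_succ, Finset.sum_range_one, pow_zero, pow_one] at h1
  exact ⟨_, by rw [← h1]; ring⟩

/-- A nontrivial complex representation of `A_n`, `n ≥ 7`, has dimension at least `n - 1`. -/
theorem alternating_bound (n : ℕ) : ∀ (α V : Type) [Fintype α] [DecidableEq α] [AddCommGroup V]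
    [Module ℂ V] [FiniteDimensional ℂ V] (ρ : alternatingGroup α →* Module.End ℂ V),
    Fintype.card α = n → 7 ≤ n → ρ ≠ 1 → n ≤ Module.finrank ℂ V + 1 := by
  induction n using Nat.strong_induction_on with
  | _ n ih =>
  intro α V _ _ _ _ _ ρ hα hn hρ
  by_contra hlt
  refine hlt (hα ▸ std_bound ρ (by omega) hρ fun f => ?_)
  by_contra hne
  obtain ⟨ω, hω⟩ := exists_omega
  have fne : ∀ {i j : Fin 7}, i ≠ j → f i ≠ f j := fun h e => h (f.injective e)
  have ht : (ρ.comp (altMap f)) t₂ ≠ 1 := by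
    apply ne_one_of_ne_one ρ (by omega) hρ
    intro h
    have h1 := altMap_image f t₂ 3
    rw [h] at h1
    exact fne (show (3 : Fin 7) ≠ (t₂ : Perm (Fin 7)) 3 by decide) h1
  have h8 := eight_le (ρ.comp (altMap f)) hω ht hne
  -- the points not moved by `c`; the even permutations of `s` act on the eigenspaces of `c`
  let s : Finset α := Finset.univ \ {f 0, f 1, f 2}
  have hs : Fintype.card s = n - 3 := by
    rw [Fintype.card_coe, Finset.card_univ_sdiff, hα, Finset.card_eq_three.mpr
      ⟨f 0, f 1, f 2, fne (by decide), fne (by decide), fne (by decide), rfl⟩]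
  have hcs : ∀ i, (c₁ : Perm (Fin 7)) i ≠ i → i = 0 ∨ i = 1 ∨ i = 2 := by decide
  have hcs' : ∀ i, (c₂ : Perm (Fin 7)) i ≠ i → i ≠ 0 ∧ i ≠ 1 ∧ i ≠ 2 := by decide
  have hcomm : ∀ g : alternatingGroup s,
      alternatingGroup.ofSubtype s g * altMap f c₁ = altMap f c₁ * alternatingGroup.ofSubtype s g := by
    intro g
    apply Subtype.ext
    refine (Perm.Disjoint.commute fun x => ?_).eq
    by_cases hx : x ∈ s
    · right
      apply altMap_fix
      rintro i hi rfl
      rcases hcs i hi with rfl | rfl | rfl <;> simp [s] at hx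
    · left
      rw [alternatingGroup.coe_ofSubtype]
      exact ofSubtype_apply_of_not_mem _ hx
  obtain ⟨d, hd⟩ : ∃ d, alternatingGroup.ofSubtype s d = altMap f c₂ :=
    (alternatingGroup.mem_range_ofSubtype_iff s (altMap f c₂)).mpr (by
      intro x hx
      rw [mem_support] at hx
      by_contra hxs
      refine hx (altMap_fix _ _ ?_)
      rintro i hi rfl
      obtain ⟨h0, h1, h2⟩ := hcs' i hi
      simp [s, h0, h1, h2] at hxs)
  have hE : ∀ a : ZMod 3, a ≠ 0 →
      n - 3 ≤ Module.finrank ℂ (Module.End.eigenspace (ρ (altMap f c₁)) (ω ^ a.val)) + 1 := by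
    intro a ha
    let E := Module.End.eigenspace (ρ (altMap f c₁)) (ω ^ a.val)
    let τ := restrictRep (ρ.comp (alternatingGroup.ofSubtype s)) E (by
      intro g x hx
      simp only [E, Module.End.mem_eigenspace_iff] at hx ⊢
      rw [MonoidHom.comp_apply, ← Module.End.mul_apply, ← map_mul, ← hcomm, map_mul,
        Module.End.mul_apply, hx, map_smul])
    refine ih (n - 3) (by omega) s E τ hs (by omega) fun hτ => ?_
    obtain ⟨x, hx, h1, h2⟩ := off_all (ρ.comp (altMap f)) hω hne a 1 ha (by decide)
    have h3 := LinearMap.congr_fun (DFunLike.congr_fun hτ d)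
      ⟨x, Module.End.mem_eigenspace_iff.mpr h1⟩
    have h4 : ρ (alternatingGroup.ofSubtype s d) x = x := congrArg Subtype.val h3
    rw [hd] at h4
    have h5 : (ω ^ (1 : ZMod 3).val - 1) • x = 0 := by
      rw [sub_smul, ← h2, one_smul, sub_eq_zero]; exact h4
    rcases smul_eq_zero.mp h5 with h6 | h6
    · have h7 : ω = 1 := by simpa [sub_eq_zero, ZMod.val_one] using h6
      rw [h7] at hω; norm_num at hω
    · exact hx h6
  have e1 := hE 1 (by decide)
  have e2 := hE 2 (by decide)
  have hdis := (Module.End.eigenspaces_iSupIndep (ρ (altMap f c₁))).pairwiseDisjoint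
    (show ω ^ (1 : ZMod 3).val ≠ ω ^ (2 : ZMod 3).val from by
      change ω ^ 1 ≠ ω ^ 2
      intro h
      have h7 : ω = 1 := by
        apply mul_left_cancel₀ (om_ne hω); rw [mul_one, ← sq, ← h, pow_one]
      rw [h7] at hω; norm_num at hω)
  have := Submodule.finrank_add_finrank_le_of_disjoint hdis
  omega

/-! ### Commuting actions of `Q` and `A_n` -/

section
variable {Q W : Type} [Group Q] [AddCommGroup W] [Module ℝ W] [FiniteDimensional ℝ W] {n : ℕ}

open TensorProduct in
/-- On a real representation of `Q × A_n` of dimension at most `n + 3` without nonzero `A_n`-fixed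
vectors, `[Q, Q]` acts trivially, because `Q` acts by scalars after complexification; and the dimension
is at least `n - 1` unless the space is zero. -/
theorem no_fixed_part (hn : 7 ≤ n)
    (ρ : Q × alternatingGroup (Fin n) →* Module.End ℝ W)
    (hfix : ∀ x, (∀ g, ρ (1, g) x = x) → x = 0) (hdim : Module.finrank ℝ W ≤ n + 3) :
    (Nontrivial W → n ≤ Module.finrank ℝ W + 1) ∧ ∀ q ∈ commutator Q, ρ (q, 1) = 1 := by
  let β := Module.End.baseChangeHom ℝ ℂ W
  have hβ : Function.Injective β := LinearMap.baseChangeHom_injective ℝ W ℂ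
  let τ : Q × alternatingGroup (Fin n) →* Module.End ℂ (ℂ ⊗[ℝ] W) :=
    (β : Module.End ℝ W →* Module.End ℂ (ℂ ⊗[ℝ] W)).comp ρ
  have hτ : ∀ g, τ g = β (ρ g) := fun _ => rfl
  have hfr : Module.finrank ℂ (ℂ ⊗[ℝ] W) = Module.finrank ℝ W := Module.finrank_baseChange
  -- the sum over the alternating group has image in the fixed vectors, so it vanishes
  have hsum : ∑ g : alternatingGroup (Fin n), ρ (1, g) = 0 := by
    refine LinearMap.ext fun x => hfix _ fun g => ?_
    rw [LinearMap.sum_apply, map_sum, ← Equiv.sum_comp (Equiv.mulLeft g) (fun h => ρ (1, h) x)]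
    refine Finset.sum_congr rfl fun h _ => ?_
    rw [← Module.End.mul_apply, ← map_mul, Prod.mk_mul_mk, one_mul]; rfl
  have hfixC : ∀ z, (∀ g, τ (1, g) z = z) → z = 0 := by
    intro z hz
    have h1 := LinearMap.congr_fun (congrArg β hsum) z
    rw [map_sum, LinearMap.sum_apply, map_zero, LinearMap.zero_apply,
      show ∑ g, β (ρ (1, g)) z = ∑ g : alternatingGroup (Fin n), z from
        Finset.sum_congr rfl fun g _ => hz g, Finset.sum_const, ← Nat.cast_smul_eq_nsmul ℂ] at h1
    exact (smul_eq_zero.mp h1).resolve_left (Nat.cast_ne_zero.mpr Fintype.card_ne_zero)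
  have hbound : ∀ p : Submodule ℂ (ℂ ⊗[ℝ] W), p ≠ ⊥ → (∀ g, ∀ x ∈ p, τ (1, g) x ∈ p) →
      n ≤ Module.finrank ℂ p + 1 := by
    intro p hp hinv
    refine alternating_bound n (Fin n) p (restrictRep (τ.comp (MonoidHom.inr _ _)) p hinv)
      (Fintype.card_fin n) hn fun h => ?_
    obtain ⟨x, hx, hx0⟩ := Submodule.exists_mem_ne_zero_of_ne_bot hp
    refine hx0 (hfixC x fun g => ?_)
    exact congrArg Subtype.val (LinearMap.congr_fun (DFunLike.congr_fun h g) ⟨x, hx⟩)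
  have hcomm : ∀ q g x, τ (q, 1) (τ (1, g) x) = τ (1, g) (τ (q, 1) x) := by
    intro q g x
    simp only [← Module.End.mul_apply, ← map_mul, Prod.mk_mul_mk, one_mul, mul_one]
  have hscalar : ∀ q, ∃ μ : ℂ, ∀ x, τ (q, 1) x = μ • x := by
    intro q
    rcases subsingleton_or_nontrivial (ℂ ⊗[ℝ] W) with hs | hs
    · exact ⟨0, fun x => Subsingleton.elim _ _⟩
    obtain ⟨μ, x, -, hx, hμ⟩ := exists_eigenvector_mem ⊤ top_ne_bot (τ (q, 1)) (by simp)
    refine ⟨μ, ?_⟩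
    -- kernel and range of `q - μ` are invariant, and too large to be both nonzero
    let S := τ (q, 1) - μ • (1 : Module.End ℂ (ℂ ⊗[ℝ] W))
    have hS : ∀ y, S y = τ (q, 1) y - μ • y := fun _ => rfl
    have hSg : ∀ g y, S (τ (1, g) y) = τ (1, g) (S y) := by
      intro g y
      rw [hS, hS, map_sub, hcomm, map_smul]
    have hker := hbound (LinearMap.ker S)
      (fun h => hx ((Submodule.mem_bot ℂ).mp (h ▸ LinearMap.mem_ker.mpr (by rw [hS, hμ, sub_self]))))
      (fun g y hy => by
        rw [LinearMap.mem_ker] at hy ⊢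
        rw [hSg, hy, map_zero])
    have hran : LinearMap.range S = ⊥ := by
      by_contra h
      have h1 := hbound _ h (by
        rintro g _ ⟨y, rfl⟩
        exact ⟨_, hSg g y⟩)
      have := LinearMap.finrank_range_add_finrank_ker S
      omega
    intro y
    rw [← sub_eq_zero, ← hS, LinearMap.range_eq_bot.mp hran, LinearMap.zero_apply]
  constructor
  · intro hW
    have : Nontrivial (ℂ ⊗[ℝ] W) := by
      apply Module.nontrivial_of_finrank_pos (R := ℂ)
      rw [hfr]; exact Module.finrank_pos
    have := hbound ⊤ top_ne_bot (by simp)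
    rwa [finrank_top, hfr] at this
  · have hle : commutator Q ≤ (τ.comp (MonoidHom.inl _ _)).ker := by
      rw [commutator_def, Subgroup.commutator_le]
      intro q _ r _
      have h : τ (q * r, 1) = τ (r * q, 1) := by
        obtain ⟨μ, hμ⟩ := hscalar q
        obtain ⟨ν, hν⟩ := hscalar r
        have e : ∀ a b : Q, τ (a * b, 1) = τ (a, 1) * τ (b, 1) := fun a b => by
          rw [← map_mul, Prod.mk_mul_mk, one_mul]
        rw [e, e]
        refine LinearMap.ext fun x => ?_
        rw [Module.End.mul_apply, Module.End.mul_apply, hν, hμ, hμ, hν, smul_comm]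
      rw [MonoidHom.mem_ker, MonoidHom.comp_apply, MonoidHom.inl_apply, commutatorElement_def,
        show ((q * r * q⁻¹ * r⁻¹, 1) : Q × alternatingGroup (Fin n)) = (q * r, 1) * (q⁻¹ * r⁻¹, 1) by
          rw [Prod.mk_mul_mk, one_mul, ← mul_assoc (q * r)], map_mul, h, ← map_mul,
        Prod.mk_mul_mk, one_mul, show r * q * (q⁻¹ * r⁻¹) = 1 by group]
      exact map_one τ
    intro q hq
    apply hβ
    rw [map_one]
    exact hle hq
end

/-! ### Passing to orthogonal matrices -/

/-- The block embedding `O(k) → O(m)`, `X ↦ diag(X, 1)`, for `k ≤ m`. -/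
theorem exists_pad {k m : ℕ} (h : k ≤ m) :
    ∃ φ : Matrix.orthogonalGroup (Fin k) ℝ →* Matrix.orthogonalGroup (Fin m) ℝ,
      Function.Injective φ := by
  let e : Fin k ⊕ Fin (m - k) ≃ Fin m := finSumFinEquiv.trans (finCongr (by omega))
  refine ⟨{ toFun := fun X => ⟨Matrix.reindexAlgEquiv ℝ ℝ e (Matrix.fromBlocks X.1 0 0 1), ?_⟩
            map_one' := ?_
            map_mul' := ?_ }, ?_⟩
  · rw [Matrix.mem_orthogonalGroup_iff]
    have hX : X.1 * X.1.transpose = 1 := (Matrix.mem_orthogonalGroup_iff (Fin k) ℝ).mp X.2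
    have hB : Matrix.fromBlocks X.1 0 0 (1 : Matrix (Fin (m - k)) (Fin (m - k)) ℝ) *
        (Matrix.fromBlocks X.1 0 0 1).transpose = 1 := by
      rw [Matrix.fromBlocks_transpose, Matrix.fromBlocks_multiply]
      simp [hX]
    rw [Matrix.coe_reindexAlgEquiv, Matrix.transpose_reindex, ← Matrix.coe_reindexAlgEquiv ℝ ℝ,
      ← map_mul, hB, map_one]
  · apply Subtype.ext
    simp
  · intro X Y
    apply Subtype.ext
    simp [Matrix.fromBlocks_multiply]
  · intro X Y h
    have h1 := (Matrix.reindexAlgEquiv ℝ ℝ e).injective (congrArg Subtype.val h)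
    exact Subtype.ext (Matrix.fromBlocks_inj.mp h1).1

open scoped InnerProductSpace in
/-- A faithful action by isometries on a Euclidean space of dimension at most `m` embeds the
group into `O(m)`. -/
theorem exists_orthogonal {Q F : Type} [Group Q] [NormedAddCommGroup F] [InnerProductSpace ℝ F]
    [FiniteDimensional ℝ F] (ρ : Q →* Module.End ℝ F)
    (hiso : ∀ q x y, ⟪ρ q x, ρ q y⟫_ℝ = ⟪x, y⟫_ℝ) (hinj : Function.Injective ρ) {m : ℕ}
    (hm : Module.finrank ℝ F ≤ m) :
    ∃ φ : Q →* Matrix.orthogonalGroup (Fin m) ℝ, Function.Injective φ := by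
  obtain ⟨π, hπ⟩ := exists_pad hm
  let T := LinearMap.toMatrixOrthonormal (stdOrthonormalBasis ℝ F)
  let φ : Q →* Matrix.orthogonalGroup (Fin (Module.finrank ℝ F)) ℝ :=
    { toFun := fun q => ⟨T (ρ q), by
        rw [Matrix.mem_unitaryGroup_iff', ← map_star, ← map_mul]
        rw [show star (ρ q) * ρ q = 1 from ?_, map_one]
        refine LinearMap.ext fun x => ext_inner_right ℝ fun y => ?_
        rw [Module.End.mul_apply, LinearMap.star_eq_adjoint, LinearMap.adjoint_inner_left, hiso]
        rfl⟩
      map_one' := Subtype.ext (by simp)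
      map_mul' := fun q r => Subtype.ext (by simp) }
  refine ⟨π.comp φ, hπ.comp fun q r h => hinj (T.injective (congrArg Subtype.val h))⟩

end AlternatingRep

/-- Let `Q` be a finite group in which every nontrivial normal subgroup meets the
commutator subgroup nontrivially, and which does not embed into `O(4)`. Then for every
`n ≥ 7` the group `Q × A_n` does not embed into `O(n+3)`. -/
theorem prod_with_alternating_not_subgroup_of_orthogonal (Q : Type) [Group Q] [Finite Q]
    (hQnormal : ∀ N : Subgroup Q, N.Normal → N ≠ ⊥ → N ⊓ commutator Q ≠ ⊥)
    (hQO4 : ¬ ∃ φ : Q →* Matrix.orthogonalGroup (Fin 4) ℝ, Function.Injective φ)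
    (n : ℕ) (hn : 7 ≤ n) :
    ¬ ∃ ψ : Q × alternatingGroup (Fin n) →* Matrix.orthogonalGroup (Fin (n + 3)) ℝ,
        Function.Injective ψ := by
  rintro ⟨ψ, hψ⟩
  let T := (LinearMap.toMatrixOrthonormal (EuclideanSpace.basisFun (Fin (n + 3)) ℝ)).symm
  let ρ : Q × alternatingGroup (Fin n) →* Module.End ℝ (EuclideanSpace ℝ (Fin (n + 3))) :=
    { toFun := fun g => T (ψ g).1
      map_one' := by simp
      map_mul' := fun g h => by simp }
  have hρ : Function.Injective ρ := fun g h e => hψ (Subtype.ext (T.injective e))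
  have hiso : ∀ g x y, inner ℝ (ρ g x) (ρ g y) = inner ℝ x y := by
    intro g x y
    have h : star (ρ g) * ρ g = 1 := by
      change star (T (ψ g).1) * T (ψ g).1 = 1
      rw [← map_star, ← map_mul, Matrix.mem_unitaryGroup_iff'.mp (ψ g).2, map_one]
    rw [← LinearMap.adjoint_inner_left, ← LinearMap.star_eq_adjoint, ← Module.End.mul_apply, h,
      Module.End.one_apply]
  have hmul : ∀ g h x, ρ (g * h) x = ρ g (ρ h x) := fun g h x => by
    rw [map_mul, Module.End.mul_apply]
  -- the vectors fixed by the alternating group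
  let F : Submodule ℝ (EuclideanSpace ℝ (Fin (n + 3))) :=
    ⨅ g : alternatingGroup (Fin n), LinearMap.ker (ρ (1, g) - 1)
  have hF : ∀ x, x ∈ F ↔ ∀ g, ρ (1, g) x = x := by
    intro x; simp [F, Submodule.mem_iInf, sub_eq_zero]
  have hFinv : ∀ g, ∀ x ∈ F, ρ g x ∈ F := by
    rintro ⟨q, a⟩ x hx
    rw [hF] at hx ⊢
    have e : ∀ b, ρ (q, b) x = ρ (q, 1) x := fun b => by
      conv_rhs => rw [← hx b]
      rw [← hmul, Prod.mk_mul_mk, one_mul, mul_one]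
    intro g
    rw [e, ← hmul, Prod.mk_mul_mk, one_mul, mul_one, e]
  have hWinv : ∀ g, ∀ x ∈ Fᗮ, ρ g x ∈ Fᗮ := by
    intro g x hx
    rw [Submodule.mem_orthogonal] at hx ⊢
    intro u hu
    rw [← hiso g⁻¹, ← hmul, inv_mul_cancel, map_one]
    exact hx _ (hFinv _ _ hu)
  have hdim := F.finrank_add_finrank_orthogonal
  rw [finrank_euclideanSpace_fin] at hdim
  obtain ⟨h1, h2⟩ := AlternatingRep.no_fixed_part hn (AlternatingRep.restrictRep ρ Fᗮ hWinv) (by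
    intro x hx
    have hxF : (x : EuclideanSpace ℝ (Fin (n + 3))) ∈ F :=
      (hF _).mpr fun g => congrArg Subtype.val (hx g)
    exact Subtype.ext (inner_self_eq_zero.mp (Submodule.mem_orthogonal F x |>.mp x.2 x hxF)))
    (by omega)
  have hW : Nontrivial Fᗮ := by
    rw [Submodule.nontrivial_iff_ne_bot]
    intro hbot
    rw [Submodule.orthogonal_eq_bot_iff] at hbot
    have : Nontrivial (alternatingGroup (Fin n)) :=
      alternatingGroup.nontrivial_of_three_le_card (by simp; omega)
    obtain ⟨g, hg⟩ := exists_ne (1 : alternatingGroup (Fin n))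
    refine hg (congrArg Prod.snd (hρ (a₁ := (1, g)) (a₂ := 1) ?_))
    rw [map_one]
    exact LinearMap.ext fun x => (hF x).mp (hbot ▸ Submodule.mem_top) g
  have hF4 : Module.finrank ℝ F ≤ 4 := by
    have := h1 hW
    omega
  let θ : Q →* Module.End ℝ F := (AlternatingRep.restrictRep ρ F hFinv).comp (MonoidHom.inl _ _)
  have hker : θ.ker = ⊥ := by
    by_contra hne
    refine hQnormal θ.ker inferInstance hne ((Subgroup.eq_bot_iff_forall _).mpr ?_)
    rintro q ⟨hq1, hq2⟩
    refine congrArg Prod.fst (hρ (a₁ := (q, 1)) (a₂ := 1) ?_)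
    rw [map_one]
    refine LinearMap.ext fun x => ?_
    obtain ⟨y, hy, z, hz, rfl⟩ := Submodule.exists_add_mem_mem_orthogonal (K := F) x
    have e1 : ρ (q, 1) y = y :=
      congrArg Subtype.val (LinearMap.congr_fun (MonoidHom.mem_ker.mp hq1) ⟨y, hy⟩)
    have e2 : ρ (q, 1) z = z := congrArg Subtype.val (LinearMap.congr_fun (h2 q hq2) ⟨z, hz⟩)
    rw [map_add, e1, e2, Module.End.one_apply]
  exact hQO4 (AlternatingRep.exists_orthogonal θ (fun q x y => hiso (q, 1) x y)
    ((MonoidHom.ker_eq_bot_iff θ).mp hker) hF4)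
end

section
/- Let Q be a finite group such that every nontrivial normal subgroup of Q has nontrivial intersection with the commutator subgroup [Q,Q], and suppose there is no injective group homomorphism from Q into the orthogonal group O(6). Then for every natural number n ≥ 7 and every natural number k ≥ 1, there is no injective group homomorphism from the direct product Q × (ℤ/kℤ) × A_n into the orthogonal group O(n+5), where A_n is the alternating group on n letters. -/
/-!
Suppose `Q × ℤ/k × A_n` embeds into `O(n + 5)`, and let `V` be the complexified representation, of
dimension `n + 5`. It is enough to find a set `T` of even permutations whose common fixed space in
`V` has dimension at most six and carries a faithful action of `Q` (`exists_faithful_fixSet`). The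
real fixed space of `T` is then a Euclidean space of dimension at most six on which `Q` acts
faithfully by isometries, so `Q` embeds into `O(6)` (`exists_embedding`).

The main input is that nontrivial complex representations of `A_n`, `n ≥ 7`, have dimension at
least `n - 1` (`card_le_of_eq`). It is proved by induction from `n - 3` to `n` by looking at the
eigenspaces of 3-cycles, using only the simplicity and multiple transitivity of `A_n`.

Write `V = F ⊕ U` with `F` the invariants of `A_n` and `U` the kernel of averaging over `A_n`. Then
`U` has dimension at least `n - 1`, so `F` has dimension at most six.

* If `Q` acts by scalars on `U`, then `[Q, Q]` acts trivially on `U`. The kernel of `Q` on `F`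
  therefore meets `[Q, Q]` trivially, because `Q` is faithful on `V`; by hypothesis this kernel is
  trivial, and `T = A_n` works.
* Otherwise some element of `Q` has two eigenspaces on `U`, each of dimension at least `n - 1`. From
  `2 (n - 1) ≤ n + 5` one gets `n = 7`, `F = 0`, and every eigenspace of a nonscalar element of `Q`
  has dimension six. A 5-cycle has four nontrivial eigenvalues of equal multiplicity, so it fixes a
  nonzero vector in every six-dimensional representation. Consequently `T` consisting of a single
  5-cycle works (`faithful_of_nonscalar`).
-/

namespace AltOrth

open Module Equiv

/-! ### Eigenspaces of operators of finite order -/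

section LinearAlgebra

variable {V : Type} [AddCommGroup V] [Module ℂ V] [FiniteDimensional ℂ V]

theorem iSup_eigenspace_of_pow_eq_one (t : End ℂ V) {m : ℕ} (hm : m ≠ 0) (ht : t ^ m = 1) :
    ⨆ μ : ℂ, t.eigenspace μ = ⊤ := by
  apply Module.End.IsSemisimple.iSup_eigenspace_eq_top
  apply Module.End.isSemisimple_of_squarefree_aeval_eq_zero
    (p := (Polynomial.X ^ m - 1 : Polynomial ℂ))
  · exact (Polynomial.separable_X_pow_sub_C (1 : ℂ) (by exact_mod_cast hm) one_ne_zero).squarefree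
  · simp [ht]

theorem finrank_eq_sum_eigenspace (t : End ℂ V) {p : ℕ} (hp : p ≠ 0) (ht : t ^ p = 1)
    {ζ : ℂ} (hζ : IsPrimitiveRoot ζ p) :
    finrank ℂ V = ∑ i : Fin p, finrank ℂ (t.eigenspace (ζ ^ (i : ℕ))) := by
  have hinj : Function.Injective (fun i : Fin p => ζ ^ (i : ℕ)) := fun i j h =>
    Fin.ext (hζ.pow_inj i.2 j.2 h)
  have hind := t.eigenspaces_iSupIndep.comp hinj
  have htop : ⨆ i : Fin p, t.eigenspace (ζ ^ (i : ℕ)) = ⊤ := by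
    rw [eq_top_iff, ← iSup_eigenspace_of_pow_eq_one t hp ht]
    refine iSup_le fun μ => ?_
    intro v hv
    by_cases hv0 : v = 0
    · simp [hv0]
    have h1 : ∀ k : ℕ, (t ^ k) v = μ ^ k • v := by
      intro k
      induction k with
      | zero => simp
      | succ k ih =>
        rw [pow_succ', Module.End.mul_apply, ih, map_smul, End.mem_eigenspace_iff.1 hv, smul_smul,
          pow_succ]
    have h2 := h1 p
    rw [ht, Module.End.one_apply] at h2
    have h3 : μ ^ p = 1 := by
      have : (μ ^ p - 1) • v = 0 := by rw [sub_smul, ← h2]; simp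
      rcases smul_eq_zero.1 this with h | h
      · exact sub_eq_zero.1 h
      · exact absurd h hv0
    have : NeZero p := ⟨hp⟩
    obtain ⟨i, hi, rfl⟩ := hζ.eq_pow_of_pow_eq_one h3
    exact Submodule.mem_iSup_of_mem (⟨i, hi⟩ : Fin p) hv
  have hinternal := DirectSum.isInternal_submodule_of_iSupIndep_of_iSup_eq_top hind htop
  rw [← (LinearEquiv.ofBijective (DirectSum.coeLinearMap _) hinternal).finrank_eq, Module.finrank_directSum]
  rfl

theorem finrank_eq_three (t : End ℂ V) (ht : t ^ 3 = 1) {ω : ℂ} (hω : IsPrimitiveRoot ω 3) :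
    finrank ℂ V = finrank ℂ (t.eigenspace 1) + finrank ℂ (t.eigenspace ω) +
      finrank ℂ (t.eigenspace (ω ^ 2)) := by
  obtain ⟨d, hd⟩ : ∃ d : ℂ → ℕ, ∀ μ, finrank ℂ (t.eigenspace μ) = d μ := ⟨_, fun _ => rfl⟩
  have h := finrank_eq_sum_eigenspace t (by norm_num) ht hω
  simp only [hd] at h ⊢
  simpa [Fin.sum_univ_three] using h

theorem finrank_eigenspace_restrict (t : End ℂ V) (U : Submodule ℂ V) (hU : ∀ u ∈ U, t u ∈ U)
    (μ : ℂ) : finrank ℂ (End.eigenspace (t.restrict hU) μ) =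
      finrank ℂ (t.eigenspace μ ⊓ U : Submodule ℂ V) := by
  rw [← Submodule.finrank_map_subtype_eq U]
  congr 2
  all_goals
    ext v
    simp only [Submodule.mem_map, End.mem_eigenspace_iff, Submodule.mem_inf]
    constructor
    · rintro ⟨u, hu, rfl⟩
      exact ⟨congrArg Subtype.val hu, u.2⟩
    · rintro ⟨h1, h2⟩
      exact ⟨⟨v, h2⟩, Subtype.ext h1, rfl⟩

theorem finrank_restrict_three (t : End ℂ V) (ht : t ^ 3 = 1) {ω : ℂ}
    (hω : IsPrimitiveRoot ω 3) (U : Submodule ℂ V) (hU : ∀ u ∈ U, t u ∈ U) :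
    finrank ℂ U = finrank ℂ (t.eigenspace 1 ⊓ U : Submodule ℂ V) +
      finrank ℂ (t.eigenspace ω ⊓ U : Submodule ℂ V) +
      finrank ℂ (t.eigenspace (ω ^ 2) ⊓ U : Submodule ℂ V) := by
  have h3 : (t.restrict hU) ^ 3 = 1 := by
    ext u
    have := LinearMap.congr_fun ht u
    simpa [pow_succ] using this
  have := finrank_eq_three _ h3 hω
  rwa [finrank_eigenspace_restrict, finrank_eigenspace_restrict,
    finrank_eigenspace_restrict] at this

/-- If `x, y` generate a Klein four-group permuted cyclically by `t`, of order three, and `x` acts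
nontrivially on a subspace stable under `x` and `y`, then a joint eigenvector `e` of `x, y` for a
nontrivial character lies in that subspace, and `e, t e, t² e` belong to the three distinct
nontrivial characters. -/
theorem exists_three_independent (x y t : End ℂ V) (hx : x * x = 1) (hy : y * y = 1)
    (hxy : x * y = y * x) (htx : t * x = y * t) (hty : t * y = x * y * t)
    (ht : t * t * t = 1) (W : Submodule ℂ V) (hWx : ∀ w ∈ W, x w ∈ W) (hWy : ∀ w ∈ W, y w ∈ W)
    (hW : ∃ w ∈ W, x w ≠ w) :
    ∃ e ∈ W, LinearIndependent ℂ ![e, t e, t (t e)] := by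
  obtain ⟨w, hw, hxw⟩ := hW
  have ax (v) : x (x v) = v := by simpa using LinearMap.congr_fun hx v
  have ay (v) : y (y v) = v := by simpa using LinearMap.congr_fun hy v
  have axy (v) : x (y v) = y (x v) := by simpa using LinearMap.congr_fun hxy v
  have atx (v) : t (x v) = y (t v) := by simpa using LinearMap.congr_fun htx v
  have aty (v) : t (y v) = x (y (t v)) := by simpa using LinearMap.congr_fun hty v
  have at3 (v) : t (t (t v)) = v := by simpa using LinearMap.congr_fun ht v
  -- project `w` to the part where `x = -1`, and then to an eigenspace of `y`
  have key : ∃ e ∈ W, e ≠ 0 ∧ x e = -e ∧ (y e = e ∨ y e = -e) := by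
    have h0 : w - x w ≠ 0 := sub_ne_zero.2 (Ne.symm hxw)
    have h1 : x (w - x w) = -(w - x w) := by simp [ax]
    have hm : w - x w ∈ W := W.sub_mem hw (hWx _ hw)
    generalize w - x w = u at h0 h1 hm
    by_cases h : u + y u = 0
    · exact ⟨u, hm, h0, h1, Or.inr (by rwa [add_comm, add_eq_zero_iff_eq_neg] at h)⟩
    · refine ⟨u + y u, W.add_mem hm (hWy _ hm), h, ?_, Or.inl ?_⟩
      · simp [axy, h1]; abel
      · simp [ay, add_comm]
  obtain ⟨e, he, he0, hxe, hye⟩ := key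
  refine ⟨e, he, ?_⟩
  have ht0 : t e ≠ 0 := fun h => he0 (by rw [← at3 e, h]; simp)
  have htt0 : t (t e) ≠ 0 := fun h => he0 (by rw [← at3 e, h]; simp)
  have y1 : y (t e) = - t e := by rw [← atx, hxe, map_neg]
  have x1 : x (t e) = - t (y e) := by rw [aty, y1]; simp
  have y2 : y (t (t e)) = -t (t (y e)) := by rw [← atx, x1]; simp
  have x2 : x (t (t e)) = t (t (y e)) := by
    have : x (t (t e)) = y (x (y (t (t e)))) := by rw [axy, ay]
    rw [this, ← aty, y1]; simp [← atx, x1]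
  rw [Fintype.linearIndependent_iff]
  intro c hc
  simp only [Fin.sum_univ_three, Matrix.cons_val_zero, Matrix.cons_val_one, Matrix.cons_val] at hc
  have hcx := congrArg x hc
  have hcy := congrArg y hc
  have hcxy := congrArg x hcy
  -- each coefficient is isolated by the projection onto the matching character of the four-group
  rcases hye with hye | hye <;>
  · simp only [map_add, map_smul, map_zero, map_neg, hxe, x1, x2, y1, y2, hye, smul_neg,
      neg_neg] at hcx hcy hcxy
    have e0 : (4 : ℂ) • (c 0 • e) = 0 := by
      first
      | linear_combination (norm := module) hc - hcx + hcy - hcxy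
      | linear_combination (norm := module) hc - hcx - hcy + hcxy
    have e1 : (4 : ℂ) • (c 1 • t e) = 0 := by
      first
      | linear_combination (norm := module) hc - hcx + hcy - hcxy
      | linear_combination (norm := module) hc - hcx - hcy + hcxy
      | linear_combination (norm := module) hc + hcx - hcy - hcxy
    have e2 : (4 : ℂ) • (c 2 • t (t e)) = 0 := by
      first
      | linear_combination (norm := module) hc - hcx + hcy - hcxy
      | linear_combination (norm := module) hc - hcx - hcy + hcxy
      | linear_combination (norm := module) hc + hcx - hcy - hcxy
    intro i
    fin_cases i
    · simpa [he0] using e0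
    · simpa [ht0] using e1
    · simpa [htt0] using e2

end LinearAlgebra

/-! ### Three-cycles and double transpositions -/

section Elements

variable {α : Type} [Fintype α] [DecidableEq α]

/-- The product `(a b)(b c)`, which is the 3-cycle `a ↦ b ↦ c ↦ a` when `a ≠ c`. -/
def tri (a b c : α) (hab : a ≠ b) (hbc : b ≠ c) : alternatingGroup α :=
  ⟨swap a b * swap b c, by simp [Perm.mem_alternatingGroup, hab, hbc]⟩

/-- The product `(a b)(c d)`; the two transpositions are not required to be disjoint. -/
def dbl (a b c d : α) (hab : a ≠ b) (hcd : c ≠ d) : alternatingGroup α :=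
  ⟨swap a b * swap c d, by simp [Perm.mem_alternatingGroup, hab, hcd]⟩

theorem tri_apply (a b c : α) (hab : a ≠ b) (hbc : b ≠ c) (x : α) :
    (tri a b c hab hbc : Perm α) x = swap a b (swap b c x) := rfl

theorem dbl_apply (a b c d : α) (hab : a ≠ b) (hcd : c ≠ d) (x : α) :
    (dbl a b c d hab hcd : Perm α) x = swap a b (swap c d x) := rfl

theorem tri_cube (a b c : α) (hab : a ≠ b) (hbc : b ≠ c) (hac : a ≠ c) :
    tri a b c hab hbc * tri a b c hab hbc * tri a b c hab hbc = 1 := by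
  ext x
  simp only [Subgroup.coe_mul, Perm.mul_apply, tri_apply, Subgroup.coe_one, Perm.one_apply]
  grind (splits := 20)

theorem dbl_sq (a b c d : α) (hab : a ≠ b) (hcd : c ≠ d) (hac : a ≠ c) (had : a ≠ d)
    (hbc : b ≠ c) (hbd : b ≠ d) :
    dbl a b c d hab hcd * dbl a b c d hab hcd = 1 := by
  ext x
  simp only [Subgroup.coe_mul, Perm.mul_apply, dbl_apply, Subgroup.coe_one, Perm.one_apply]
  grind

theorem dbl_comm (a b c d : α) (hab : a ≠ b) (hcd : c ≠ d) (hac : a ≠ c) (had : a ≠ d)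
    (hbc : b ≠ c) (hbd : b ≠ d) :
    dbl a b c d hab hcd * dbl a c b d hac hbd = dbl a c b d hac hbd * dbl a b c d hab hcd := by
  ext x
  simp only [Subgroup.coe_mul, Perm.mul_apply, dbl_apply]
  grind

theorem tri_dbl (a b c d : α) (hab : a ≠ b) (hcd : c ≠ d) (hac : a ≠ c) (had : a ≠ d)
    (hbc : b ≠ c) (hbd : b ≠ d) :
    tri b c d hbc hcd * dbl a b c d hab hcd = dbl a c b d hac hbd * tri b c d hbc hcd := by
  ext x
  simp only [Subgroup.coe_mul, Perm.mul_apply, dbl_apply, tri_apply]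
  grind

theorem tri_dbl' (a b c d : α) (hab : a ≠ b) (hcd : c ≠ d) (hac : a ≠ c) (had : a ≠ d)
    (hbc : b ≠ c) (hbd : b ≠ d) :
    tri b c d hbc hcd * dbl a c b d hac hbd =
      dbl a b c d hab hcd * dbl a c b d hac hbd * tri b c d hbc hcd := by
  ext x
  simp only [Subgroup.coe_mul, Perm.mul_apply, dbl_apply, tri_apply]
  grind

open scoped Pointwise in
/-- Two sets of equal size are conjugate under the alternating group. -/
theorem exists_image_eq (hα : 3 ≤ Fintype.card α) {S T : Finset α} (h : S.card = T.card) :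
    ∃ g : alternatingGroup α, ∀ x, (g : Perm α) x ∈ T ↔ x ∈ S := by
  have := Set.powersetCard.isPretransitive_alternatingGroup (α := α) (n := T.card)
    (by rwa [Nat.card_eq_fintype_card])
  obtain ⟨g, hg⟩ := this.exists_smul_eq ⟨S, h⟩ ⟨T, rfl⟩
  refine ⟨g, fun x => ?_⟩
  have hg' : g • S = T := congrArg Subtype.val hg
  rw [← hg']
  exact Finset.smul_mem_smul_finset_iff g

theorem exists_map_pair (hα : 4 ≤ Fintype.card α) {a b i j : α} (hab : a ≠ b) (hij : i ≠ j) :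
    ∃ g : alternatingGroup α, (g : Perm α) a = i ∧ (g : Perm α) b = j := by
  have h1 := alternatingGroup.isMultiplyPretransitive α
  have h2 : MulAction.IsMultiplyPretransitive (alternatingGroup α) α 2 :=
    MulAction.isMultiplyPretransitive_of_le (n := Nat.card α - 2)
      (by rw [Nat.card_eq_fintype_card]; omega) (by simp)
  rw [MulAction.is_two_pretransitive_iff] at h2
  exact h2 hab hij

end Elements

/-! ### Vectors fixed by the even permutations of a subset -/

section FixOn

variable {α : Type} [Fintype α] [DecidableEq α]
  {V : Type} [AddCommGroup V] [Module ℂ V] [FiniteDimensional ℂ V]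
  (ρ : Representation ℂ (alternatingGroup α) V)

theorem rho_mul (g h : alternatingGroup α) (v : V) : ρ (g * h) v = ρ g (ρ h v) := by
  rw [map_mul]; rfl

/-- The vectors fixed by all even permutations supported in `S`. -/
def fixOn (S : Finset α) : Submodule ℂ V where
  carrier := {v | ∀ g : alternatingGroup α, (∀ x ∉ S, (g : Perm α) x = x) → ρ g v = v}
  add_mem' hv hw g hg := by rw [map_add, hv g hg, hw g hg]
  zero_mem' g _ := map_zero _
  smul_mem' c v hv g hg := by rw [map_smul, hv g hg]

theorem mem_fixOn {S : Finset α} {v : V} : v ∈ fixOn ρ S ↔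
    ∀ g : alternatingGroup α, (∀ x ∉ S, (g : Perm α) x = x) → ρ g v = v := Iff.rfl

theorem fixOn_anti {S T : Finset α} (h : S ⊆ T) : fixOn ρ T ≤ fixOn ρ S :=
  fun _ hv g hg => hv g fun x hx => hg x fun hxS => hx (h hxS)

theorem rho_mem_fixOn {S T : Finset α} (g : alternatingGroup α)
    (hg : ∀ x, (g : Perm α) x ∈ T → x ∈ S) {v : V} (hv : v ∈ fixOn ρ S) : ρ g v ∈ fixOn ρ T := by
  intro h hh
  have h1 : ρ (g⁻¹ * h * g) v = v := by
    refine hv _ fun x hx => ?_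
    have := hh ((g : Perm α) x) fun hT => hx (hg x hT)
    simp [this]
  calc ρ h (ρ g v) = ρ g (ρ (g⁻¹ * h * g) v) := by rw [← rho_mul, ← rho_mul]; congr 2; group
    _ = ρ g v := by rw [h1]

theorem rho_injective (g : alternatingGroup α) : Function.Injective (ρ g) := fun v w h => by
  have := congrArg (ρ g⁻¹) h
  simpa [← rho_mul] using this

theorem finrank_fixOn_eq (hα : 3 ≤ Fintype.card α) {S T : Finset α} (h : S.card = T.card) :
    finrank ℂ (fixOn ρ S) = finrank ℂ (fixOn ρ T) := by
  have key : ∀ {S T : Finset α}, S.card = T.card →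
      finrank ℂ (fixOn ρ S) ≤ finrank ℂ (fixOn ρ T) := by
    intro S T h
    obtain ⟨g, hg⟩ := exists_image_eq hα h
    refine LinearMap.finrank_le_finrank_of_injective (f := (ρ g).restrict
      fun v hv => rho_mem_fixOn ρ g (fun x hx => (hg x).1 hx) hv) ?_
    intro v w hvw
    exact Subtype.ext (rho_injective ρ g (congrArg Subtype.val hvw))
  exact le_antisymm (key h) (key h.symm)

/-- Even permutations of `T ∪ {y}` are generated by those of `T` and of `S ∪ {y}`, where
`S ⊆ T` has at least two elements. -/
theorem fixOn_insert {S T : Finset α} (hST : S ⊆ T) {y : α} (hS : 2 ≤ S.card)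
    {v : V} (h1 : v ∈ fixOn ρ T) (h2 : v ∈ fixOn ρ (insert y S)) : v ∈ fixOn ρ (insert y T) := by
  by_cases hyT : y ∈ T
  · rwa [Finset.insert_eq_of_mem hyT]
  -- permutations which send `y` into `S`
  have step : ∀ s ∈ S, ∀ s' ∈ S, s ≠ s' → ∀ g : alternatingGroup α,
      (∀ x ∉ insert y T, (g : Perm α) x = x) → (g : Perm α) y = s → ρ g v = v := by
    intro s hs s' hs' hss g hg hgy
    have hys : y ≠ s := fun h => hyT (h ▸ hST hs)
    have hys' : y ≠ s' := fun h => hyT (h ▸ hST hs')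
    have e1 : ρ (tri s y s' hys.symm hys') v = v := by
      apply h2
      intro x hx
      rw [tri_apply]
      grind
    have e2 : ρ (tri s y s' hys.symm hys' * g) v = v := by
      apply h1
      intro x hx
      rw [Subgroup.coe_mul, Perm.mul_apply, tri_apply]
      grind
    rw [rho_mul] at e2
    exact rho_injective ρ _ (e2.trans e1.symm)
  obtain ⟨s, hs, s', hs', hss⟩ := Finset.one_lt_card.1 (show 1 < S.card by omega)
  intro g hg
  by_cases hgy : (g : Perm α) y = y
  · apply h1
    intro x hx
    grind
  have hgT : (g : Perm α) y ∈ T := by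
    by_contra hc
    have := hg _ (show (g : Perm α) y ∉ insert y T by grind)
    exact hgy ((g : Perm α).injective this)
  by_cases hz : (g : Perm α) y = s
  · exact step s hs s' hs' hss g hg hz
  by_cases hz' : (g : Perm α) y = s'
  · exact step s' hs' s hs hss.symm g hg hz'
  have e1 : ρ (tri _ s s' hz hss) v = v := by
    apply h1
    intro x hx
    rw [tri_apply]
    grind
  have e2 : ρ (tri _ s s' hz hss * g) v = v := by
    refine step s hs s' hs' hss _ ?_ ?_
    · intro x hx
      rw [Subgroup.coe_mul, Perm.mul_apply, tri_apply]
      grind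
    · rw [Subgroup.coe_mul, Perm.mul_apply, tri_apply]
      grind
  rw [rho_mul] at e2
  exact rho_injective ρ _ (e2.trans e1.symm)

/-- In a representation without invariants a nonzero `fixOn S` shrinks strictly when a letter is
added: otherwise, by conjugation, it would not shrink for any added letter, and its vectors would
be invariant. -/
theorem fixOn_insert_lt (h0 : fixOn ρ Finset.univ = ⊥) {S : Finset α} (hS : 2 ≤ S.card)
    (hne : fixOn ρ S ≠ ⊥) {x : α} (hx : x ∉ S) : fixOn ρ (insert x S) < fixOn ρ S := by
  refine lt_of_le_of_ne (fixOn_anti ρ (Finset.subset_insert _ _)) fun heq => hne ?_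
  have hall : ∀ y, fixOn ρ S ≤ fixOn ρ (insert y S) := by
    intro y
    by_cases hy : y ∈ S
    · rw [Finset.insert_eq_of_mem hy]
    by_cases hxy : x = y
    · rw [← hxy, heq]
    obtain ⟨s, hs, s', hs', hss⟩ := Finset.one_lt_card.1 (show 1 < S.card by omega)
    intro v hv
    have hmap : ∀ z, (dbl x y s s' hxy hss : Perm α) z ∈ S → z ∈ S := by
      intro z
      rw [dbl_apply]
      grind
    have h1 := rho_mem_fixOn ρ _ hmap hv
    rw [← heq] at h1
    have hmap' : ∀ z, (dbl x y s s' hxy hss : Perm α) z ∈ insert y S → z ∈ insert x S := by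
      intro z
      rw [dbl_apply]
      grind
    have h2 := rho_mem_fixOn ρ _ hmap' h1
    rw [← rho_mul, dbl_sq _ _ _ _ _ _ (by grind) (by grind) (by grind) (by grind)] at h2
    simpa using h2
  have : ∀ R : Finset α, fixOn ρ S ≤ fixOn ρ (S ∪ R) := by
    intro R
    induction R using Finset.induction_on with
    | empty => simp
    | insert y R _ ih =>
      intro v hv
      rw [Finset.union_insert]
      exact fixOn_insert ρ Finset.subset_union_left hS (ih hv) (hall y hv)
  have := this Finset.univ
  rwa [Finset.union_eq_right.2 (Finset.subset_univ _), h0, le_bot_iff] at this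

/-- Adding `r` letters one at a time lowers the dimension of the fixed space by at least `r`, as long
as it stays nonzero. -/
theorem finrank_fixOn_chain (h0 : fixOn ρ Finset.univ = ⊥) {S : Finset α} (hS : 2 ≤ S.card)
    (R : Finset α) (hR : Disjoint S R) (hne : fixOn ρ (S ∪ R) ≠ ⊥) :
    finrank ℂ (fixOn ρ (S ∪ R)) + R.card ≤ finrank ℂ (fixOn ρ S) := by
  induction R using Finset.induction_on with
  | empty => rw [Finset.union_empty]; simp
  | insert y R hy ih =>
    rw [Finset.union_insert] at hne ⊢
    have hd : Disjoint S R := hR.mono_right (Finset.subset_insert _ _)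
    have hyS : y ∉ S ∪ R := by
      rw [Finset.disjoint_insert_right] at hR
      simp [hR.1, hy]
    have hle := fixOn_anti ρ (Finset.subset_insert y (S ∪ R))
    have hne' : fixOn ρ (S ∪ R) ≠ ⊥ := fun h => hne (by rwa [h, le_bot_iff] at hle)
    have h1 := ih hd hne'
    have h2 := Submodule.finrank_lt_finrank_of_lt (fixOn_insert_lt ρ h0
      (hS.trans (Finset.card_le_card Finset.subset_union_left)) hne' hyS)
    rw [Finset.card_insert_of_notMem hy]
    omega

end FixOn

/-! ### Eigenspaces of 3-cycles -/

section ThreeCycles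

variable {α : Type} [Fintype α] [DecidableEq α]
  {V : Type} [AddCommGroup V] [Module ℂ V] [FiniteDimensional ℂ V]
  (ρ : Representation ℂ (alternatingGroup α) V)

theorem eq_one_of_support_pair {b c : α} (g : alternatingGroup α)
    (hg : ∀ x, x ≠ b → x ≠ c → (g : Perm α) x = x) : g = 1 := by
  have hinj := (g : Perm α).injective
  by_cases hb : (g : Perm α) b = b
  · ext x
    rw [Subgroup.coe_one, Perm.one_apply]
    by_cases hxb : x = b
    · rw [hxb, hb]
    by_cases hxc : x = c
    · subst hxc
      by_contra hne
      have h1 : (g : Perm α) x ≠ b := fun h => hxb (hinj (h.trans hb.symm))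
      exact hne (hinj (hg _ h1 hne))
    · exact hg x hxb hxc
  · exfalso
    have hbc : (g : Perm α) b = c := by
      by_contra hne
      exact hb (hinj (hg _ hb hne))
    have hcb : (g : Perm α) c = b := by
      by_contra hne
      have h1 : (g : Perm α) c ≠ c := fun h => hb (by rw [hbc]; exact hinj (h.trans hbc.symm ▸ rfl))
      exact h1 (hinj (hg _ hne h1))
    have hgs : (g : Perm α) = swap b c := by
      ext x
      rw [swap_apply_def]
      split_ifs with h1 h2
      · rw [h1, hbc]
      · rw [h2, hcb]
      · exact hg x h1 h2
    have h1 := Perm.mem_alternatingGroup.1 g.2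
    rw [hgs, Perm.sign_swap (fun h => hb (by rw [hbc, h]))] at h1
    exact absurd h1 (by decide)

/-- The even permutations of `{a, b, c}` are the powers of the 3-cycle `(a b c)`. -/
theorem eigenspace_one_eq_fixOn {a b c : α} (hab : a ≠ b) (hbc : b ≠ c) (hac : a ≠ c) :
    End.eigenspace (ρ (tri a b c hab hbc)) 1 = fixOn ρ {a, b, c} := by
  apply le_antisymm
  · intro v hv
    rw [End.mem_eigenspace_iff, one_smul] at hv
    have base : ∀ g : alternatingGroup α, (∀ x ∉ ({a, b, c} : Finset α), (g : Perm α) x = x) →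
        (g : Perm α) a = a → ρ g v = v := by
      intro g hg hga
      rw [eq_one_of_support_pair (b := b) (c := c) g (fun x h1 h2 => by grind)]
      simp
    have step : ∀ g : alternatingGroup α, (∀ x ∉ ({a, b, c} : Finset α), (g : Perm α) x = x) →
        (g : Perm α) a = c → ρ g v = v := by
      intro g hg hga
      have h1 := base (tri a b c hab hbc * g) (fun x hx => by
        rw [Subgroup.coe_mul, Perm.mul_apply, tri_apply]; grind) (by
        rw [Subgroup.coe_mul, Perm.mul_apply, tri_apply]; grind)
      rw [rho_mul] at h1
      exact rho_injective ρ _ (h1.trans hv.symm)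
    intro g hg
    by_cases h1 : (g : Perm α) a = a
    · exact base g hg h1
    by_cases h2 : (g : Perm α) a = c
    · exact step g hg h2
    have h3 : (g : Perm α) a = b := by
      by_contra h3
      exact h1 ((g : Perm α).injective (hg _ (by grind)))
    have h4 := step (tri a b c hab hbc * g) (fun x hx => by
        rw [Subgroup.coe_mul, Perm.mul_apply, tri_apply]; grind) (by
        rw [Subgroup.coe_mul, Perm.mul_apply, tri_apply]; grind)
    rw [rho_mul] at h4
    exact rho_injective ρ _ (h4.trans hv.symm)
  · intro v hv
    rw [End.mem_eigenspace_iff, one_smul]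
    apply hv
    intro x hx
    rw [tri_apply]
    grind

theorem rho_tri_cube {a b c : α} (hab : a ≠ b) (hbc : b ≠ c) (hac : a ≠ c) :
    (ρ (tri a b c hab hbc)) ^ 3 = 1 := by
  rw [← map_pow, pow_succ, pow_two, tri_cube a b c hab hbc hac, map_one]

/-- An even permutation inverting the 3-cycle swaps its two nontrivial eigenspaces. -/
theorem finrank_eigenspace_le {a b c : α} (hab : a ≠ b) (hbc : b ≠ c) (hac : a ≠ c)
    (hα : 5 ≤ Fintype.card α) (μ : ℂ) :
    finrank ℂ (End.eigenspace (ρ (tri a b c hab hbc)) μ) ≤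
      finrank ℂ (End.eigenspace (ρ (tri a b c hab hbc)) (μ ^ 2)) := by
  have hcard : 1 < (({a, b, c} : Finset α)ᶜ).card := by
    rw [Finset.card_compl, Finset.card_eq_three.2 ⟨a, b, c, hab, hac, hbc, rfl⟩]; omega
  obtain ⟨p, hp, q, hq, hpq⟩ := Finset.one_lt_card.1 hcard
  simp only [Finset.mem_compl, Finset.mem_insert, Finset.mem_singleton, not_or] at hp hq
  have hrel : tri a b c hab hbc * dbl a b p q hab hpq =
      dbl a b p q hab hpq * (tri a b c hab hbc * tri a b c hab hbc) := by
    ext x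
    simp only [Subgroup.coe_mul, Perm.mul_apply, dbl_apply, tri_apply]
    grind (splits := 20)
  refine LinearMap.finrank_le_finrank_of_injective (f := (ρ (dbl a b p q hab hpq)).restrict
      fun v hv => ?_) ?_
  · rw [End.mem_eigenspace_iff] at hv ⊢
    rw [← rho_mul, hrel, rho_mul, rho_mul, hv, map_smul, hv, map_smul, map_smul, smul_smul, pow_two]
  · intro v w hvw
    exact Subtype.ext (rho_injective ρ _ (congrArg Subtype.val hvw))

theorem finrank_eigenspaces {ω : ℂ} (hω : IsPrimitiveRoot ω 3) {a b c : α}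
    (hab : a ≠ b) (hbc : b ≠ c) (hac : a ≠ c) (hα : 5 ≤ Fintype.card α) :
    finrank ℂ (End.eigenspace (ρ (tri a b c hab hbc)) (ω ^ 2)) =
      finrank ℂ (End.eigenspace (ρ (tri a b c hab hbc)) ω) ∧
    finrank ℂ V = finrank ℂ (fixOn ρ {a, b, c}) +
      2 * finrank ℂ (End.eigenspace (ρ (tri a b c hab hbc)) ω) := by
  have h1 := finrank_eigenspace_le ρ hab hbc hac hα ω
  have h2 := finrank_eigenspace_le ρ hab hbc hac hα (ω ^ 2)
  have h3 : (ω ^ 2) ^ 2 = ω := by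
    calc (ω ^ 2) ^ 2 = ω ^ 3 * ω := by ring
      _ = ω := by rw [hω.pow_eq_one, one_mul]
  rw [h3] at h2
  have h4 := finrank_eq_three _ (rho_tri_cube ρ hab hbc hac) hω
  rw [eigenspace_one_eq_fixOn ρ hab hbc hac] at h4
  omega

/-- Nontrivial representations are faithful, since the alternating group is simple. -/
theorem faithful (hα : 5 ≤ Fintype.card α) (hρ : ∃ g, ρ g ≠ 1) {g : alternatingGroup α}
    (hg : ρ g = 1) : g = 1 := by
  have := alternatingGroup.isSimpleGroup (α := α) (by rwa [Nat.card_eq_fintype_card])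
  rcases (MonoidHom.normal_ker ρ).eq_bot_or_eq_top with h | h
  · exact (Subgroup.mem_bot).1 (h ▸ (MonoidHom.mem_ker.2 hg))
  · obtain ⟨k, hk⟩ := hρ
    exact absurd (MonoidHom.mem_ker.1 (h ▸ Subgroup.mem_top k : k ∈ MonoidHom.ker ρ)) hk

theorem tri_ne_one {a b c : α} (hab : a ≠ b) (hbc : b ≠ c) (hac : a ≠ c) :
    tri a b c hab hbc ≠ 1 := by
  intro h
  have := congrArg (fun g : alternatingGroup α => (g : Perm α) a) h
  simp only [tri_apply, Subgroup.coe_one, Perm.one_apply] at this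
  grind

theorem eigenspace_pos {ω : ℂ} (hω : IsPrimitiveRoot ω 3) {a b c : α}
    (hab : a ≠ b) (hbc : b ≠ c) (hac : a ≠ c) (hα : 5 ≤ Fintype.card α) (hρ : ∃ g, ρ g ≠ 1) :
    0 < finrank ℂ (End.eigenspace (ρ (tri a b c hab hbc)) ω) := by
  by_contra h0
  have h1 := (finrank_eigenspaces ρ hω hab hbc hac hα).2
  have h2 : finrank ℂ (fixOn ρ {a, b, c}) = finrank ℂ V := by omega
  have h3 := Submodule.eq_top_of_finrank_eq h2
  rw [← eigenspace_one_eq_fixOn ρ hab hbc hac] at h3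
  refine tri_ne_one hab hbc hac (faithful ρ hα hρ (LinearMap.ext fun v => ?_))
  have : v ∈ End.eigenspace (ρ (tri a b c hab hbc)) 1 := by rw [h3]; trivial
  simpa [End.mem_eigenspace_iff] using this

end ThreeCycles

/-! ### Representations in which 3-cycles move little -/

section Standard

variable {α : Type} [Fintype α] [DecidableEq α]
  {V : Type} [AddCommGroup V] [Module ℂ V] [FiniteDimensional ℂ V]
  (ρ : Representation ℂ (alternatingGroup α) V)

/-- A vector fixed by the pointwise stabiliser of `a, b` vanishes if all point stabilisers
are fixed-point free and the translates of `v` under the 3-cycles `(a b x)` sum to zero. -/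
theorem eq_zero_of_pair (hn : 5 ≤ Fintype.card α) {a b : α} (hab : a ≠ b)
    (h1 : ∀ i, fixOn ρ ({i}ᶜ : Finset α) = ⊥) {v : V} (hv : v ∈ fixOn ρ ({a, b}ᶜ : Finset α))
    (h3 : ∀ x, a ≠ x → ∀ hbx : b ≠ x,
      v + ρ (tri a b x hab hbx) v + ρ (tri a b x hab hbx) (ρ (tri a b x hab hbx) v) = 0) :
    v = 0 := by
  have hg : ∀ i j : α, ∃ g : alternatingGroup α, i ≠ j →
      (g : Perm α) a = i ∧ (g : Perm α) b = j := by
    intro i j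
    by_cases hij : i = j
    · exact ⟨1, fun h => absurd hij h⟩
    · obtain ⟨g, hg⟩ := exists_map_pair (by omega) hab hij
      exact ⟨g, fun _ => hg⟩
  choose g hg using hg
  -- the translate of `v` attached to the ordered pair `(i, j)`
  let u : α → α → V := fun i j => if i = j then 0 else ρ (g i j) v
  have hu0 : ∀ i, u i i = 0 := fun i => by simp [u]
  have hu : ∀ h : alternatingGroup α, ρ h v = u ((h : Perm α) a) ((h : Perm α) b) := by
    intro h
    have hne : (h : Perm α) a ≠ (h : Perm α) b := fun e => hab ((h : Perm α).injective e)
    obtain ⟨e1, e2⟩ := hg _ _ hne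
    have e3 : ρ ((g ((h : Perm α) a) ((h : Perm α) b))⁻¹ * h) v = v := by
      apply hv
      intro x hx
      simp only [Finset.mem_compl, Finset.mem_insert, Finset.mem_singleton, not_not] at hx
      rw [Subgroup.coe_mul, Perm.mul_apply, Subgroup.coe_inv, Perm.inv_eq_iff_eq]
      rcases hx with rfl | rfl
      · exact e1.symm
      · exact e2.symm
    simp only [u, if_neg hne]
    conv_rhs => rw [← e3]
    rw [← rho_mul]
    simp
  have hact : ∀ (h : alternatingGroup α) i j, ρ h (u i j) =
      u ((h : Perm α) i) ((h : Perm α) j) := by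
    intro h i j
    by_cases hij : i = j
    · subst hij; rw [hu0, hu0, map_zero]
    · obtain ⟨e1, e2⟩ := hg _ _ hij
      have : u i j = ρ (g i j) v := by simp [u, hij]
      rw [this, ← rho_mul, hu, Subgroup.coe_mul, Perm.mul_apply, Perm.mul_apply, e1, e2]
  have hv' : v = u a b := by have := hu 1; simpa using this
  have hs1 : ∑ j, u b j = 0 := by
    rw [← Submodule.mem_bot ℂ, ← h1 b]
    intro h hh
    have hb : (h : Perm α) b = b := hh b (by simp)
    rw [map_sum]
    simp only [hact, hb]
    exact Equiv.sum_comp (h : Perm α) (fun j => u b j)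
  have hs2 : ∑ j, u j a = 0 := by
    rw [← Submodule.mem_bot ℂ, ← h1 a]
    intro h hh
    have hb : (h : Perm α) a = a := hh a (by simp)
    rw [map_sum]
    simp only [hact, hb]
    exact Equiv.sum_comp (h : Perm α) (fun j => u j a)
  have h4 : ∀ x, x ≠ a ∧ x ≠ b → u a b + u b x + u x a = 0 := by
    rintro x ⟨hxa, hxb⟩
    have := h3 x hxa.symm hxb.symm
    rw [hv', hact, hact, tri_apply, tri_apply, tri_apply, tri_apply] at this
    have e1 : swap a b (swap b x a) = b := by grind
    have e2 : swap a b (swap b x b) = x := by grind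
    have e3 : swap a b (swap b x x) = a := by grind
    rwa [e1, e2, e3] at this
  have h5 : ∑ x, (u a b + u b x + u x a) = (u a b + u b a + u a a) + (u a b + u b b + u b a) :=
    Fintype.sum_eq_add a b hab h4
  rw [Finset.sum_add_distrib, Finset.sum_add_distrib, hs1, hs2, hu0, hu0] at h5
  simp only [Finset.sum_const, Finset.card_univ, ← Nat.cast_smul_eq_nsmul ℂ] at h5
  obtain ⟨p, hp, q, hq, hpq⟩ := Finset.one_lt_card.1 (show 1 < (({a, b} : Finset α)ᶜ).card by
    rw [Finset.card_compl, Finset.card_pair hab]; omega)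
  simp only [Finset.mem_compl, Finset.mem_insert, Finset.mem_singleton, not_or] at hp hq
  -- `(a b)(p q)` swaps `u a b` and `u b a`, giving a second linear relation between them
  have h6 := congrArg (ρ (dbl a b p q hab hpq)) h5
  simp only [map_add, map_smul, hact, map_zero] at h6
  have e1 : (dbl a b p q hab hpq : Perm α) a = b := by rw [dbl_apply]; grind
  have e2 : (dbl a b p q hab hpq : Perm α) b = a := by rw [dbl_apply]; grind
  rw [e1, e2] at h6
  rw [hv']
  generalize u a b = s at *
  generalize u b a = t at *
  have hN : (5 : ℝ) ≤ Fintype.card α := by exact_mod_cast hn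
  have h7 : (((Fintype.card α : ℝ) * (Fintype.card α - 4) : ℝ) : ℂ) • s = 0 := by
    push_cast
    linear_combination (norm := module) ((Fintype.card α : ℂ) - 2) • h5 + (2 : ℂ) • h6
  rcases smul_eq_zero.1 h7 with h | h
  · have : (Fintype.card α : ℝ) * (Fintype.card α - 4) = 0 := by exact_mod_cast h
    nlinarith
  · exact h

variable {ω : ℂ}

/-- A representation without invariants has dimension at least `n - 1` if both nontrivial eigenspaces
of every 3-cycle `(a b c)` are fixed by the even permutations of the remaining letters. In smaller
dimension the fixed space of the complement of `{a, b, c}` is two-dimensional, and that of the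
complement of `{a, b, c, d}` at most three-dimensional. So the spaces attached to `{a, b, c}` and
`{a, b, d}` share a nonzero vector, which is fixed by the pointwise stabiliser of `a, b`; this
contradicts `eq_zero_of_pair`. -/
theorem dim_of_standard (h0 : fixOn ρ Finset.univ = ⊥) (hn : 7 ≤ Fintype.card α)
    (hρ : ∃ g, ρ g ≠ 1) (hω : IsPrimitiveRoot ω 3)
    (H : ∀ (a b c : α) (hab : a ≠ b) (hbc : b ≠ c), a ≠ c →
      End.eigenspace (ρ (tri a b c hab hbc)) ω ≤ fixOn ρ ({a, b, c}ᶜ : Finset α) ∧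
      End.eigenspace (ρ (tri a b c hab hbc)) (ω ^ 2) ≤ fixOn ρ ({a, b, c}ᶜ : Finset α)) :
    Fintype.card α ≤ finrank ℂ V + 1 := by
  by_contra hlt
  have hωne : ω ^ 2 ≠ ω := by
    intro h
    exact hω.ne_one (by norm_num) (by
      have := hω.ne_zero (by norm_num)
      field_simp at h
      exact h)
  have card3 : ∀ {a b c : α}, a ≠ b → b ≠ c → a ≠ c → ({a, b, c} : Finset α).card = 3 :=
    fun hab hbc hac => Finset.card_eq_three.2 ⟨_, _, _, hab, hac, hbc, rfl⟩
  -- dimension count for a single 3-cycle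
  have A1 : ∀ (a b c : α) (hab : a ≠ b) (hbc : b ≠ c), a ≠ c →
      finrank ℂ (fixOn ρ ({a, b, c}ᶜ : Finset α)) = 2 ∧
      finrank ℂ (fixOn ρ {a, b, c}) + 4 ≤ Fintype.card α ∧
      End.eigenspace (ρ (tri a b c hab hbc)) ω ⊔ End.eigenspace (ρ (tri a b c hab hbc)) (ω ^ 2) =
        fixOn ρ ({a, b, c}ᶜ : Finset α) := by
    intro a b c hab hbc hac
    have hm := eigenspace_pos ρ hω hab hbc hac (by omega) hρ
    obtain ⟨hm2, hV⟩ := finrank_eigenspaces ρ hω hab hbc hac (by omega)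
    obtain ⟨H1, H2⟩ := H a b c hab hbc hac
    have hsup := sup_le H1 H2
    have hinf : End.eigenspace (ρ (tri a b c hab hbc)) ω ⊓
        End.eigenspace (ρ (tri a b c hab hbc)) (ω ^ 2) = ⊥ :=
      ((End.eigenspaces_iSupIndep _).pairwiseDisjoint hωne.symm).eq_bot
    have hsum := Submodule.finrank_sup_add_finrank_inf_eq
      (End.eigenspace (ρ (tri a b c hab hbc)) ω) (End.eigenspace (ρ (tri a b c hab hbc)) (ω ^ 2))
    rw [hinf, finrank_bot, hm2] at hsum
    have hle := Submodule.finrank_mono hsup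
    obtain ⟨R, hRs, hRc⟩ := Finset.exists_subset_card_eq
      (s := ({a, b, c}ᶜ : Finset α)) (n := Fintype.card α - 6)
      (by rw [Finset.card_compl, card3 hab hbc hac]; omega)
    have hdisj : Disjoint ({a, b, c} : Finset α) R :=
      (Finset.subset_compl_iff_disjoint_left).1 hRs
    have heq := finrank_fixOn_eq ρ (by omega) (S := {a, b, c} ∪ R) (T := {a, b, c}ᶜ) (by
      rw [Finset.card_union_of_disjoint hdisj, Finset.card_compl, card3 hab hbc hac, hRc]; omega)
    have hne : fixOn ρ ({a, b, c} ∪ R) ≠ ⊥ := by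
      intro h
      rw [h, finrank_bot] at heq
      omega
    have hch := finrank_fixOn_chain ρ h0 (by rw [card3 hab hbc hac]; omega) R hdisj hne
    refine ⟨by omega, by omega, Submodule.eq_of_le_of_finrank_eq hsup (by omega)⟩
  have F4 : ∀ (a b c d : α), a ≠ b → b ≠ c → a ≠ c → d ≠ a → d ≠ b → d ≠ c →
      finrank ℂ (fixOn ρ ({a, b, c, d}ᶜ : Finset α)) ≤ 3 := by
    intro a b c d hab hbc hac hda hdb hdc
    obtain ⟨hf0, hf1, -⟩ := A1 a b c hab hbc hac
    have c4 : ({a, b, c, d} : Finset α).card = 4 := by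
      rw [Finset.card_insert_of_notMem, Finset.card_insert_of_notMem, Finset.card_pair hdc.symm] <;>
        grind
    have hmono := Submodule.finrank_mono (fixOn_anti ρ
      (show ({a, b, c, d}ᶜ : Finset α) ⊆ {a, b, c}ᶜ from
        Finset.compl_subset_compl.2 (by grind)))
    obtain ⟨R, hRs, hRc⟩ := Finset.exists_subset_card_eq
      (s := ({a, b, c}ᶜ : Finset α)) (n := Fintype.card α - 7)
      (by rw [Finset.card_compl, card3 hab hbc hac]; omega)
    have hdisj : Disjoint ({a, b, c} : Finset α) R :=
      (Finset.subset_compl_iff_disjoint_left).1 hRs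
    have heq := finrank_fixOn_eq ρ (by omega) (S := {a, b, c} ∪ R) (T := {a, b, c, d}ᶜ) (by
      rw [Finset.card_union_of_disjoint hdisj, Finset.card_compl, card3 hab hbc hac, hRc, c4]
      omega)
    have hne : fixOn ρ ({a, b, c} ∪ R) ≠ ⊥ := by
      intro h
      rw [h, finrank_bot] at heq
      omega
    have hch := finrank_fixOn_chain ρ h0 (by rw [card3 hab hbc hac]; omega) R hdisj hne
    omega
  -- point stabilisers fix no nonzero vector
  have F5 : ∀ a, fixOn ρ ({a}ᶜ : Finset α) = ⊥ := by
    intro a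
    by_contra hne
    obtain ⟨b, hb, c, hc, hbc⟩ := Finset.one_lt_card.1 (show 1 < (({a} : Finset α)ᶜ).card by
      rw [Finset.card_compl, Finset.card_singleton]; omega)
    simp only [Finset.mem_compl, Finset.mem_singleton] at hb hc
    obtain ⟨hf0, -, -⟩ := A1 a b c (Ne.symm hb) hbc (Ne.symm hc)
    have hU : ({a}ᶜ : Finset α) = {a, b, c}ᶜ ∪ {b, c} := by
      ext x; simp only [Finset.mem_compl, Finset.mem_union, Finset.mem_insert,
        Finset.mem_singleton]; grind
    rw [hU] at hne
    have hch := finrank_fixOn_chain ρ h0 (S := {a, b, c}ᶜ)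
      (by rw [Finset.card_compl, card3 (Ne.symm hb) hbc (Ne.symm hc)]; omega) {b, c}
      (by rw [disjoint_comm, ← Finset.subset_compl_iff_disjoint_right, compl_compl]; grind) hne
    rw [Finset.card_pair hbc] at hch
    exact hne (Submodule.finrank_eq_zero.1 (by omega))
  obtain ⟨S, hSs, hSc⟩ := Finset.exists_subset_card_eq
      (s := (Finset.univ : Finset α)) (n := 3) (by rw [Finset.card_univ]; omega)
  obtain ⟨a, b, c, hab, hac, hbc, rfl⟩ := Finset.card_eq_three.1 hSc
  obtain ⟨d, hd⟩ := Finset.card_pos.1 (show 0 < (({a, b, c} : Finset α)ᶜ).card by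
      rw [Finset.card_compl, hSc]; omega)
  simp only [Finset.mem_compl, Finset.mem_insert, Finset.mem_singleton, not_or] at hd
  obtain ⟨hda, hdb, hdc⟩ := hd
  have hle1 := fixOn_anti ρ
      (show ({a, b, c, d}ᶜ : Finset α) ⊆ {a, b, c}ᶜ from Finset.compl_subset_compl.2 (by grind))
  have hle2 := fixOn_anti ρ
      (show ({a, b, c, d}ᶜ : Finset α) ⊆ {a, b, d}ᶜ from Finset.compl_subset_compl.2 (by grind))
  have hf4 := F4 a b c d hab hbc hac hda hdb hdc
  have hsup := Submodule.finrank_mono (sup_le hle1 hle2)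
  have hsum := Submodule.finrank_sup_add_finrank_inf_eq (fixOn ρ ({a, b, c}ᶜ : Finset α))
    (fixOn ρ ({a, b, d}ᶜ : Finset α))
  rw [(A1 a b c hab hbc hac).1, (A1 a b d hab (Ne.symm hdb) (Ne.symm hda)).1] at hsum
  have hnebot : fixOn ρ ({a, b, c}ᶜ : Finset α) ⊓ fixOn ρ ({a, b, d}ᶜ : Finset α) ≠ ⊥ := by
    intro h
    rw [h, finrank_bot] at hsum
    omega
  obtain ⟨v, hv, hv0⟩ := Submodule.exists_mem_ne_zero_of_ne_bot hnebot
  rw [Submodule.mem_inf] at hv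
  apply hv0
  have hvab : v ∈ fixOn ρ ({a, b}ᶜ : Finset α) := by
    have e1 : ({a, b}ᶜ : Finset α) = insert c ({a, b, c}ᶜ : Finset α) := by
      ext x; simp only [Finset.mem_compl, Finset.mem_insert, Finset.mem_singleton]; grind
    have e2 : ({a, b, d}ᶜ : Finset α) = insert c ({a, b, c, d}ᶜ : Finset α) := by
      ext x; simp only [Finset.mem_compl, Finset.mem_insert, Finset.mem_singleton]; grind
    rw [e1]
    refine fixOn_insert ρ (S := {a, b, c, d}ᶜ) (Finset.compl_subset_compl.2 (by grind)) ?_ hv.1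
      (e2 ▸ hv.2)
    have : ({a, b, c, d} : Finset α).card ≤ 4 := Finset.card_le_four
    rw [Finset.card_compl]
    omega
  refine eq_zero_of_pair ρ (by omega) hab F5 hvab fun x hax hbx => ?_
  have hvx := fixOn_anti ρ (show ({a, b, x}ᶜ : Finset α) ⊆ {a, b}ᶜ from
    Finset.compl_subset_compl.2 (by grind)) hvab
  rw [← (A1 a b x hab hbx hax).2.2] at hvx
  obtain ⟨y, hy, z, hz, rfl⟩ := Submodule.mem_sup.1 hvx
  rw [End.mem_eigenspace_iff] at hy hz
  have hsum0 : ω ^ 2 + ω + 1 = 0 := by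
    have h1 : (ω - 1) * (ω ^ 2 + ω + 1) = 0 := by
      have := hω.pow_eq_one
      linear_combination this
    exact (mul_eq_zero.1 h1).resolve_left (sub_ne_zero.2 (hω.ne_one (by norm_num)))
  have h3 := hω.pow_eq_one
  simp only [map_add, hy, hz, map_smul, smul_smul]
  have e1 : y + z + (ω • y + ω ^ 2 • z) + ((ω * ω) • y + (ω ^ 2 * ω ^ 2) • z) =
      (ω ^ 2 + ω + 1) • y + (ω ^ 2 + ω + 1 + ω * (ω ^ 3 - 1)) • z := by module
  rw [e1, h3, hsum0]
  simp

end Standard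

/-! ### Dimension bounds: small cases and restriction to subsets -/

section Bound

/-- The restriction of a representation to a stable subspace. -/
def subRep {G : Type} [Group G] {V : Type} [AddCommGroup V] [Module ℂ V]
    (ρ : Representation ℂ G V) (W : Submodule ℂ V) (hW : ∀ g, ∀ w ∈ W, ρ g w ∈ W) :
    Representation ℂ G W where
  toFun g := (ρ g).restrict (hW g)
  map_one' := by ext w; simp
  map_mul' g h := by ext w; simp

theorem subRep_apply {G : Type} [Group G] {V : Type} [AddCommGroup V] [Module ℂ V]
    (ρ : Representation ℂ G V) (W : Submodule ℂ V) (hW : ∀ g, ∀ w ∈ W, ρ g w ∈ W) (g : G) (w : W) :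
    (subRep ρ W hW g w : V) = ρ g w := rfl

variable {α : Type} [Fintype α] [DecidableEq α]
  {V : Type} [AddCommGroup V] [Module ℂ V] [FiniteDimensional ℂ V]
  (ρ : Representation ℂ (alternatingGroup α) V)

/-- Otherwise `fixOn S ≤ fixOn Sᶜ` for every three-element `S` by conjugation; applying this to `S` and
then to a three-element `T` missing `S` and a further letter `x` shows that `fixOn S` does not
shrink when `x` is added. -/
theorem not_fixOn_le_compl (h0 : fixOn ρ Finset.univ = ⊥) (hn : 7 ≤ Fintype.card α)
    {S : Finset α} (hS : S.card = 3) (hne : fixOn ρ S ≠ ⊥) :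
    ¬ fixOn ρ S ≤ fixOn ρ Sᶜ := by
  intro hle
  have hall : ∀ T : Finset α, T.card = 3 → fixOn ρ T ≤ fixOn ρ Tᶜ := by
    intro T hT v hv
    obtain ⟨g, hg⟩ := exists_image_eq (by omega) (hS.trans hT.symm)
    have h1 : ρ g⁻¹ v ∈ fixOn ρ S := by
      refine rho_mem_fixOn ρ g⁻¹ (fun x hx => ?_) hv
      have := (hg _).2 hx
      simpa using this
    have h2 := rho_mem_fixOn ρ g (T := Tᶜ) (S := Sᶜ) (fun x hx => by
      rw [Finset.mem_compl, hg] at hx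
      exact Finset.mem_compl.2 hx) (hle h1)
    rw [← rho_mul] at h2
    simpa using h2
  obtain ⟨x, hx⟩ := Finset.card_pos.1 (show 0 < Sᶜ.card by rw [Finset.card_compl]; omega)
  rw [Finset.mem_compl] at hx
  obtain ⟨T, hTs, hTc⟩ := Finset.exists_subset_card_eq
      (s := (insert x S)ᶜ) (n := 3)
      (by rw [Finset.card_compl, Finset.card_insert_of_notMem hx]; omega)
  have hST : T ⊆ Sᶜ := hTs.trans (Finset.compl_subset_compl.2 (Finset.subset_insert _ _))
  have hxT : insert x S ⊆ Tᶜ := by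
    rwa [Finset.subset_compl_comm]
  have hge : fixOn ρ S ≤ fixOn ρ (insert x S) :=
    hle.trans ((fixOn_anti ρ hST).trans ((hall T hTc).trans (fixOn_anti ρ hxT)))
  exact absurd (fixOn_insert_lt ρ h0 (by omega) hne hx) (not_lt_of_ge hge)

theorem dbl_ne_one {a b c d : α} (hab : a ≠ b) (hcd : c ≠ d) (hac : a ≠ c) (had : a ≠ d) :
    dbl a b c d hab hcd ≠ 1 := by
  intro h
  have := congrArg (fun g : alternatingGroup α => (g : Perm α) a) h
  simp only [dbl_apply, Subgroup.coe_one, Perm.one_apply] at this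
  grind

/-- A subspace stable under the Klein four-group of `{a, b, c, d}`, on which `(a b)(c d)` acts
nontrivially, contains a vector whose translates under the 3-cycle `(b c d)` are independent. -/
theorem exists_three_of_dbl {a b c d : α} (hab : a ≠ b) (hcd : c ≠ d) (hac : a ≠ c) (had : a ≠ d)
    (hbc : b ≠ c) (hbd : b ≠ d) (W : Submodule ℂ V)
    (hW1 : ∀ w ∈ W, ρ (dbl a b c d hab hcd) w ∈ W)
    (hW2 : ∀ w ∈ W, ρ (dbl a c b d hac hbd) w ∈ W)
    (hW : ∃ w ∈ W, ρ (dbl a b c d hab hcd) w ≠ w) :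
    ∃ e ∈ W, LinearIndependent ℂ
      ![e, ρ (tri b c d hbc hcd) e, ρ (tri b c d hbc hcd) (ρ (tri b c d hbc hcd) e)] := by
  refine exists_three_independent (ρ (dbl a b c d hab hcd)) (ρ (dbl a c b d hac hbd))
    (ρ (tri b c d hbc hcd)) ?_ ?_ ?_ ?_ ?_ ?_ W hW1 hW2 hW
  · rw [← map_mul, dbl_sq _ _ _ _ _ _ hac had hbc hbd, map_one]
  · rw [← map_mul, dbl_sq _ _ _ _ _ _ hab had hbc.symm hcd, map_one]
  · rw [← map_mul, ← map_mul, dbl_comm a b c d hab hcd hac had hbc hbd]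
  · rw [← map_mul, ← map_mul, tri_dbl a b c d hab hcd hac had hbc hbd]
  · rw [← map_mul, ← map_mul, ← map_mul, tri_dbl' a b c d hab hcd hac had hbc hbd]
  · rw [← map_mul, ← map_mul, tri_cube _ _ _ _ _ hbd, map_one]

theorem exists_ne_of_dbl (hα : 5 ≤ Fintype.card α) (hρ : ∃ g, ρ g ≠ 1)
    {a b c d : α} (hab : a ≠ b) (hcd : c ≠ d) (hac : a ≠ c) (had : a ≠ d) :
    ∃ w, ρ (dbl a b c d hab hcd) w ≠ w := by
  by_contra! h
  exact dbl_ne_one hab hcd hac had (faithful ρ hα hρ (LinearMap.ext h))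

theorem three_le_finrank_of_indep {W : Submodule ℂ V} {e f g : V} (he : e ∈ W) (hf : f ∈ W)
    (hg : g ∈ W) (h : LinearIndependent ℂ ![e, f, g]) : 3 ≤ finrank ℂ W := by
  have h1 : finrank ℂ (Submodule.span ℂ (Set.range ![e, f, g])) = 3 := by
    rw [finrank_span_eq_card h]; simp
  rw [← h1]
  refine Submodule.finrank_mono (Submodule.span_le.2 ?_)
  rintro _ ⟨i, rfl⟩
  fin_cases i
  · exact he
  · exact hf
  · exact hg

theorem three_le (hα : 5 ≤ Fintype.card α) (hρ : ∃ g, ρ g ≠ 1) : 3 ≤ finrank ℂ V := by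
  obtain ⟨S, -, hSc⟩ := Finset.exists_subset_card_eq
      (s := (Finset.univ : Finset α)) (n := 4) (by rw [Finset.card_univ]; omega)
  obtain ⟨a, b, c, d, hab, hac, had, hbc, hbd, hcd, -⟩ := Finset.card_eq_four.1 hSc
  obtain ⟨w, hw⟩ := exists_ne_of_dbl ρ hα hρ hab hcd hac had
  obtain ⟨e, -, he⟩ := exists_three_of_dbl ρ hab hcd hac had hbc hbd ⊤ (fun _ _ => trivial)
    (fun _ _ => trivial) ⟨w, trivial, hw⟩
  rw [← finrank_top ℂ V]
  exact three_le_finrank_of_indep trivial trivial trivial he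

/-- The sum of three independent vectors cyclically permuted by the 3-cycle is a fixed vector. -/
theorem fixOn_three_ne_bot (hα : 5 ≤ Fintype.card α) (hρ : ∃ g, ρ g ≠ 1)
    {b c d : α} (hbc : b ≠ c) (hcd : c ≠ d) (hbd : b ≠ d) : fixOn ρ {b, c, d} ≠ ⊥ := by
  obtain ⟨a, ha⟩ := Finset.card_pos.1 (show 0 < (({b, c, d} : Finset α)ᶜ).card by
    have : ({b, c, d} : Finset α).card ≤ 3 := Finset.card_le_three
    rw [Finset.card_compl]; omega)
  simp only [Finset.mem_compl, Finset.mem_insert, Finset.mem_singleton, not_or] at ha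
  obtain ⟨hab, hac, had⟩ := ha
  obtain ⟨w, hw⟩ := exists_ne_of_dbl ρ hα hρ hab hcd hac had
  obtain ⟨e, -, he⟩ := exists_three_of_dbl ρ hab hcd hac had hbc hbd ⊤ (fun _ _ => trivial)
    (fun _ _ => trivial) ⟨w, trivial, hw⟩
  rw [← eigenspace_one_eq_fixOn ρ hbc hcd hbd]
  intro hbot
  have h3 : ρ (tri b c d hbc hcd) (ρ (tri b c d hbc hcd) (ρ (tri b c d hbc hcd) e)) = e := by
    rw [← rho_mul, ← rho_mul, tri_cube _ _ _ _ _ hbd]; simp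
  have hm : e + ρ (tri b c d hbc hcd) e + ρ (tri b c d hbc hcd) (ρ (tri b c d hbc hcd) e) ∈
      End.eigenspace (ρ (tri b c d hbc hcd)) 1 := by
    rw [End.mem_eigenspace_iff, map_add, map_add, h3, one_smul]; abel
  rw [hbot, Submodule.mem_bot] at hm
  have := Fintype.linearIndependent_iff.1 he ![1, 1, 1] (by simpa [Fin.sum_univ_three] using hm) 0
  simp at this

/-- Dimension bounds for the alternating group on `S` apply to subspaces stable under the even
permutations supported in `S`. -/
theorem relative_bound {B : ℕ} (S : Finset α)
    (hB : ∀ (W : Type) [AddCommGroup W] [Module ℂ W] [FiniteDimensional ℂ W]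
      (σ : Representation ℂ (alternatingGroup S) W), (∃ g, σ g ≠ 1) → B ≤ finrank ℂ W)
    (W : Submodule ℂ V)
    (hW : ∀ g : alternatingGroup α, (∀ x ∉ S, (g : Perm α) x = x) → ∀ w ∈ W, ρ g w ∈ W)
    (hWS : ¬ W ≤ fixOn ρ S) : B ≤ finrank ℂ W := by
  have hsupp : ∀ g : alternatingGroup S, ∀ x ∉ S,
      (alternatingGroup.ofSubtype S g : Perm α) x = x := fun g x hx => by
    rw [alternatingGroup.coe_ofSubtype]
    exact Perm.ofSubtype_apply_of_not_mem _ hx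
  let σ : Representation ℂ (alternatingGroup S) V := MonoidHom.comp ρ (alternatingGroup.ofSubtype S)
  refine hB W (subRep σ W fun g => hW _ (hsupp g)) ?_
  by_contra! hc
  refine hWS fun w hw g hg => ?_
  have hmem : ∀ x, (g : Perm α) x ∈ S ↔ x ∈ S := by
    intro x
    by_cases hx : x ∈ S
    · refine iff_of_true ?_ hx
      by_contra hgx
      rw [(g : Perm α).injective (hg _ hgx)] at hgx
      exact hgx hx
    · rw [hg x hx]
  have hof : Perm.ofSubtype ((g : Perm α).subtypePerm hmem) = (g : Perm α) :=
    Perm.ofSubtype_subtypePerm hmem (fun x hx => by by_contra h; exact hx (hg x h))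
  have hsign : (g : Perm α).subtypePerm hmem ∈ alternatingGroup S := by
    rw [Perm.mem_alternatingGroup, ← Perm.sign_ofSubtype, hof]
    exact Perm.mem_alternatingGroup.1 g.2
  have h1 : alternatingGroup.ofSubtype S ⟨_, hsign⟩ = g :=
    Subtype.ext (by rw [alternatingGroup.coe_ofSubtype]; exact hof)
  have h2 := congrArg Subtype.val (LinearMap.congr_fun (hc ⟨_, hsign⟩) ⟨w, hw⟩)
  rw [subRep_apply] at h2
  change ρ (alternatingGroup.ofSubtype S ⟨_, hsign⟩) w = w at h2
  rwa [h1] at h2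

/-- The kernel of the averaging operator is a nontrivial subrepresentation without invariants. -/
theorem noFixed_reduction (hρ : ∃ g, ρ g ≠ 1) : ∃ (W : Submodule ℂ V)
    (σ : Representation ℂ (alternatingGroup α) W), (∃ g, σ g ≠ 1) ∧ fixOn σ Finset.univ = ⊥ := by
  let P : V →ₗ[ℂ] V := ∑ g, ρ g
  have hP : ∀ g v, P (ρ g v) = P v := by
    intro g v
    simp only [P, LinearMap.sum_apply, ← rho_mul]
    exact Fintype.sum_equiv (Equiv.mulRight g) _ _ (fun _ => rfl)
  have hW : ∀ g, ∀ w ∈ LinearMap.ker P, ρ g w ∈ LinearMap.ker P := by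
    intro g w hw
    rw [LinearMap.mem_ker] at hw ⊢
    rw [hP, hw]
  have hfix : ∀ w, (∀ g, ρ g w = w) → w ∈ LinearMap.ker P → w = 0 := by
    intro w hw hk
    rw [LinearMap.mem_ker] at hk
    simp only [P, LinearMap.sum_apply, hw, Finset.sum_const, Finset.card_univ,
      ← Nat.cast_smul_eq_nsmul ℂ] at hk
    exact (smul_eq_zero.1 hk).resolve_left (by exact_mod_cast Fintype.card_ne_zero)
  refine ⟨LinearMap.ker P, subRep ρ _ hW, ?_, ?_⟩
  · by_contra! hc
    obtain ⟨g, hg⟩ := hρ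
    refine hg (LinearMap.ext fun v => ?_)
    have hk : ρ g v - v ∈ LinearMap.ker P := by
      rw [LinearMap.mem_ker, map_sub, hP, sub_self]
    have := hfix _ (fun h => congrArg Subtype.val (LinearMap.congr_fun (hc h) ⟨_, hk⟩)) hk
    exact sub_eq_zero.1 this
  · rw [eq_bot_iff]
    intro w hw
    rw [Submodule.mem_bot]
    exact Subtype.ext (hfix w (fun g => congrArg Subtype.val (hw g (by simp))) w.2)

end Bound

/-! ### Nontrivial representations of the alternating group have dimension at least `n - 1` -/

section MainBound

variable {α : Type} [Fintype α] [DecidableEq α]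
  {V : Type} [AddCommGroup V] [Module ℂ V] [FiniteDimensional ℂ V]
  (ρ : Representation ℂ (alternatingGroup α) V)

theorem tri_commute {a b c : α} (hab : a ≠ b) (hbc : b ≠ c) (hac : a ≠ c)
    {g : alternatingGroup α} (hg : ∀ x ∉ ({a, b, c}ᶜ : Finset α), (g : Perm α) x = x) :
    tri a b c hab hbc * g = g * tri a b c hab hbc := by
  have ha := hg a (by simp)
  have hb := hg b (by simp)
  have hc := hg c (by simp)
  have hinj := (g : Perm α).injective
  ext x
  simp only [Subgroup.coe_mul, Perm.mul_apply, tri_apply]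
  have h1 : (g : Perm α) x = a ↔ x = a := ⟨fun h => hinj (h.trans ha.symm), fun h => h ▸ ha⟩
  have h2 : (g : Perm α) x = b ↔ x = b := ⟨fun h => hinj (h.trans hb.symm), fun h => h ▸ hb⟩
  have h3 : (g : Perm α) x = c ↔ x = c := ⟨fun h => hinj (h.trans hc.symm), fun h => h ▸ hc⟩
  grind

theorem eigenspace_stable {a b c : α} (hab : a ≠ b) (hbc : b ≠ c) (hac : a ≠ c)
    {g : alternatingGroup α} (hg : ∀ x ∉ ({a, b, c}ᶜ : Finset α), (g : Perm α) x = x) (μ : ℂ)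
    {v : V} (hv : v ∈ End.eigenspace (ρ (tri a b c hab hbc)) μ) :
    ρ g v ∈ End.eigenspace (ρ (tri a b c hab hbc)) μ := by
  rw [End.mem_eigenspace_iff] at hv ⊢
  rw [← rho_mul, tri_commute hab hbc hac hg, rho_mul, hv, map_smul]

variable {ω : ℂ}

/-- On seven letters and in dimension at most five, the nontrivial eigenspaces of `(a b c)` are fixed by
the 3-cycle `(e f g)` disjoint from it. The Klein four-group of `{d, e, f, g}` must act nontrivially on the
fixed space of `(a b c)`, so all three eigenvalues of `(e f g)` occur there; since both
3-cycles have fixed spaces of the same dimension, this leaves no room for `(e f g)` to act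
nontrivially on the other eigenspaces of `(a b c)`. -/
theorem eigenspace_le_seven (hn : Fintype.card α = 7) (hV : finrank ℂ V ≤ 5)
    (hρ : ∃ g, ρ g ≠ 1) (hω : IsPrimitiveRoot ω 3)
    {a b c d e f g : α} (hab : a ≠ b) (hbc : b ≠ c) (hac : a ≠ c) (hde : d ≠ e) (hfg : f ≠ g)
    (hdf : d ≠ f) (hdg : d ≠ g) (hef : e ≠ f) (heg : e ≠ g)
    (hcompl : ({a, b, c}ᶜ : Finset α) = {d, e, f, g}) :
    End.eigenspace (ρ (tri a b c hab hbc)) ω ≤ fixOn ρ {e, f, g} ∧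
    End.eigenspace (ρ (tri a b c hab hbc)) (ω ^ 2) ≤ fixOn ρ {e, f, g} := by
  set C := ρ (tri a b c hab hbc) with hC
  have hm := eigenspace_pos ρ hω hab hbc hac (by omega) hρ
  obtain ⟨hm2, hdim⟩ := finrank_eigenspaces ρ hω hab hbc hac (by omega)
  rw [← hC] at hm hm2 hdim
  have hmem : ∀ x, x ∈ ({a, b, c}ᶜ : Finset α) ↔ x ∈ ({d, e, f, g} : Finset α) := by
    rw [hcompl]; simp
  -- the Klein four-group, and the 3-cycle normalising it, preserve the eigenspaces of `C`
  have sx : ∀ μ, ∀ v ∈ End.eigenspace C μ, ρ (dbl d e f g hde hfg) v ∈ End.eigenspace C μ :=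
    fun μ v hv => eigenspace_stable ρ hab hbc hac
      (fun x hx => by rw [hmem] at hx; rw [dbl_apply]; grind) μ hv
  have sy : ∀ μ, ∀ v ∈ End.eigenspace C μ, ρ (dbl d f e g hdf heg) v ∈ End.eigenspace C μ :=
    fun μ v hv => eigenspace_stable ρ hab hbc hac
      (fun x hx => by rw [hmem] at hx; rw [dbl_apply]; grind) μ hv
  have st : ∀ μ, ∀ v ∈ End.eigenspace C μ, ρ (tri e f g hef hfg) v ∈ End.eigenspace C μ :=
    fun μ v hv => eigenspace_stable ρ hab hbc hac
      (fun x hx => by rw [hmem] at hx; rw [tri_apply]; grind) μ hv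
  have hthree : ∀ μ, (∃ w ∈ End.eigenspace C μ, ρ (dbl d e f g hde hfg) w ≠ w) →
      ∃ u ∈ End.eigenspace C μ, LinearIndependent ℂ
      ![u, ρ (tri e f g hef hfg) u, ρ (tri e f g hef hfg) (ρ (tri e f g hef hfg) u)] :=
    fun μ h => exists_three_of_dbl ρ hde hfg hdf hdg hef heg _ (sx μ) (sy μ) h
  have hthree' : ∀ μ, (∃ w ∈ End.eigenspace C μ, ρ (dbl d e f g hde hfg) w ≠ w) →
      3 ≤ finrank ℂ (End.eigenspace C μ) := by
    intro μ h
    obtain ⟨u, hu, hli⟩ := hthree μ h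
    exact three_le_finrank_of_indep hu (st μ _ hu) (st μ _ (st μ _ hu)) hli
  have t1 : ∀ w ∈ End.eigenspace C ω, ρ (dbl d e f g hde hfg) w = w := by
    by_contra! h
    have := hthree' ω h
    omega
  have t2 : ∀ w ∈ End.eigenspace C (ω ^ 2), ρ (dbl d e f g hde hfg) w = w := by
    by_contra! h
    have := hthree' (ω ^ 2) h
    omega
  have hC3 : C ^ 3 = 1 := rho_tri_cube ρ hab hbc hac
  have hex : ∃ w ∈ End.eigenspace C 1, ρ (dbl d e f g hde hfg) w ≠ w := by
    by_contra! h
    -- otherwise the double transposition fixes all three eigenspaces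
    let U : Submodule ℂ V := End.eigenspace (ρ (dbl d e f g hde hfg)) 1
    have hU : ∀ w, w ∈ U ↔ ρ (dbl d e f g hde hfg) w = w := by
      intro w; simp only [U, End.mem_eigenspace_iff, one_smul]
    have hcomm : tri a b c hab hbc * dbl d e f g hde hfg =
        dbl d e f g hde hfg * tri a b c hab hbc :=
      tri_commute hab hbc hac (fun x hx => by rw [hmem] at hx; rw [dbl_apply]; grind)
    have hCU : ∀ u ∈ U, C u ∈ U := by
      intro u hu
      rw [hU] at hu ⊢
      rw [hC, ← rho_mul, ← hcomm, rho_mul, hu]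
    have e1 := finrank_restrict_three C hC3 hω U hCU
    rw [inf_eq_left.2 (fun w hw => (hU w).2 (h w hw)),
      inf_eq_left.2 (fun w hw => (hU w).2 (t1 w hw)),
      inf_eq_left.2 (fun w hw => (hU w).2 (t2 w hw)), ← finrank_eq_three C hC3 hω] at e1
    have e2 := Submodule.eq_top_of_finrank_eq e1
    obtain ⟨w, hw⟩ := exists_ne_of_dbl ρ (by omega) hρ hde hfg hdf hdg
    exact hw ((hU w).1 (e2 ▸ trivial))
  obtain ⟨u, hu, hli⟩ := hthree 1 hex
  have hf1 := hthree' 1 hex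
  rw [← eigenspace_one_eq_fixOn ρ hab hbc hac, ← hC] at hdim
  set T := ρ (tri e f g hef hfg) with hT
  have hT3 : T ^ 3 = 1 := rho_tri_cube ρ hef hfg heg
  have hTTT : T (T (T u)) = u := by
    have := LinearMap.congr_fun hT3 u
    simpa [pow_succ] using this
  have hpos : ∀ μ : ℂ, μ ^ 3 = 1 →
      0 < finrank ℂ (End.eigenspace T μ ⊓ End.eigenspace C 1 : Submodule ℂ V) := by
    intro μ hμ
    rw [Module.finrank_pos_iff, Submodule.nontrivial_iff_ne_bot]
    intro hbot
    have hmemb : u + μ ^ 2 • T u + μ • T (T u) ∈ End.eigenspace T μ ⊓ End.eigenspace C 1 := by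
      refine ⟨?_, ?_⟩
      · rw [SetLike.mem_coe, End.mem_eigenspace_iff]
        simp only [map_add, map_smul, hTTT]
        have : μ • (u + μ ^ 2 • T u + μ • T (T u)) =
          μ • u + (μ ^ 3) • T u + μ ^ 2 • T (T u) := by module
        rw [this, hμ]
        module
      · exact Submodule.add_mem _ (Submodule.add_mem _ hu (Submodule.smul_mem _ _ (st 1 _ hu)))
          (Submodule.smul_mem _ _ (st 1 _ (st 1 _ hu)))
    rw [hbot, Submodule.mem_bot] at hmemb
    have := Fintype.linearIndependent_iff.1 hli ![1, μ ^ 2, μ]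
      (by simpa [Fin.sum_univ_three] using hmemb) 0
    simp at this
  have s1 := finrank_restrict_three T hT3 hω (End.eigenspace C 1) (st 1)
  have p0 := hpos 1 (by simp)
  have p1 := hpos ω hω.pow_eq_one
  have p2 := hpos (ω ^ 2) (by rw [← pow_mul, mul_comm, pow_mul, hω.pow_eq_one, one_pow])
  have hT1 := eigenspace_one_eq_fixOn ρ hef hfg heg
  have hC1 := eigenspace_one_eq_fixOn ρ hab hbc hac
  rw [← hT] at hT1
  rw [← hC] at hC1
  have hfe : finrank ℂ (End.eigenspace T 1) = finrank ℂ (End.eigenspace C 1) := by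
    rw [hT1, hC1]
    apply finrank_fixOn_eq ρ (by omega)
    rw [Finset.card_eq_three.2 ⟨e, f, g, hef, heg, hfg, rfl⟩,
      Finset.card_eq_three.2 ⟨a, b, c, hab, hac, hbc, rfl⟩]
  have hCT : ∀ v ∈ End.eigenspace T 1, C v ∈ End.eigenspace T 1 := by
    intro v hv
    have hmem2 : ∀ x, x ∈ ({e, f, g}ᶜ : Finset α) ↔ ¬ (x = e ∨ x = f ∨ x = g) := by simp
    refine eigenspace_stable ρ hef hfg heg (fun x hx => ?_) 1 hv
    rw [hmem2, not_not] at hx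
    have : x ∈ ({a, b, c}ᶜ : Finset α) := by rw [hmem]; simp; tauto
    rw [tri_apply]
    simp only [Finset.mem_compl, Finset.mem_insert, Finset.mem_singleton, not_or] at this
    grind
  have s2 := finrank_restrict_three C hC3 hω (End.eigenspace T 1) hCT
  rw [inf_comm (a := End.eigenspace C 1)] at s2
  have q1 := Submodule.finrank_mono
    (inf_le_left : End.eigenspace C ω ⊓ End.eigenspace T 1 ≤ End.eigenspace C ω)
  have q2 := Submodule.finrank_mono
    (inf_le_left : End.eigenspace C (ω ^ 2) ⊓ End.eigenspace T 1 ≤ End.eigenspace C (ω ^ 2))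
  rw [← hT1]
  constructor
  · exact inf_eq_left.1 (Submodule.eq_of_le_of_finrank_eq inf_le_left (by omega))
  · exact inf_eq_left.1 (Submodule.eq_of_le_of_finrank_eq inf_le_left (by omega))

end MainBound

/-- Nontrivial representations of the alternating group on `n ≥ 7` letters have dimension at least
`n - 1`. In a smaller representation without invariants, each eigenspace of a 3-cycle is a
representation of the alternating group on the other `n - 3` letters, and it is nontrivial for the
eigenvalue `1`. If it were nontrivial for another eigenvalue, the dimension would be at least
three times the lower bound for `n - 3` letters, which is too much; so `dim_of_standard` applies.
For `n = 7` the group on four letters is not simple and `eigenspace_le_seven` takes over. -/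
theorem card_le_of_eq (n : ℕ) (hn : 7 ≤ n) : ∀ (α : Type) [Fintype α] [DecidableEq α]
    (V : Type) [AddCommGroup V] [Module ℂ V] [FiniteDimensional ℂ V]
    (ρ : Representation ℂ (alternatingGroup α) V), Fintype.card α = n → (∃ g, ρ g ≠ 1) →
    n ≤ finrank ℂ V + 1 := by
  induction n using Nat.strong_induction_on with
  | _ n ih =>
  intro α _ _ V₀ _ _ _ ρ₀ hcard hρ₀
  obtain ⟨V, ρ, hρ, h0⟩ := noFixed_reduction ρ₀ hρ₀
  refine le_trans ?_ (Nat.add_le_add_right V.finrank_le 1)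
  have hω := Complex.isPrimitiveRoot_exp 3 (by norm_num)
  set ω := Complex.exp (2 * Real.pi * Complex.I / (3 : ℕ))
  by_contra hlt
  have hlt' : finrank ℂ V + 2 ≤ n := by omega
  apply hlt
  rw [← hcard]
  refine dim_of_standard ρ h0 (by omega) hρ hω ?_
  intro a b c hab hbc hac
  have hc3 : ({a, b, c} : Finset α).card = 3 := Finset.card_eq_three.2 ⟨a, b, c, hab, hac, hbc, rfl⟩
  have hcc : ({a, b, c}ᶜ : Finset α).card = n - 3 := by rw [Finset.card_compl, hc3, hcard]
  by_cases h7 : n = 7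
  · rw [h7] at hcc
    obtain ⟨d, e, f, g, hde, hdf, hdg, hef, heg, hfg, hcompl⟩ := Finset.card_eq_four.1 hcc
    obtain ⟨k1, k2⟩ := eigenspace_le_seven ρ (by omega) (by omega) hρ hω hab hbc hac hde hfg hdf
      hdg hef heg hcompl
    obtain ⟨l1, l2⟩ := eigenspace_le_seven ρ (by omega) (by omega) hρ hω hab hbc hac hdg.symm hef
      heg.symm hfg.symm hde hdf (hcompl.trans (by ext; simp; tauto))
    have key : fixOn ρ {e, f, g} ⊓ fixOn ρ {d, e, f} ≤ fixOn ρ {d, e, f, g} := by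
      rintro v ⟨h1, h2⟩
      exact fixOn_insert ρ (S := {e, f}) (by intro x; simp; tauto)
        (by rw [Finset.card_pair hef]) h1 h2
    rw [hcompl]
    exact ⟨(le_inf k1 l1).trans key, (le_inf k2 l2).trans key⟩
  · -- a lower bound for the nontrivial representations of the alternating group on `n - 3` letters
    obtain ⟨B, hB3, hB⟩ : ∃ B : ℕ, n ≤ 3 * B + 1 ∧
        ∀ (W : Type) [AddCommGroup W] [Module ℂ W] [FiniteDimensional ℂ W]
        (σ : Representation ℂ (alternatingGroup ({a, b, c}ᶜ : Finset α)) W), (∃ g, σ g ≠ 1) →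
        B ≤ finrank ℂ W := by
      by_cases h10 : 10 ≤ n
      · refine ⟨n - 4, by omega, fun W _ _ _ σ hσ => ?_⟩
        have := ih (n - 3) (by omega) (by omega) _ W σ (by rw [Fintype.card_coe, hcc]) hσ
        omega
      · refine ⟨3, by omega, fun W _ _ _ σ hσ => ?_⟩
        exact three_le σ (by rw [Fintype.card_coe, hcc]; omega) hσ
    have hrel : ∀ μ, ¬ End.eigenspace (ρ (tri a b c hab hbc)) μ ≤ fixOn ρ ({a, b, c}ᶜ : Finset α) →
        B ≤ finrank ℂ (End.eigenspace (ρ (tri a b c hab hbc)) μ) := fun μ h =>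
      relative_bound ρ _ hB _ (fun g hg w hw => eigenspace_stable ρ hab hbc hac hg μ hw) h
    have hf1 := hrel 1 (by
      rw [eigenspace_one_eq_fixOn ρ hab hbc hac]
      exact not_fixOn_le_compl ρ h0 (by omega) hc3
        (fixOn_three_ne_bot ρ (by omega) hρ hab hbc hac))
    rw [eigenspace_one_eq_fixOn ρ hab hbc hac] at hf1
    obtain ⟨hm2, hdim⟩ := finrank_eigenspaces ρ hω hab hbc hac (by omega)
    constructor
    · by_contra hc
      have := hrel _ hc
      omega
    · by_contra hc
      have := hrel _ hc
      omega

/-- The bound `card_le_of_eq` for a stable subspace. -/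
theorem card_le_finrank {α : Type} [Fintype α] [DecidableEq α] (hn : 7 ≤ Fintype.card α)
    {V : Type} [AddCommGroup V] [Module ℂ V] [FiniteDimensional ℂ V]
    (ρ : Representation ℂ (alternatingGroup α) V) (W : Submodule ℂ V)
    (hW : ∀ g, ∀ w ∈ W, ρ g w ∈ W) (h : ∃ g, ∃ w ∈ W, ρ g w ≠ w) :
    Fintype.card α ≤ finrank ℂ W + 1 := by
  refine card_le_of_eq _ hn α W (subRep ρ W hW) rfl ?_
  obtain ⟨g, w, hw, hne⟩ := h
  exact ⟨g, fun h => hne (congrArg Subtype.val (LinearMap.congr_fun h ⟨w, hw⟩))⟩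

/-! ### Eigenspaces of a 5-cycle on seven letters -/

section FiveCycle

/-- A 5-cycle on seven letters. -/
def five : alternatingGroup (Fin 7) :=
  tri 0 1 2 (by decide) (by decide) * tri 2 3 4 (by decide) (by decide)

/-- An even permutation conjugating `five` to its square. -/
def fiveConj : alternatingGroup (Fin 7) :=
  dbl 1 2 2 4 (by decide) (by decide) * dbl 4 3 5 6 (by decide) (by decide)

theorem five_pow : five ^ 5 = 1 := by
  apply Subtype.ext
  apply Equiv.ext
  decide

theorem five_ne_one : five ≠ 1 := by
  intro h
  have := congrArg (fun g : alternatingGroup (Fin 7) => (g : Perm (Fin 7)) 0) h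
  exact absurd this (by decide)

theorem five_sq_conj : five * five * fiveConj = fiveConj * five := by
  apply Subtype.ext
  apply Equiv.ext
  decide

variable {V : Type} [AddCommGroup V] [Module ℂ V] [FiniteDimensional ℂ V]
  (ρ : Representation ℂ (alternatingGroup (Fin 7)) V) {ζ : ℂ}

/-- The four nontrivial eigenspaces of a 5-cycle have the same positive dimension, since the
5-cycle is conjugate to its square. -/
theorem finrank_five (hζ : IsPrimitiveRoot ζ 5) (hρ : ∃ g, ρ g ≠ 1) :
    finrank ℂ V = finrank ℂ (End.eigenspace (ρ five) 1) +
      4 * finrank ℂ (End.eigenspace (ρ five) ζ) ∧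
    0 < finrank ℂ (End.eigenspace (ρ five) ζ) := by
  have h5 : (ρ five) ^ 5 = 1 := by rw [← map_pow, five_pow, map_one]
  have h1 := finrank_eq_sum_eigenspace _ (by norm_num) h5 hζ
  obtain ⟨d, hd⟩ : ∃ d : ℂ → ℕ, ∀ μ, finrank ℂ (End.eigenspace (ρ five) μ) = d μ :=
    ⟨_, fun _ => rfl⟩
  -- `five` is conjugate to its square and equals the cube of its square, so `fiveConj` carries
  -- the eigenspace of `μ` into that of `μ ^ 3`
  have hle : ∀ μ : ℂ, d μ ≤ d (μ ^ 3) := by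
    intro μ
    rw [← hd, ← hd]
    refine LinearMap.finrank_le_finrank_of_injective (f := (ρ fiveConj).restrict
      fun v hv => ?_) ?_
    · rw [End.mem_eigenspace_iff] at hv ⊢
      have e1 : ∀ w, ρ five (ρ five (ρ fiveConj w)) = ρ fiveConj (ρ five w) := by
        intro w; rw [← rho_mul, ← rho_mul, five_sq_conj, rho_mul]
      have e2 : ρ five (ρ five (ρ fiveConj v)) = μ • ρ fiveConj v := by
        rw [e1, hv, map_smul]
      have e3 : ∀ w, ρ five (ρ five (ρ five (ρ five (ρ five w)))) = w := by
        intro w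
        have := LinearMap.congr_fun h5 w
        simpa [pow_succ] using this
      have e4 := e3 (ρ five (ρ fiveConj v))
      rw [e2, map_smul, map_smul, e2, smul_smul, map_smul, map_smul, e2, smul_smul] at e4
      rw [← e4]
      congr 1
      ring
    · intro v w hvw
      exact Subtype.ext (rho_injective ρ _ (congrArg Subtype.val hvw))
  have hp := hζ.pow_eq_one
  have a1 := hle ζ
  have a2 := hle (ζ ^ 3)
  have a3 := hle (ζ ^ 4)
  have a4 := hle (ζ ^ 2)
  rw [show (ζ ^ 3) ^ 3 = ζ ^ 5 * ζ ^ 4 by ring, hp, one_mul] at a2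
  rw [show (ζ ^ 4) ^ 3 = ζ ^ 5 * ζ ^ 5 * ζ ^ 2 by ring, hp, one_mul, one_mul] at a3
  rw [show (ζ ^ 2) ^ 3 = ζ ^ 5 * ζ by ring, hp, one_mul] at a4
  simp only [hd] at h1 ⊢
  simp only [Fin.sum_univ_five] at h1
  simp only [Fin.val_zero, pow_zero, Fin.val_one, pow_one] at h1
  change finrank ℂ V = d 1 + d ζ + d (ζ ^ 2) + d (ζ ^ 3) + d (ζ ^ 4) at h1
  have hV : finrank ℂ V = d 1 + 4 * d ζ := by omega
  refine ⟨hV, ?_⟩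
  by_contra h0
  have h2 : finrank ℂ (End.eigenspace (ρ five) 1) = finrank ℂ V := by rw [hd]; omega
  have h3 := Submodule.eq_top_of_finrank_eq h2
  refine five_ne_one (faithful ρ (by simp) hρ (LinearMap.ext fun v => ?_))
  have : v ∈ End.eigenspace (ρ five) 1 := by rw [h3]; trivial
  simpa [End.mem_eigenspace_iff] using this

theorem finrank_five_sub (hζ : IsPrimitiveRoot ζ 5) (W : Submodule ℂ V)
    (hW : ∀ g, ∀ w ∈ W, ρ g w ∈ W) (h : ∃ g, ∃ w ∈ W, ρ g w ≠ w) :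
    finrank ℂ W = finrank ℂ (End.eigenspace (ρ five) 1 ⊓ W : Submodule ℂ V) +
      4 * finrank ℂ (End.eigenspace (ρ five) ζ ⊓ W : Submodule ℂ V) ∧
    0 < finrank ℂ (End.eigenspace (ρ five) ζ ⊓ W : Submodule ℂ V) := by
  obtain ⟨g, w, hw, hne⟩ := h
  have := finrank_five (subRep ρ W hW) hζ
    ⟨g, fun h => hne (congrArg Subtype.val (LinearMap.congr_fun h ⟨w, hw⟩))⟩
  rw [← finrank_eigenspace_restrict _ _ (hW five), ← finrank_eigenspace_restrict _ _ (hW five)]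
  exact this

end FiveCycle

/-! ### Actions of a group commuting with the alternating group -/

section Commuting

variable {V : Type} [AddCommGroup V] [Module ℂ V] [FiniteDimensional ℂ V]

/-- An operator of finite order which is not scalar on a stable subspace has two distinct eigenvalues
there. -/
theorem exists_two_eigenvalues (t : End ℂ V) {m : ℕ} (hm : m ≠ 0) (ht : t ^ m = 1)
    (U : Submodule ℂ V) (hU : ∀ u ∈ U, t u ∈ U) (hns : ¬ ∃ c : ℂ, ∀ u ∈ U, t u = c • u) :
    ∃ μ ν : ℂ, μ ≠ ν ∧ t.eigenspace μ ⊓ U ≠ ⊥ ∧ t.eigenspace ν ⊓ U ≠ ⊥ := by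
  have hm' : (t.restrict hU) ^ m = 1 := by
    rw [Module.End.pow_restrict m]
    ext u
    simp [ht]
  have htop := iSup_eigenspace_of_pow_eq_one _ hm hm'
  have hE : ∀ μ, End.eigenspace (t.restrict hU) μ ≠ ⊥ → t.eigenspace μ ⊓ U ≠ ⊥ := by
    intro μ h hb
    obtain ⟨u, hu, hu0⟩ := Submodule.exists_mem_ne_zero_of_ne_bot h
    rw [End.mem_eigenspace_iff] at hu
    have : (u : V) ∈ t.eigenspace μ ⊓ U :=
      ⟨End.mem_eigenspace_iff.2 (congrArg Subtype.val hu), u.2⟩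
    rw [hb, Submodule.mem_bot] at this
    exact hu0 (Subtype.ext this)
  -- otherwise all eigenvectors belong to one eigenvalue
  have hone : ∀ μ : ℂ, (∀ ν, ν ≠ μ → End.eigenspace (t.restrict hU) ν = ⊥) → False := by
    intro μ h
    refine hns ⟨μ, fun u hu => ?_⟩
    have h1 : (⊤ : Submodule ℂ U) ≤ End.eigenspace (t.restrict hU) μ := by
      rw [← htop]
      refine iSup_le fun ν => ?_
      by_cases hν : ν = μ
      · rw [hν]
      · rw [h ν hν]; exact bot_le
    exact congrArg Subtype.val (End.mem_eigenspace_iff.1 (h1 (Submodule.mem_top (x := ⟨u, hu⟩))))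
  obtain ⟨μ, -, hμ⟩ : ∃ μ : ℂ, μ ≠ 0 ∧ End.eigenspace (t.restrict hU) μ ≠ ⊥ := by
    by_contra! h
    exact hone 0 h
  obtain ⟨ν, hν, hν₂⟩ : ∃ ν : ℂ, ν ≠ μ ∧ End.eigenspace (t.restrict hU) ν ≠ ⊥ := by
    by_contra! h
    exact hone μ h
  exact ⟨μ, ν, hν.symm, hE _ hμ, hE _ hν₂⟩

/-- The vectors fixed by all elements of a set of group elements. -/
def fixSet {G : Type} [Group G] (ρ : Representation ℂ G V) (T : Set G) : Submodule ℂ V where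
  carrier := {v | ∀ g ∈ T, ρ g v = v}
  add_mem' hv hw g hg := by rw [map_add, hv g hg, hw g hg]
  zero_mem' g _ := map_zero _
  smul_mem' c v hv g hg := by rw [map_smul, hv g hg]

theorem mem_fixSet {G : Type} [Group G] {ρ : Representation ℂ G V} {T : Set G} {v : V} :
    v ∈ fixSet ρ T ↔ ∀ g ∈ T, ρ g v = v := Iff.rfl

theorem fixSet_singleton {G : Type} [Group G] (ρ : Representation ℂ G V) (g : G) :
    fixSet ρ {g} = End.eigenspace (ρ g) 1 := by
  ext v
  simp [mem_fixSet]

/-- If the alternating group on seven letters acts without invariants on a twelve-dimensional space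
and a commuting operator `θ q₀` has two eigenvalues, then `Q` acts faithfully on the fixed space of
a 5-cycle, which has dimension at most six. Each eigenspace of an element of `Q` is a
representation of dimension at least six, so exactly six when there are two of them; the 5-cycle
then fixes a nonzero vector in it because `6` is not a multiple of `4`. -/
theorem faithful_of_nonscalar {Q : Type} [Group Q] [Finite Q] (θ : Representation ℂ Q V)
    (hθ : ∀ q, θ q = 1 → q = 1) (τ : Representation ℂ (alternatingGroup (Fin 7)) V)
    (hcomm : ∀ g q v, τ g (θ q v) = θ q (τ g v))
    (hV : finrank ℂ V = 12) (hfix : ∀ v, (∀ g, τ g v = v) → v = 0)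
    {q₀ : Q} {μ ν : ℂ} (hμν : μ ≠ ν) (hμ : End.eigenspace (θ q₀) μ ≠ ⊥)
    (hν : End.eigenspace (θ q₀) ν ≠ ⊥) :
    finrank ℂ (fixSet τ {five}) ≤ 6 ∧
      ∀ q, (∀ v ∈ fixSet τ {five}, θ q v = v) → q = 1 := by
  have hζ := Complex.isPrimitiveRoot_exp 5 (by norm_num)
  set ζ := Complex.exp (2 * Real.pi * Complex.I / (5 : ℕ))
  have hst : ∀ q μ g, ∀ w ∈ End.eigenspace (θ q) μ, τ g w ∈ End.eigenspace (θ q) μ := by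
    intro q μ g w hw
    rw [End.mem_eigenspace_iff] at hw ⊢
    rw [← hcomm, hw, map_smul]
  have hnt : ∀ W : Submodule ℂ V, W ≠ ⊥ → ∃ g, ∃ w ∈ W, τ g w ≠ w := by
    intro W hW
    obtain ⟨w, hw, hw0⟩ := Submodule.exists_mem_ne_zero_of_ne_bot hW
    by_contra! h
    exact hw0 (hfix w fun g => h g w hw)
  have hsix : ∀ q μ, End.eigenspace (θ q) μ ≠ ⊥ → 6 ≤ finrank ℂ (End.eigenspace (θ q) μ) := by
    intro q μ h
    have := card_le_finrank (by simp) τ _ (hst q μ) (hnt _ h)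
    simp at this
    omega
  have hpair : ∀ q {μ ν : ℂ}, μ ≠ ν → ∀ X : Submodule ℂ V,
      finrank ℂ (X ⊓ End.eigenspace (θ q) μ : Submodule ℂ V) +
      finrank ℂ (X ⊓ End.eigenspace (θ q) ν : Submodule ℂ V) ≤ finrank ℂ X := by
    intro q μ ν hne X
    have h1 := Submodule.finrank_sup_add_finrank_inf_eq
      (X ⊓ End.eigenspace (θ q) μ) (X ⊓ End.eigenspace (θ q) ν)
    have h2 : X ⊓ End.eigenspace (θ q) μ ⊓ (X ⊓ End.eigenspace (θ q) ν) = ⊥ := by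
      have := ((End.eigenspaces_iSupIndep (θ q)).pairwiseDisjoint hne).eq_bot
      rw [eq_bot_iff, ← this]
      exact inf_le_inf inf_le_right inf_le_right
    have h3 := Submodule.finrank_mono (sup_le (inf_le_left : X ⊓ End.eigenspace (θ q) μ ≤ X)
      (inf_le_left : X ⊓ End.eigenspace (θ q) ν ≤ X))
    rw [h2, finrank_bot] at h1
    omega
  have hpairtop : ∀ q {μ ν : ℂ}, μ ≠ ν → finrank ℂ (End.eigenspace (θ q) μ) +
      finrank ℂ (End.eigenspace (θ q) ν) ≤ 12 := by
    intro q μ ν hne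
    have := hpair q hne ⊤
    rwa [top_inf_eq, top_inf_eq, finrank_top, hV] at this
  rw [fixSet_singleton]
  obtain ⟨a1, a2⟩ := finrank_five_sub τ hζ _ (hst q₀ μ) (hnt _ hμ)
  obtain ⟨b1, b2⟩ := finrank_five_sub τ hζ _ (hst q₀ ν) (hnt _ hν)
  have c1 := hpair q₀ hμν (End.eigenspace (τ five) ζ)
  have hτ : ∃ g, τ g ≠ 1 := by
    obtain ⟨g, w, -, h⟩ := hnt _ hμ
    exact ⟨g, fun e => h (by rw [e]; rfl)⟩
  obtain ⟨d1, d2⟩ := finrank_five τ hζ hτ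
  rw [hV] at d1
  have s1 := hsix _ _ hμ
  have s2 := hsix _ _ hν
  have s3 := hpairtop q₀ hμν
  have e1 : End.eigenspace (τ five) 1 ≠ ⊥ := by
    intro h
    rw [h, bot_inf_eq, finrank_bot] at a1
    omega
  refine ⟨by omega, fun q hq => ?_⟩
  by_contra hq1
  have hle : End.eigenspace (τ five) 1 ≤ End.eigenspace (θ q) 1 := by
    intro v hv
    rw [End.mem_eigenspace_iff, one_smul]
    exact hq v hv
  have hne1 : End.eigenspace (θ q) 1 ≠ ⊥ := fun h => e1 (by rwa [h, le_bot_iff] at hle)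
  obtain ⟨lam, hlam, hlam'⟩ : ∃ lam : ℂ, lam ≠ 1 ∧ End.eigenspace (θ q) lam ≠ ⊥ := by
    by_contra! h
    apply hq1
    apply hθ
    have htop := iSup_eigenspace_of_pow_eq_one (θ q) (m := Nat.card Q) Nat.card_pos.ne'
      (by rw [← map_pow, pow_card_eq_one', map_one])
    have h1 : (⊤ : Submodule ℂ V) ≤ End.eigenspace (θ q) 1 := by
      rw [← htop]
      refine iSup_le fun κ => ?_
      by_cases hκ : κ = 1
      · rw [hκ]
      · rw [h κ hκ]; exact bot_le
    ext v
    have := h1 (Submodule.mem_top (x := v))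
    rwa [End.mem_eigenspace_iff, one_smul] at this
  have s4 := hsix _ _ hne1
  have s5 := hsix _ _ hlam'
  have s6 := hpairtop q hlam.symm
  obtain ⟨f1, -⟩ := finrank_five_sub τ hζ _ (hst q lam) (hnt _ hlam')
  have : End.eigenspace (τ five) 1 ⊓ End.eigenspace (θ q) lam = ⊥ := by
    rw [eq_bot_iff, ← ((End.eigenspaces_iSupIndep (θ q)).pairwiseDisjoint hlam.symm).eq_bot]
    exact inf_le_inf_right _ hle
  rw [this, finrank_bot] at f1
  omega

/-- Some set of even permutations has a small common fixed space on which `Q` acts faithfully. -/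
theorem exists_faithful_fixSet {Q : Type} [Group Q] [Finite Q]
    (hQ : ∀ N : Subgroup Q, N.Normal → N ≠ ⊥ → N ⊓ commutator Q ≠ ⊥)
    {n : ℕ} (hn : 7 ≤ n) (hV : finrank ℂ V = n + 5)
    (τ : Representation ℂ (alternatingGroup (Fin n)) V) (θ : Representation ℂ Q V)
    (hcomm : ∀ g q v, τ g (θ q v) = θ q (τ g v)) (hτ : ∃ g, τ g ≠ 1)
    (hθ : ∀ q, θ q = 1 → q = 1) : ∃ T : Set (alternatingGroup (Fin n)),
    finrank ℂ (fixSet τ T) ≤ 6 ∧ ∀ q, (∀ v ∈ fixSet τ T, θ q v = v) → q = 1 := by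
  -- the unnormalised projection onto the invariants `F`, with kernel `U`
  let P : V →ₗ[ℂ] V := ∑ g, τ g
  have hP : ∀ g v, P (τ g v) = P v := by
    intro g v
    simp only [P, LinearMap.sum_apply, ← rho_mul]
    exact Fintype.sum_equiv (Equiv.mulRight g) _ _ (fun _ => rfl)
  have hP' : ∀ g v, τ g (P v) = P v := by
    intro g v
    simp only [P, LinearMap.sum_apply, map_sum, ← rho_mul]
    exact Fintype.sum_equiv (Equiv.mulLeft g) _ _ (fun _ => rfl)
  have hcP : ∀ q v, P (θ q v) = θ q (P v) := by
    intro q v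
    simp only [P, LinearMap.sum_apply, map_sum, hcomm]
  let F := fixSet τ Set.univ
  let U := LinearMap.ker P
  have hFP : ∀ v ∈ F, P v = (Fintype.card (alternatingGroup (Fin n)) : ℂ) • v := by
    intro v hv
    have hv' : ∀ g, τ g v = v := fun g => hv g (Set.mem_univ g)
    simp only [P, LinearMap.sum_apply, hv', Finset.sum_const, Finset.card_univ,
      ← Nat.cast_smul_eq_nsmul ℂ]
  have hN : (Fintype.card (alternatingGroup (Fin n)) : ℂ) ≠ 0 := by
    exact_mod_cast Fintype.card_ne_zero
  have hFU : ∀ v ∈ F, v ∈ U → v = 0 := by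
    intro v hv hk
    have := hFP v hv
    rw [LinearMap.mem_ker.1 hk] at this
    exact (smul_eq_zero.1 this.symm).resolve_left hN
  have hdec : ∀ v, ∃ f ∈ F, ∃ u ∈ U, v = f + u := by
    intro v
    have hf : (Fintype.card (alternatingGroup (Fin n)) : ℂ)⁻¹ • P v ∈ F :=
      F.smul_mem _ fun g _ => hP' g v
    refine ⟨_, hf, v - (Fintype.card (alternatingGroup (Fin n)) : ℂ)⁻¹ • P v, ?_, by simp⟩
    rw [LinearMap.mem_ker, map_sub, hFP _ hf, smul_smul, mul_inv_cancel₀ hN, one_smul, sub_self]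
  have hUτ : ∀ g, ∀ u ∈ U, τ g u ∈ U := fun g u hu => by
    rw [LinearMap.mem_ker] at hu ⊢; rw [hP, hu]
  have hUθ : ∀ q, ∀ u ∈ U, θ q u ∈ U := fun q u hu => by
    rw [LinearMap.mem_ker] at hu ⊢; rw [hcP, hu, map_zero]
  have hFθ : ∀ q, ∀ u ∈ F, θ q u ∈ F := fun q u hu g hg => by rw [hcomm, hu g hg]
  have hdim : finrank ℂ F + finrank ℂ U = n + 5 := by
    have h1 := Submodule.finrank_sup_add_finrank_inf_eq F U
    have h2 : F ⊓ U = ⊥ := by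
      rw [eq_bot_iff]
      rintro v ⟨h1, h2⟩
      exact hFU v h1 h2
    have h3 : F ⊔ U = ⊤ := by
      rw [eq_top_iff]
      rintro v -
      obtain ⟨f, hf, u, hu, rfl⟩ := hdec v
      exact Submodule.add_mem_sup hf hu
    rw [h2, h3, finrank_bot, finrank_top, hV] at h1
    omega
  have hbig : ∀ W ≤ U, W ≠ ⊥ → (∀ g, ∀ w ∈ W, τ g w ∈ W) → n ≤ finrank ℂ W + 1 := by
    intro W hWU hW hst
    have := card_le_finrank (by simpa using hn) τ W hst (by
      obtain ⟨w, hw, hw0⟩ := Submodule.exists_mem_ne_zero_of_ne_bot hW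
      by_contra! h
      exact hw0 (hFU w (fun g _ => h g w hw) (hWU hw)))
    simpa using this
  have hU0 : U ≠ ⊥ := by
    intro hU
    obtain ⟨g, hg⟩ := hτ
    refine hg (LinearMap.ext fun v => ?_)
    obtain ⟨f, hf, u, hu, rfl⟩ := hdec v
    rw [hU, Submodule.mem_bot] at hu
    rw [hu, add_zero]
    exact hf g (Set.mem_univ g)
  have hUdim := hbig U le_rfl hU0 hUτ
  by_cases hsc : ∀ q, ∃ c : ℂ, ∀ u ∈ U, θ q u = c • u
  · -- `Q` acts by scalars on `U`, hence `[Q, Q]` acts trivially there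
    refine ⟨Set.univ, by change finrank ℂ F ≤ 6; omega, fun q hq => ?_⟩
    let K : Subgroup Q := MonoidHom.ker (subRep θ F hFθ)
    let L : Subgroup Q := MonoidHom.ker (subRep θ U hUθ)
    have hL : commutator Q ≤ L := by
      rw [commutator_def, Subgroup.commutator_le]
      intro x _ y _
      rw [MonoidHom.mem_ker]
      obtain ⟨c, hc⟩ := hsc x
      obtain ⟨d, hd⟩ := hsc y
      have hxy : subRep θ U hUθ (x * y) = subRep θ U hUθ (y * x) := by
        ext u
        rw [map_mul, map_mul, Module.End.mul_apply, Module.End.mul_apply]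
        simp only [subRep_apply]
        rw [hc _ (hUθ y _ u.2), hd _ (hUθ x _ u.2), hc _ u.2, hd _ u.2, smul_comm]
      have : x * y * x⁻¹ * y⁻¹ = (x * y) * (y * x)⁻¹ := by group
      rw [commutatorElement_def, this, map_mul, hxy, ← map_mul, mul_inv_cancel, map_one]
    have hK : K = ⊥ := by
      by_contra hK
      apply hQ K (MonoidHom.normal_ker _) hK
      rw [eq_bot_iff]
      rintro x ⟨hxK, hxc⟩
      rw [Subgroup.mem_bot]
      apply hθ
      have hxL := MonoidHom.mem_ker.1 (hL hxc)
      have hxK' := MonoidHom.mem_ker.1 hxK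
      ext v
      obtain ⟨f, hf, u, hu, rfl⟩ := hdec v
      have e1 : θ x f = f := congrArg Subtype.val (LinearMap.congr_fun hxK' ⟨f, hf⟩)
      have e2 : θ x u = u := congrArg Subtype.val (LinearMap.congr_fun hxL ⟨u, hu⟩)
      rw [map_add, e1, e2]
      rfl
    have : q ∈ K := by
      rw [MonoidHom.mem_ker]
      ext v
      exact hq v v.2
    rwa [hK, Subgroup.mem_bot] at this
  · rw [not_forall] at hsc
    obtain ⟨q₀, hq₀⟩ := hsc
    obtain ⟨μ, ν, hne, hμ, hν⟩ := exists_two_eigenvalues (θ q₀) (m := Nat.card Q)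
      Nat.card_pos.ne' (by rw [← map_pow, pow_card_eq_one', map_one]) U (hUθ q₀) hq₀
    have hst : ∀ μ g, ∀ w ∈ End.eigenspace (θ q₀) μ ⊓ U, τ g w ∈ End.eigenspace (θ q₀) μ ⊓ U := by
      rintro μ g w ⟨h1, h2⟩
      refine ⟨?_, hUτ g w h2⟩
      rw [SetLike.mem_coe, End.mem_eigenspace_iff] at h1 ⊢
      rw [← hcomm, h1, map_smul]
    have b1 := hbig _ inf_le_right hμ (hst μ)
    have b2 := hbig _ inf_le_right hν (hst ν)
    have h1 := Submodule.finrank_sup_add_finrank_inf_eq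
      (End.eigenspace (θ q₀) μ ⊓ U) (End.eigenspace (θ q₀) ν ⊓ U)
    have h2 : End.eigenspace (θ q₀) μ ⊓ U ⊓ (End.eigenspace (θ q₀) ν ⊓ U) = ⊥ := by
      rw [eq_bot_iff, ← ((End.eigenspaces_iSupIndep (θ q₀)).pairwiseDisjoint hne).eq_bot]
      exact inf_le_inf inf_le_left inf_le_left
    have h3 := Submodule.finrank_mono (sup_le
      (inf_le_right : End.eigenspace (θ q₀) μ ⊓ U ≤ U)
      (inf_le_right : End.eigenspace (θ q₀) ν ⊓ U ≤ U))
    rw [h2, finrank_bot] at h1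
    -- two subrepresentations of dimension at least `n - 1` fit into dimension `n + 5` only if `n = 7`
    obtain rfl : n = 7 := by omega
    have hF0 : F = ⊥ := Submodule.finrank_eq_zero.1 (by omega)
    refine ⟨{five}, faithful_of_nonscalar θ hθ τ hcomm hV (fun v hv => ?_) hne
      (fun h => hμ (by rw [h, bot_inf_eq])) (fun h => hν (by rw [h, bot_inf_eq]))⟩
    rw [← Submodule.mem_bot ℂ, ← hF0]
    exact fun g _ => hv g

end Commuting

/-! ### Complexification of orthogonal representations -/

open Matrix

section Complexify

variable {G : Type} [Group G] {N : ℕ}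

/-- The complexification of a real orthogonal representation. -/
noncomputable def cRep (φ : G →* orthogonalGroup (Fin N) ℝ) :
    Representation ℂ G (Fin N → ℂ) :=
  ((Matrix.toLinAlgEquiv' : Matrix (Fin N) (Fin N) ℂ ≃ₐ[ℂ] _) : Matrix (Fin N) (Fin N) ℂ →* _).comp
    (((Complex.ofRealHom.mapMatrix : Matrix (Fin N) (Fin N) ℝ →+* Matrix (Fin N) (Fin N) ℂ) :
      Matrix (Fin N) (Fin N) ℝ →* Matrix (Fin N) (Fin N) ℂ).comp
      ((orthogonalGroup (Fin N) ℝ).subtype.comp φ))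

theorem cRep_apply (φ : G →* orthogonalGroup (Fin N) ℝ) (g : G) (v : Fin N → ℂ) (i : Fin N) :
    cRep φ g v i = ∑ j, (((φ g : Matrix (Fin N) (Fin N) ℝ) i j : ℝ) : ℂ) * v j := rfl

theorem cRep_re (φ : G →* orthogonalGroup (Fin N) ℝ) (g : G) (v : Fin N → ℂ) :
    (fun i => (cRep φ g v i).re) =
      (φ g : Matrix (Fin N) (Fin N) ℝ) *ᵥ (fun i => (v i).re) := by
  ext i
  simp [cRep_apply, Matrix.mulVec, dotProduct]

theorem cRep_im (φ : G →* orthogonalGroup (Fin N) ℝ) (g : G) (v : Fin N → ℂ) :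
    (fun i => (cRep φ g v i).im) =
      (φ g : Matrix (Fin N) (Fin N) ℝ) *ᵥ (fun i => (v i).im) := by
  ext i
  simp [cRep_apply, Matrix.mulVec, dotProduct]

theorem cRep_eq_iff (φ : G →* orthogonalGroup (Fin N) ℝ) (g : G) (v : Fin N → ℂ) :
    cRep φ g v = v ↔
      (φ g : Matrix (Fin N) (Fin N) ℝ) *ᵥ (fun i => (v i).re) = (fun i => (v i).re) ∧
      (φ g : Matrix (Fin N) (Fin N) ℝ) *ᵥ (fun i => (v i).im) = (fun i => (v i).im) := by
  rw [← cRep_re, ← cRep_im]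
  constructor
  · intro h
    rw [h]
    exact ⟨rfl, rfl⟩
  · rintro ⟨h1, h2⟩
    ext i
    exact Complex.ext (congrFun h1 i) (congrFun h2 i)

theorem eq_one_of_cRep (φ : G →* orthogonalGroup (Fin N) ℝ) (hφ : Function.Injective φ) (g : G)
    (h : cRep φ g = 1) : g = 1 := by
  apply hφ
  rw [map_one]
  apply Subtype.ext
  apply Matrix.toLin'.injective
  ext1 i
  ext1
  have := ((cRep_eq_iff φ g (fun j => ((Pi.single i 1 : Fin N → ℝ) j : ℂ))).1
    (by rw [h]; rfl)).1
  simpa using this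

/-- The real vectors fixed by all elements of a set of group elements. -/
def fixReal (φ : G →* orthogonalGroup (Fin N) ℝ) (T : Set G) : Submodule ℝ (Fin N → ℝ) where
  carrier := {v | ∀ g ∈ T, (φ g : Matrix (Fin N) (Fin N) ℝ) *ᵥ v = v}
  add_mem' hv hw g hg := by rw [mulVec_add, hv g hg, hw g hg]
  zero_mem' g _ := mulVec_zero _
  smul_mem' c v hv g hg := by rw [mulVec_smul, hv g hg]

theorem re_mem_fixReal {φ : G →* orthogonalGroup (Fin N) ℝ} {T : Set G} {v : Fin N → ℂ}
    (hv : v ∈ fixSet (cRep φ) T) : (fun i => (v i).re) ∈ fixReal φ T :=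
  fun g hg => ((cRep_eq_iff φ g v).1 (hv g hg)).1

theorem im_mem_fixReal {φ : G →* orthogonalGroup (Fin N) ℝ} {T : Set G} {v : Fin N → ℂ}
    (hv : v ∈ fixSet (cRep φ) T) : (fun i => (v i).im) ∈ fixReal φ T :=
  fun g hg => ((cRep_eq_iff φ g v).1 (hv g hg)).2

/-- A real basis of the real fixed space stays independent over `ℂ`. -/
theorem finrank_fixReal_le (φ : G →* orthogonalGroup (Fin N) ℝ) (T : Set G) :
    finrank ℝ (fixReal φ T) ≤ finrank ℂ (fixSet (cRep φ) T) := by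
  let b := finBasis ℝ (fixReal φ T)
  let c : Fin (finrank ℝ (fixReal φ T)) → fixSet (cRep φ) T := fun i =>
    ⟨fun j => (((b i : Fin N → ℝ) j : ℝ) : ℂ), fun g hg => (cRep_eq_iff φ g _).2 (by
      refine ⟨by simpa using (b i).2 g hg, ?_⟩
      simp only [Complex.ofReal_im]
      exact mulVec_zero _)⟩
  have hc : LinearIndependent ℂ c := by
    rw [Fintype.linearIndependent_iff]
    intro z hz i
    have hb := Fintype.linearIndependent_iff.1 b.linearIndependent
    have hz' : ∀ j, ∑ i, z i * (((b i : Fin N → ℝ) j : ℝ) : ℂ) = 0 := by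
      intro j
      have := congrFun (congrArg Subtype.val hz) j
      simpa [c, Finset.sum_apply] using this
    apply Complex.ext
    · refine hb (fun i => (z i).re) (Subtype.ext (funext fun j => ?_)) i
      have := congrArg Complex.re (hz' j)
      simpa [Finset.sum_apply] using this
    · refine hb (fun i => (z i).im) (Subtype.ext (funext fun j => ?_)) i
      have := congrArg Complex.im (hz' j)
      simpa [Finset.sum_apply] using this
  simpa using hc.fintype_card_le_finrank

end Complexify

/-! ### Embedding into the orthogonal group of a small subspace -/

section Embedding

/-- An orthonormal basis of a subspace, as the rows of a matrix `C`; then `Cᵀ C` is the orthogonal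
projection onto the subspace. -/
theorem exists_rows {N : ℕ} (F : Submodule ℝ (Fin N → ℝ)) :
    ∃ C : Matrix (Fin (finrank ℝ F)) (Fin N) ℝ, C * Cᵀ = 1 ∧
      (∀ v ∈ F, Cᵀ *ᵥ (C *ᵥ v) = v) ∧ ∀ i, C i ∈ F := by
  let e := WithLp.linearEquiv 2 ℝ (Fin N → ℝ)
  let F' : Submodule ℝ (EuclideanSpace ℝ (Fin N)) := F.comap e.toLinearMap
  have hd : finrank ℝ F' = finrank ℝ F := by
    have : F' = F.map e.symm.toLinearMap := (Submodule.map_equiv_eq_comap_symm e.symm F).symm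
    rw [this]
    exact LinearEquiv.finrank_map_eq e.symm F
  let b := (stdOrthonormalBasis ℝ F').reindex (finCongr hd)
  refine ⟨fun i j => (b i : EuclideanSpace ℝ (Fin N)) j, ?_, ?_, fun i => (b i).2⟩
  · ext i j
    have := orthonormal_iff_ite.1 b.orthonormal j i
    rw [Matrix.one_apply]
    rw [Submodule.coe_inner, PiLp.inner_apply] at this
    simp only [eq_comm (a := j)] at this
    rw [← this]
    rfl
  · intro v hv
    have := b.sum_repr ⟨e.symm v, by simpa [F'] using hv⟩
    ext j
    have h2 := congrArg (fun x : F' => (x : EuclideanSpace ℝ (Fin N)) j) this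
    simp only [b.repr_apply_apply, Submodule.coe_inner, PiLp.inner_apply] at h2
    simp [e] at h2
    simp only [Matrix.mulVec, dotProduct]
    rw [← h2]
    refine Finset.sum_congr rfl fun i _ => ?_
    rw [mul_comm]
    congr 1
    exact Finset.sum_congr rfl fun k _ => by ring

/-- A faithful action of `Q` on an invariant subspace of dimension at most six embeds `Q`
in `O(6)`. -/
theorem exists_embedding {Q : Type} [Group Q] {N : ℕ} (φ : Q →* orthogonalGroup (Fin N) ℝ)
    (F : Submodule ℝ (Fin N → ℝ)) (h6 : finrank ℝ F ≤ 6)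
    (hF : ∀ q, ∀ v ∈ F, (φ q : Matrix (Fin N) (Fin N) ℝ) *ᵥ v ∈ F)
    (hfaith : ∀ q, (∀ v ∈ F, (φ q : Matrix (Fin N) (Fin N) ℝ) *ᵥ v = v) → q = 1) :
    ∃ f : Q →* orthogonalGroup (Fin 6) ℝ, Function.Injective f := by
  obtain ⟨C, hC1, hC2, hC3⟩ := exists_rows F
  have hproj : ∀ q, Cᵀ * (C * ((φ q : Matrix (Fin N) (Fin N) ℝ) * Cᵀ)) =
      (φ q : Matrix (Fin N) (Fin N) ℝ) * Cᵀ := by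
    intro q
    ext i j
    have := congrFun (hC2 _ (hF q _ (hC3 j))) i
    rw [mulVec_mulVec, mulVec_mulVec] at this
    rw [← Matrix.mul_assoc, ← Matrix.mul_assoc]
    rw [Matrix.mul_apply, Matrix.mul_apply]
    exact this
  -- the matrices of the action on `F`, later padded with an identity block to size six
  let A : Q → Matrix (Fin (finrank ℝ F)) (Fin (finrank ℝ F)) ℝ :=
    fun q => C * ((φ q : Matrix (Fin N) (Fin N) ℝ) * Cᵀ)
  have hA1 : A 1 = 1 := by simp [A, hC1]
  have hAmul : ∀ p q, A (p * q) = A p * A q := by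
    intro p q
    simp only [A, map_mul]
    rw [Matrix.mul_assoc C, Matrix.mul_assoc _ Cᵀ, hproj]
    simp [Matrix.mul_assoc]
  have hAT : ∀ q, (A q)ᵀ = A q⁻¹ := by
    intro q
    simp only [A, map_inv, transpose_mul, transpose_transpose, Matrix.mul_assoc]
    rfl
  obtain ⟨m, hm⟩ := Nat.exists_eq_add_of_le h6
  let e : Fin (finrank ℝ F) ⊕ Fin m ≃ Fin 6 := finSumFinEquiv.trans (finCongr hm.symm)
  let B : Q → Matrix (Fin 6) (Fin 6) ℝ := fun q => reindex e e (fromBlocks (A q) 0 0 1)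
  have hB1 : B 1 = 1 := by
    simp only [B, hA1, fromBlocks_one]
    simp
  have hBmul : ∀ p q, B (p * q) = B p * B q := by
    intro p q
    simp only [B, hAmul, reindex_apply, submatrix_mul_equiv, fromBlocks_multiply]
    simp
  have hBT : ∀ q, (B q)ᵀ = B q⁻¹ := by
    intro q
    simp only [B, reindex_apply, transpose_submatrix, fromBlocks_transpose, hAT]
    simp
  refine ⟨⟨⟨fun q => ⟨B q, ?_⟩, Subtype.ext hB1⟩, fun p q => Subtype.ext (hBmul p q)⟩, ?_⟩
  · rw [mem_orthogonalGroup_iff, hBT, ← hBmul, mul_inv_cancel, hB1]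
  · rw [injective_iff_map_eq_one]
    intro q hq
    have hq' : B q = B 1 := by rw [hB1]; exact congrArg Subtype.val hq
    have h1 := (reindex e e).injective hq'
    have h2 : A q = 1 := by rw [← hA1]; exact (fromBlocks_inj.1 h1).1
    refine hfaith q fun v hv => ?_
    have h3 : (φ q : Matrix (Fin N) (Fin N) ℝ) * Cᵀ = Cᵀ := by
      rw [← hproj]; change Cᵀ * A q = _; rw [h2, Matrix.mul_one]
    rw [← hC2 v hv, mulVec_mulVec, h3]

end Embedding

end AltOrth

/-- Let `Q` be a finite group in which every nontrivial normal subgroup meets the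
commutator subgroup nontrivially, and which does not embed into `O(6)`. Then for every
`n ≥ 7` and every `k ≥ 1` the group `Q × (ℤ/kℤ) × A_n` does not embed into `O(n+5)`. -/
theorem prod_with_cyclic_and_alternating_not_subgroup_of_orthogonal
    (Q : Type) [Group Q] [Finite Q]
    (hQnormal : ∀ N : Subgroup Q, N.Normal → N ≠ ⊥ → N ⊓ commutator Q ≠ ⊥)
    (hQO6 : ¬ ∃ φ : Q →* Matrix.orthogonalGroup (Fin 6) ℝ, Function.Injective φ)
    (n : ℕ) (hn : 7 ≤ n) (k : ℕ) (hk : 1 ≤ k) :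
    ¬ ∃ ψ : Q × Multiplicative (ZMod k) × alternatingGroup (Fin n) →*
        Matrix.orthogonalGroup (Fin (n + 5)) ℝ, Function.Injective ψ := by
  rintro ⟨ψ, hψ⟩
  apply hQO6
  let φ : Q →* Matrix.orthogonalGroup (Fin (n + 5)) ℝ := ψ.comp (MonoidHom.inl _ _)
  let σ : alternatingGroup (Fin n) →* Matrix.orthogonalGroup (Fin (n + 5)) ℝ :=
    ψ.comp ((MonoidHom.inr _ _).comp (MonoidHom.inr _ _))
  have hφ : Function.Injective φ := hψ.comp fun x y h => congrArg Prod.fst h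
  have hσ : Function.Injective σ := hψ.comp fun x y h => congrArg (fun z => z.2.2) h
  have hc : ∀ g q, σ g * φ q = φ q * σ g := by
    intro g q
    simp only [σ, φ, MonoidHom.comp_apply, ← map_mul]
    congr 1
    simp
  have hc' : ∀ g q, (σ g : Matrix (Fin (n + 5)) (Fin (n + 5)) ℝ) * φ q = φ q * σ g :=
    fun g q => congrArg Subtype.val (hc g q)
  have hnt : Nontrivial (alternatingGroup (Fin n)) :=
    alternatingGroup.nontrivial_of_three_le_card (by simp; omega)
  obtain ⟨g₀, hg₀⟩ := exists_ne (1 : alternatingGroup (Fin n))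
  obtain ⟨T, hT6, hT⟩ := AltOrth.exists_faithful_fixSet hQnormal hn (by simp)
    (AltOrth.cRep σ) (AltOrth.cRep φ)
    (by
      intro g q v
      change ((AltOrth.cRep σ g) * (AltOrth.cRep φ q)) v = ((AltOrth.cRep φ q) * (AltOrth.cRep σ g)) v
      congr 1
      simp only [AltOrth.cRep, MonoidHom.comp_apply, ← map_mul]
      simp [hc])
    ⟨g₀, fun h => hg₀ (AltOrth.eq_one_of_cRep σ hσ g₀ h)⟩
    (AltOrth.eq_one_of_cRep φ hφ)
  refine AltOrth.exists_embedding φ (AltOrth.fixReal σ T)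
    ((AltOrth.finrank_fixReal_le σ T).trans hT6) (fun q v hv g hg => ?_) (fun q hq => hT q ?_)
  · rw [Matrix.mulVec_mulVec, hc', ← Matrix.mulVec_mulVec, hv g hg]
  · intro v hv
    exact (AltOrth.cRep_eq_iff φ q v).2
      ⟨hq _ (AltOrth.re_mem_fixReal hv), hq _ (AltOrth.im_mem_fixReal hv)⟩
end
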